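/- arXiv:1906.03770 — 3 statements merged into one kernel-verified Lean document; each statement's English description precedes it below -/
import Mathlib

section
/- Let f be an orientation-preserving homeomorphism of the plane with no fixed points. Then every point of the plane is wandering for f, i.e., for every point x there exists an open neighborhood W of x such that f^n(W) ∩ W = ∅ for all n ≥ 1. -/
/-- A homeomorphism of the plane is orientation preserving if it is isotopic
to the identity through homeomorphisms. -/
def OrientationPreserving (f : ℂ ≃ₜ ℂ) : Prop :=
  ∃ H : ℝ × ℂ → ℂ, Continuous H ∧ (∀ t : ℝ, IsHomeomorph fun z => H (t, z)) ∧
    (∀ z, H (0, z) = z) ∧ (∀ z, H (1, z) = f z)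

namespace BrouwerPlane

open Set Filter Topology

/-- Continuous functions with constant exponential are constant. -/
lemma const_of_exp {X : Type*} [TopologicalSpace X] [PreconnectedSpace X] (D : X → ℂ)
    (hD : Continuous D) (h : ∀ x y, Complex.exp (D x) = Complex.exp (D y)) (x y : X) :
    D x = D y := by
  have := Complex.isCoveringMap_exp.eq_of_comp_eq hD (continuous_const (y := D y))
    (by funext z; exact Subtype.ext (h z y)) y rfl
  exact congrFun this x

/-- Continuous logarithms on `ℝ × ℂ`. -/
lemma exists_log (Q : ℝ × ℂ → ℂ) (hQ : Continuous Q) (h0 : ∀ p, Q p ≠ 0) :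
    ∃ Λ : ℝ × ℂ → ℂ, Continuous Λ ∧ ∀ p, Complex.exp (Λ p) = Q p := by
  obtain ⟨F, ⟨-, hF⟩, -⟩ := Complex.isCoveringMapOn_exp.existsUnique_continuousMap_lifts
    (⟨Q, hQ⟩ : C(ℝ × ℂ, ℂ)) (a₀ := (0, 0)) (e₀ := Complex.log (Q (0, 0)))
    (Complex.exp_log (h0 _)) (fun a => h0 a)
  exact ⟨F, F.continuous, fun p => congrFun hF p⟩

/-- No point of period two. -/
lemma no_period_two (f : ℂ ≃ₜ ℂ) (hor : OrientationPreserving f) (hfix : ∀ z : ℂ, f z ≠ z)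
    (a : ℂ) : f (f a) ≠ a := by
  intro ha
  obtain ⟨H, hH, hh, h0, h1⟩ := hor
  obtain ⟨Λ, hΛ, hexp⟩ := exists_log (fun p => H (p.1, f p.2) - H (p.1, p.2)) (by fun_prop)
    (fun p h => hfix p.2 ((hh p.1).injective (sub_eq_zero.mp h)))
  have e1 := const_of_exp (fun z => Λ (1, z) - Λ (0, f z)) (by fun_prop) (by
    intro x y
    simp only [Complex.exp_sub, hexp, h0, h1]
    rw [div_self (sub_ne_zero.mpr (hfix _)), div_self (sub_ne_zero.mpr (hfix _))]) a (f a)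
  have e2 := const_of_exp (fun t : ℝ => Λ (t, f a) - Λ (t, a)) (by fun_prop) (by
    have key : ∀ t, Complex.exp (Λ (t, f a) - Λ (t, a)) = -1 := by
      intro t
      have hne : H (t, f a) - H (t, a) ≠ 0 :=
        fun h => hfix a ((hh t).injective (sub_eq_zero.mp h))
      simp only [Complex.exp_sub, hexp, ha]
      rw [div_eq_iff hne]; ring
    intro x y
    rw [key, key]) 0 1
  simp only [ha] at e1 e2
  have e3 : Λ (1, a) = Λ (1, f a) := by linear_combination (1/2) * (e1 + e2)
  have e4 : Complex.exp (Λ (1, a)) = Complex.exp (Λ (1, f a)) := by rw [e3]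
  simp only [hexp, h1, ha] at e4
  have e5 : f a - a = 0 := by linear_combination (-1/2) * e4
  exact hfix a (sub_eq_zero.mp e5)

lemma OP_trans {f h : ℂ ≃ₜ ℂ} (hf : OrientationPreserving f) (hh : OrientationPreserving h) :
    OrientationPreserving (f.trans h) := by
  obtain ⟨F, cF, hF, F0, F1⟩ := hf
  obtain ⟨G, cG, hG, G0, G1⟩ := hh
  refine ⟨fun p => G (p.1, F p), by fun_prop, fun t => (hG t).comp (hF t), ?_, ?_⟩
  · intro z; simp [F0, G0]
  · intro z; simp [F1, G1]

lemma OP_refl : OrientationPreserving (Homeomorph.refl ℂ) :=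
  ⟨fun p => p.2, by fun_prop, fun _ => IsHomeomorph.id, fun _ => rfl, fun _ => rfl⟩

/-- Identity plus a bump is a homeomorphism. -/
lemma bump_homeo (c v : ℂ) (ρ : ℝ) (hv : ‖v‖ < ρ) :
    IsHomeomorph (fun z : ℂ => z + (max 0 (1 - ‖z - c‖ / ρ) : ℝ) • v) := by
  have hρ : 0 < ρ := (norm_nonneg v).trans_lt hv
  have key : ApproximatesLinearOn (fun z : ℂ => z + (max 0 (1 - ‖z - c‖ / ρ) : ℝ) • v)
      ((ContinuousLinearEquiv.refl ℝ ℂ : ℂ ≃L[ℝ] ℂ) : ℂ →L[ℝ] ℂ) univ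
      (Real.toNNReal (‖v‖ / ρ)) := by
    intro x _ y _
    have e : (x + (max 0 (1 - ‖x - c‖ / ρ) : ℝ) • v) - (y + (max 0 (1 - ‖y - c‖ / ρ) : ℝ) • v)
        - (((ContinuousLinearEquiv.refl ℝ ℂ : ℂ ≃L[ℝ] ℂ) : ℂ →L[ℝ] ℂ) (x - y))
        = (max 0 (1 - ‖x - c‖ / ρ) - max 0 (1 - ‖y - c‖ / ρ) : ℝ) • v := by
      simp [sub_smul]; ring
    rw [e, norm_smul]
    have h1 : ‖(max 0 (1 - ‖x - c‖ / ρ) - max 0 (1 - ‖y - c‖ / ρ) : ℝ)‖ ≤ ‖x - y‖ / ρ := by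
      rw [Real.norm_eq_abs, max_comm, max_comm 0]
      refine (abs_max_sub_max_le_abs _ _ _).trans ?_
      have : 1 - ‖x - c‖ / ρ - (1 - ‖y - c‖ / ρ) = (‖y - c‖ - ‖x - c‖) / ρ := by ring
      rw [this, abs_div, abs_of_pos hρ]
      gcongr
      refine (abs_norm_sub_norm_le _ _).trans ?_
      rw [← norm_neg]; simp
    calc _ ≤ ‖x - y‖ / ρ * ‖v‖ := by gcongr
      _ = ‖v‖ / ρ * ‖x - y‖ := by ring
      _ = _ := by rw [Real.coe_toNNReal _ (by positivity)]
  have hc : (Real.toNNReal (‖v‖ / ρ)) <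
      ‖((ContinuousLinearEquiv.refl ℝ ℂ).symm : ℂ →L[ℝ] ℂ)‖₊⁻¹ := by
    have : ‖((ContinuousLinearEquiv.refl ℝ ℂ).symm : ℂ →L[ℝ] ℂ)‖₊ = 1 := by
      have : ((ContinuousLinearEquiv.refl ℝ ℂ).symm : ℂ →L[ℝ] ℂ) = ContinuousLinearMap.id ℝ ℂ := rfl
      rw [this]; simp
    rw [this, inv_one, Real.toNNReal_lt_one, div_lt_one hρ]
    exact hv
  exact (key.toHomeomorph _ (Or.inr hc)).isHomeomorph

/-- Pushing the centre of a ball to another point of the ball. -/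
lemma ball_push (c p : ℂ) (ρ : ℝ) (hp : dist p c < ρ) :
    ∃ h : ℂ ≃ₜ ℂ, OrientationPreserving h ∧ h c = p ∧
      ∀ z, h z = z ∨ (dist z c < ρ ∧ dist (h z) c < ρ) := by
  rw [dist_eq_norm] at hp
  have hρ : 0 < ρ := (norm_nonneg _).trans_lt hp
  let h : ℂ ≃ₜ ℂ := (bump_homeo c (p - c) ρ hp).homeomorph
  have hz : ∀ z, h z = z + (max 0 (1 - ‖z - c‖ / ρ) : ℝ) • (p - c) := fun z => rfl
  have out : ∀ z, ρ ≤ dist z c → h z = z := by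
    intro z h2
    rw [dist_eq_norm] at h2
    have : 1 - ‖z - c‖ / ρ ≤ 0 := by
      rw [sub_nonpos, one_le_div hρ]; exact h2
    rw [hz, max_eq_left this]; simp
  refine ⟨h, ⟨fun q => q.2 + (max 0 (1 - ‖q.2 - c‖ / ρ) : ℝ) • ((max 0 (min 1 q.1) : ℝ) • (p - c)),
    by fun_prop, ?_, ?_, ?_⟩, ?_, ?_⟩
  · intro t
    refine bump_homeo c ((max 0 (min 1 t) : ℝ) • (p - c)) ρ (lt_of_le_of_lt ?_ hp)
    rw [norm_smul, Real.norm_eq_abs, abs_of_nonneg (le_max_left _ _)]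
    exact mul_le_of_le_one_left (norm_nonneg _) (by simp)
  · intro z; simp
  · intro z; simp [hz]
  · rw [hz]; simp
  · intro z
    by_cases h1 : dist z c < ρ
    · by_cases h2 : dist (h z) c < ρ
      · exact Or.inr ⟨h1, h2⟩
      · left
        exact h.injective (out (h z) (not_lt.mp h2))
    · exact Or.inl (out z (not_lt.mp h1))

/-- Pushing along a discrete chain of points. -/
lemma chain_push (σ : ℝ → ℂ) (ε : ℝ) (N : ℕ) (τ : ℕ → ℝ)
    (hd : ∀ j < N, dist (σ (τ (j + 1))) (σ (τ j)) < ε) :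
    ∃ h : ℂ ≃ₜ ℂ, OrientationPreserving h ∧ h (σ (τ 0)) = σ (τ N) ∧
      ∀ z, h z = z ∨ ∃ i k, i ≤ k ∧ k ≤ N ∧ dist z (σ (τ i)) < ε ∧ dist (h z) (σ (τ k)) < ε := by
  induction N with
  | zero => exact ⟨Homeomorph.refl ℂ, OP_refl, rfl, fun z => Or.inl rfl⟩
  | succ N ih =>
    obtain ⟨h, hop, hN, hz⟩ := ih (fun j hj => hd j (by omega))
    obtain ⟨g, gop, gN, gz⟩ := ball_push (σ (τ N)) (σ (τ (N + 1))) ε (hd N (by omega))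
    refine ⟨h.trans g, OP_trans hop gop, by simp [hN, gN], fun z => ?_⟩
    simp only [Homeomorph.trans_apply]
    rcases gz (h z) with h1 | ⟨h1, h2⟩
    · rw [h1]
      rcases hz z with h3 | ⟨i, k, h3, h4, h5⟩
      · exact Or.inl h3
      · exact Or.inr ⟨i, k, h3, by omega, h5⟩
    · right
      rcases hz z with h3 | ⟨i, k, h3, h4, h5, h6⟩
      · rw [h3] at h1
        exact ⟨N, N, le_rfl, by omega, h1, h2⟩
      · exact ⟨i, N, by omega, by omega, h5, h2⟩

/-- Pushing along a path. -/
lemma path_push (σ : ℝ → ℂ) (hσ : Continuous σ) (ε : ℝ) (hε : 0 < ε) :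
    ∃ h : ℂ ≃ₜ ℂ, OrientationPreserving h ∧ h (σ 0) = σ 1 ∧
      ∀ z, h z = z ∨ ∃ s t, s ∈ Icc (0:ℝ) 1 ∧ t ∈ Icc (0:ℝ) 1 ∧ s ≤ t ∧
        dist z (σ s) < ε ∧ dist (h z) (σ t) < ε := by
  have huc : UniformContinuousOn σ (Icc 0 1) :=
    isCompact_Icc.uniformContinuousOn_of_continuous hσ.continuousOn
  rw [Metric.uniformContinuousOn_iff] at huc
  obtain ⟨δ, hδ, hu⟩ := huc ε hε
  obtain ⟨n, hn⟩ := exists_nat_one_div_lt hδ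
  have hn0 : (0:ℝ) < (n:ℝ) + 1 := by positivity
  have hmem : ∀ j : ℕ, j ≤ n + 1 → (j:ℝ) / (n + 1) ∈ Icc (0:ℝ) 1 := by
    intro j hj
    refine ⟨by positivity, ?_⟩
    rw [div_le_one hn0]; exact_mod_cast hj
  obtain ⟨h, h1, h2, h3⟩ := chain_push σ ε (n + 1) (fun j => (j:ℝ) / (n + 1)) (by
      intro j hj
      refine hu _ (hmem _ (by omega)) _ (hmem _ (by omega)) ?_
      rw [Real.dist_eq]
      push_cast
      rw [← sub_div, add_sub_cancel_left, abs_of_pos (by positivity)]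
      exact hn)
  refine ⟨h, h1, ?_, fun z => ?_⟩
  · simpa [div_self hn0.ne'] using h2
  · rcases h3 z with h4 | ⟨i, k, hik, hk, h5, h6⟩
    · exact Or.inl h4
    · exact Or.inr ⟨_, _, hmem i (by omega), hmem k hk, by gcongr, h5, h6⟩

/-- The modification lemma. -/
lemma modify (f : ℂ ≃ₜ ℂ) (hor : OrientationPreserving f) (hfix : ∀ z : ℂ, f z ≠ z)
    (σ : ℝ → ℂ) (hσ : Continuous σ) (K : Set ℂ) (hK : K.Finite)
    (hKσ : ∀ s ∈ Icc (0:ℝ) 1, σ s ∉ K)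
    (hfw : ∀ s ∈ Icc (0:ℝ) 1, ∀ t ∈ Icc (0:ℝ) 1, s ≤ t → f (σ t) ≠ σ s) :
    ∃ h : ℂ ≃ₜ ℂ, OrientationPreserving (f.trans h) ∧ h (σ 0) = σ 1 ∧ (∀ p ∈ K, h p = p) ∧
      ∀ z, h (f z) ≠ z := by
  -- the compact set of pairs
  have hdist : ∃ ε > 0, ∀ p ∈ K, ∀ s ∈ Icc (0:ℝ) 1, ε ≤ dist p (σ s) := by
    have hc : IsCompact (σ '' Icc (0:ℝ) 1) := isCompact_Icc.image hσ
    have hdj : Disjoint (σ '' Icc (0:ℝ) 1) K := by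
      rw [Set.disjoint_left]
      rintro _ ⟨s, hs, rfl⟩
      exact hKσ s hs
    obtain ⟨r, hr, h⟩ := Metric.exists_pos_forall_lt_edist hc hK.isClosed hdj
    refine ⟨r, by exact_mod_cast hr, fun p hp s hs => ?_⟩
    have := h (σ s) ⟨s, hs, rfl⟩ p hp
    rw [edist_nndist, ENNReal.coe_lt_coe, nndist_comm] at this
    exact_mod_cast this.le
  obtain ⟨ε₀, hε₀, hd⟩ := hdist
  by_contra hcon
  push Not at hcon
  have hseq : ∀ n : ℕ, ∃ q : ℂ × ℝ × ℝ, q.2.1 ∈ Icc (0:ℝ) 1 ∧ q.2.2 ∈ Icc (0:ℝ) 1 ∧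
      q.2.1 ≤ q.2.2 ∧ dist (f q.1) (σ q.2.1) ≤ 1 / ((n:ℝ) + 1) ∧
      dist q.1 (σ q.2.2) ≤ 1 / ((n:ℝ) + 1) := by
    intro n
    obtain ⟨h, h1, h2, h3⟩ := path_push σ hσ (min ε₀ (1 / ((n:ℝ) + 1)))
      (lt_min hε₀ (by positivity))
    obtain ⟨z, hz⟩ := hcon h (OP_trans hor h1) h2 (by
      intro p hp
      rcases h3 p with h4 | ⟨s, t, hs, ht, hst, h5, h6⟩
      · exact h4
      · exact absurd (h5.trans_le (min_le_left _ _)) (not_lt.mpr (hd p hp s hs)))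
    rcases h3 (f z) with h4 | ⟨s, t, hs, ht, hst, h5, h6⟩
    · exact absurd (h4.symm.trans hz) (hfix z)
    · rw [hz] at h6
      exact ⟨(z, s, t), hs, ht, hst, (h5.trans_le (min_le_right _ _)).le,
        (h6.trans_le (min_le_right _ _)).le⟩
  choose q hq1 hq2 hq3 hq4 hq5 using hseq
  obtain ⟨⟨s, t⟩, hst, φ, hφ, hlim⟩ := (isCompact_Icc.prod isCompact_Icc :
    IsCompact (Icc (0:ℝ) 1 ×ˢ Icc (0:ℝ) 1)).tendsto_subseq
    (x := fun n => (q n).2) (fun n => ⟨hq1 n, hq2 n⟩)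
  have hs : Tendsto (fun n => (q (φ n)).2.1) atTop (𝓝 s) := (continuous_fst.tendsto _).comp hlim
  have ht : Tendsto (fun n => (q (φ n)).2.2) atTop (𝓝 t) := (continuous_snd.tendsto _).comp hlim
  have h0 : Tendsto (fun n => 1 / (((φ n : ℕ):ℝ) + 1)) atTop (𝓝 0) :=
    tendsto_one_div_add_atTop_nhds_zero_nat.comp hφ.tendsto_atTop
  have hz : Tendsto (fun n => (q (φ n)).1) atTop (𝓝 (σ t)) := by
    refine ((hσ.tendsto t).comp ht).congr_dist ?_
    refine squeeze_zero (fun _ => dist_nonneg) (fun n => ?_) h0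
    rw [dist_comm]; exact hq5 (φ n)
  have hfz : Tendsto (fun n => f (q (φ n)).1) atTop (𝓝 (σ s)) := by
    refine ((hσ.tendsto s).comp hs).congr_dist ?_
    refine squeeze_zero (fun _ => dist_nonneg) (fun n => ?_) h0
    rw [dist_comm]; exact hq4 (φ n)
  have hfz' := (f.continuous.tendsto _).comp hz
  exact hfw s hst.1 t hst.2 (le_of_tendsto_of_tendsto' hs ht (fun n => hq3 _))
    (tendsto_nhds_unique hfz' hfz)

/-- Extending a translation arc to a half line. -/
lemma exists_line (f : ℂ ≃ₜ ℂ) (γ : ℝ → ℂ) (hγ : Continuous γ) (h1 : γ 1 = f (γ 0)) :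
    ∃ Γ : ℝ → ℂ, Continuous Γ ∧ (∀ s ∈ Icc (0:ℝ) 1, Γ s = γ s) ∧
      ∀ s, 0 ≤ s → Γ (s + 1) = f (Γ s) := by
  let Γ : ℝ → ℂ := fun s => (⇑f)^[⌊s⌋₊] (γ (s - ⌊s⌋₊))
  have hIcc : ∀ n : ℕ, ∀ s ∈ Icc (n:ℝ) (n + 1), Γ s = (⇑f)^[n] (γ (s - n)) := by
    intro n s hs
    rcases eq_or_lt_of_le hs.2 with h | h
    · have hf : ⌊s⌋₊ = n + 1 := by
        rw [h]; exact_mod_cast Nat.floor_natCast (R := ℝ) (n + 1)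
      simp only [Γ, hf]
      rw [h]
      push_cast
      rw [sub_self, Function.iterate_succ_apply, ← h1]
      simp
    · have hf : ⌊s⌋₊ = n := by
        rw [Nat.floor_eq_iff ((Nat.cast_nonneg n).trans hs.1)]
        exact ⟨hs.1, h⟩
      simp only [Γ, hf]
  have hIic : ∀ n : ℕ, ContinuousOn Γ (Iic (n:ℝ)) := by
    intro n
    induction n with
    | zero =>
      refine hγ.continuousOn.congr fun s hs => ?_
      have : ⌊s⌋₊ = 0 := Nat.floor_of_nonpos (by simpa using hs)
      simp [Γ, this]
    | succ n ih =>
      have e : Iic (((n + 1 : ℕ)) : ℝ) = Iic (n:ℝ) ∪ Icc (n:ℝ) (n + 1) := by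
        push_cast
        exact (Iic_union_Icc_eq_Iic (by linarith)).symm
      rw [e]
      refine ih.union_of_isClosed ?_ isClosed_Iic isClosed_Icc
      refine ContinuousOn.congr (Continuous.continuousOn ?_) (hIcc n)
      exact (f.continuous.iterate n).comp (hγ.comp (by fun_prop))
  refine ⟨Γ, ?_, ?_, ?_⟩
  · rw [continuous_iff_continuousAt]
    intro s
    obtain ⟨n, hn⟩ := exists_nat_gt s
    exact (hIic n).continuousAt (Iic_mem_nhds hn)
  · intro s hs
    have := hIcc 0 s (by simpa using hs)
    simpa using this
  · intro s hs
    have hf : ⌊s + 1⌋₊ = ⌊s⌋₊ + 1 := Nat.floor_add_one hs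
    simp only [Γ, hf]
    rw [Function.iterate_succ_apply']
    push_cast
    congr 3
    ring

/-- A translation arc through a periodic point gives a contradiction. -/
lemma no_translation_arc (f : ℂ ≃ₜ ℂ) (hor : OrientationPreserving f) (hfix : ∀ z : ℂ, f z ≠ z)
    (γ : ℝ → ℂ) (hγ : Continuous γ) (hinj : InjOn γ (Icc 0 1)) (h1 : γ 1 = f (γ 0))
    (hmeet : ∀ u ∈ Icc (0:ℝ) 1, ∀ v ∈ Icc (0:ℝ) 1, f (γ u) = γ v → u = 0)
    (n : ℕ) (hn : 1 ≤ n) (u : ℝ) (hu : u ∈ Icc (0:ℝ) 1) (hper : (⇑f)^[n] (γ u) = γ u) :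
    False := by
  obtain ⟨Γ, hΓ, hΓγ, hΓ1⟩ := exists_line f γ hγ h1
  have hΓk : ∀ (k : ℕ) (s : ℝ), 0 ≤ s → Γ (s + k) = (⇑f)^[k] (Γ s) := by
    intro k s hs
    induction k with
    | zero => simp
    | succ k ih =>
      rw [Function.iterate_succ_apply', ← ih, ← hΓ1 _ (by positivity)]
      push_cast
      rw [add_assoc]
  have red : ∀ s d : ℝ, 0 ≤ s → 0 < d → Γ (s + d) = Γ s →
      ∃ s' : ℝ, 0 ≤ s' ∧ s' < 1 ∧ Γ (s' + d) = Γ s' := by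
    intro s d hs hd h
    have h2 := Nat.floor_le hs
    have h3 := Nat.lt_floor_add_one s
    refine ⟨s - ⌊s⌋₊, by linarith, by linarith, ?_⟩
    apply f.injective.iterate ⌊s⌋₊
    rw [← hΓk _ _ (by linarith), ← hΓk _ _ (by linarith)]
    convert h using 2 <;> ring
  have hmin : ∀ s d : ℝ, 0 ≤ s → 0 < d → Γ (s + d) = Γ s → 1 < d := by
    intro s d hs hd h
    obtain ⟨s', h2, h3, h4⟩ := red s d hs hd h
    by_contra! hd1
    rw [hΓγ s' ⟨h2, h3.le⟩] at h4
    by_cases h5 : s' + d ≤ 1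
    · rw [hΓγ _ ⟨by linarith, h5⟩] at h4
      have := hinj ⟨by linarith, h5⟩ ⟨h2, h3.le⟩ h4
      linarith
    · have h6 : Γ (s' + d) = f (γ (s' + d - 1)) := by
        rw [← hΓγ _ ⟨by linarith, by linarith⟩, ← hΓ1 _ (by linarith)]
        congr 1; ring
      rw [h6] at h4
      have := hmeet _ ⟨by linarith, by linarith⟩ _ ⟨h2, h3.le⟩ h4
      linarith
  have hn1 : (1:ℝ) ≤ n := by exact_mod_cast hn
  -- minimal loop
  let K : Set (ℝ × ℝ) := (Icc 0 1 ×ˢ Icc 1 (n:ℝ)) ∩ {p | Γ (p.1 + p.2) = Γ p.1}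
  have hKc : IsCompact K := (isCompact_Icc.prod isCompact_Icc).inter_right
    (isClosed_eq (by fun_prop) (by fun_prop))
  have hKn : K.Nonempty := by
    refine ⟨(u, n), ⟨hu, hn1, le_rfl⟩, ?_⟩
    change Γ (u + n) = Γ u
    rw [hΓk _ _ hu.1, hΓγ u hu, hper]
  obtain ⟨⟨a₀, c⟩, ⟨⟨ha₀, hc⟩, hac₀⟩, hcmin⟩ := hKc.exists_isMinOn hKn
    (f := fun p => p.2) continuous_snd.continuousOn
  have hac₀' : Γ (a₀ + c) = Γ a₀ := hac₀
  have hc1 : 1 < c := hmin a₀ c ha₀.1 (by linarith [hc.1]) hac₀'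
  obtain ⟨a, ha0, ha1, hac⟩ := red a₀ c ha₀.1 (by linarith) hac₀'
  have hmin' : ∀ s d : ℝ, 0 ≤ s → 0 < d → Γ (s + d) = Γ s → c ≤ d := by
    intro s d hs hd h
    by_cases hdn : d ≤ n
    · obtain ⟨s', h2, h3, h4⟩ := red s d hs hd h
      exact isMinOn_iff.mp hcmin (s', d) ⟨⟨⟨h2, h3.le⟩, (hmin s d hs hd h).le, hdn⟩, h4⟩
    · have : c ≤ n := hc.2
      linarith
  have hmin2 : ∀ s t : ℝ, 0 ≤ s → s < t → t < s + c → Γ t ≠ Γ s := by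
    intro s t hs hst ht h
    have := hmin' s (t - s) hs (by linarith) (by rw [← h]; congr 1; ring)
    linarith
  rcases le_or_gt 2 c with hc2 | hc2
  · -- long loop: push forward
    obtain ⟨h, hop, h01, hK, hfx⟩ := modify f hor hfix (fun v => Γ (a + 1 + v * (c - 2)))
      (by fun_prop) {Γ a} (finite_singleton _) (by
        intro s hs h
        have : 0 ≤ s * (c - 2) := mul_nonneg hs.1 (by linarith)
        have : s * (c - 2) ≤ 1 * (c - 2) := mul_le_mul_of_nonneg_right hs.2 (by linarith)
        exact hmin2 a _ ha0 (by linarith) (by linarith) h) (by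
        intro s hs t ht hst h
        have h2 : 0 ≤ s * (c - 2) := mul_nonneg hs.1 (by linarith)
        have h3 : t * (c - 2) ≤ 1 * (c - 2) := mul_le_mul_of_nonneg_right ht.2 (by linarith)
        have h4 : s * (c - 2) ≤ t * (c - 2) := mul_le_mul_of_nonneg_right hst (by linarith)
        rw [← hΓ1 _ (by linarith)] at h
        exact hmin2 _ _ (by linarith) (by linarith) (by linarith) h)
    refine no_period_two (f.trans h) hop hfx (Γ a) ?_
    simp only [Homeomorph.trans_apply]
    have e1 : h (f (Γ a)) = Γ (a + c - 1) := by
      rw [← hΓ1 a ha0]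
      simp only [zero_mul, one_mul, add_zero] at h01
      rw [h01]; congr 1; ring
    rw [e1, ← hΓ1 _ (by linarith), sub_add_cancel, hac]
    exact hK _ rfl
  · -- short loop: push backward
    have hb : 2 < a + c := by
      by_contra! hb
      have h6 : Γ (a + c) = f (γ (a + c - 1)) := by
        rw [← hΓγ _ ⟨by linarith, by linarith⟩, ← hΓ1 _ (by linarith)]
        congr 1; ring
      rw [h6, hΓγ a ⟨ha0, ha1.le⟩] at hac
      have := hmeet _ ⟨by linarith, by linarith⟩ _ ⟨ha0, ha1.le⟩ hac
      linarith
    have hfree : ∀ v w : ℝ, 0 < v → v ≤ 1 → 0 ≤ w → w ≤ 1 → Γ (v + 1) ≠ Γ w := by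
      intro v w h2 h3 h4 h5 h
      rw [hΓ1 v h2.le, hΓγ v ⟨h2.le, h3⟩, hΓγ w ⟨h4, h5⟩] at h
      have := hmeet v ⟨h2.le, h3⟩ w ⟨h4, h5⟩ h
      linarith
    have hpos : ∀ v ∈ Icc (0:ℝ) 1, a + c - 2 ≤ a + v * (c - 2) ∧ a + v * (c - 2) ≤ a := by
      intro v hv
      constructor <;> nlinarith [hv.1, hv.2]
    obtain ⟨h, hop, h01, hK, hfx⟩ := modify f hor hfix (fun v => Γ (a + v * (c - 2)))
      (by fun_prop) {Γ (a + c - 1)} (finite_singleton _) (by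
        intro s hs h
        obtain ⟨h2, h3⟩ := hpos s hs
        refine hfree (a + c - 2) (a + s * (c - 2)) (by linarith) (by linarith) (by linarith)
          (by linarith) ?_
        rw [show a + c - 2 + 1 = a + c - 1 by ring]
        exact h.symm) (by
        intro s hs t ht hst h
        obtain ⟨h2, h3⟩ := hpos s hs
        obtain ⟨h4, h5⟩ := hpos t ht
        rw [← hΓ1 _ (by linarith)] at h
        exact hfree _ _ (by linarith) (by linarith) (by linarith) (by linarith) h)
    refine no_period_two (f.trans h) hop hfx (Γ (a + c - 2)) ?_
    simp only [Homeomorph.trans_apply]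
    have e1 : h (f (Γ (a + c - 2))) = Γ (a + c - 1) := by
      rw [← hΓ1 _ (by linarith), show a + c - 2 + 1 = a + c - 1 by ring]
      exact hK _ rfl
    rw [e1, ← hΓ1 _ (by linarith), sub_add_cancel, hac]
    simp only [zero_mul, one_mul, add_zero] at h01
    rw [h01]; congr 1; ring

/-- The largest free ball around a point. -/
lemma exists_touch (f : ℂ ≃ₜ ℂ) (hfix : ∀ z : ℂ, f z ≠ z) (x : ℂ) :
    ∃ (r : ℝ) (y : ℂ), 0 < r ∧ dist y x = r ∧ dist (f y) x = r ∧
      ∀ z, dist z x < r → r ≤ dist (f z) x := by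
  let φ : ℂ → ℝ := fun z => max (dist z x) (dist (f z) x)
  have hφ : Continuous φ := by fun_prop
  obtain ⟨y, hy⟩ := hφ.exists_forall_le (by
    refine tendsto_atTop_mono (fun z => le_max_left _ _) ?_
    simpa only [dist_comm] using tendsto_dist_left_cocompact_atTop x)
  have hfree : ∀ z, dist z x < φ y → φ y ≤ dist (f z) x := by
    intro z hz
    by_contra! h
    exact absurd (hy z) (not_le.mpr (max_lt hz h))
  have hr : 0 < φ y := by
    by_contra! h
    have h2 : dist y x ≤ 0 := (le_max_left _ _).trans h
    have h3 : dist (f y) x ≤ 0 := (le_max_right _ _).trans h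
    rw [dist_le_zero] at h2 h3
    exact hfix y (h3.trans h2.symm)
  have hcl : ∀ w : ℂ, dist w x ≤ φ y → w ∈ closure (Metric.ball x (φ y)) := by
    intro w hw
    rw [closure_ball x hr.ne']; exact hw
  refine ⟨φ y, y, hr, ?_, ?_, hfree⟩
  · refine le_antisymm (le_max_left _ _) ?_
    by_contra! h
    have h2 : f y ∈ closure (Metric.ball x (φ y)) := hcl _ (le_max_right _ _)
    have hop : IsOpen (f '' Metric.ball x (φ y)) := f.isOpenMap _ Metric.isOpen_ball
    obtain ⟨_, ⟨z, hz, rfl⟩, hw⟩ := mem_closure_iff.mp h2 _ hop ⟨y, h, rfl⟩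
    exact absurd (hfree z hz) (not_le.mpr hw)
  · refine le_antisymm (le_max_right _ _) ?_
    by_contra! h
    have h2 : y ∈ closure (Metric.ball x (φ y)) := hcl _ (le_max_left _ _)
    have hop : IsOpen (f ⁻¹' Metric.ball x (φ y)) := Metric.isOpen_ball.preimage f.continuous
    obtain ⟨z, hz, hw⟩ := mem_closure_iff.mp h2 _ hop h
    exact absurd (hfree z hw) (not_le.mpr hz)

/-- No periodic points. -/
lemma no_periodic (f : ℂ ≃ₜ ℂ) (hor : OrientationPreserving f) (hfix : ∀ z : ℂ, f z ≠ z)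
    (x : ℂ) (n : ℕ) (hn : 1 ≤ n) : (⇑f)^[n] x ≠ x := by
  intro hx
  obtain ⟨r, y, hr, hy, hfy, hfree⟩ := exists_touch f hfix x
  let γ : ℝ → ℂ := fun u => x + (max 0 (1 - 2 * u) : ℝ) • (y - x) + (max 0 (2 * u - 1) : ℝ) • (f y - x)
  have hγ : Continuous γ := by fun_prop
  have hγ1 : ∀ u, u ≤ 1 / 2 → γ u = x + (1 - 2 * u : ℝ) • (y - x) := by
    intro u hu
    simp only [γ]
    rw [max_eq_right (by linarith), max_eq_left (by linarith)]; simp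
  have hγ2 : ∀ u, 1 / 2 ≤ u → γ u = x + (2 * u - 1 : ℝ) • (f y - x) := by
    intro u hu
    simp only [γ]
    rw [max_eq_left (by linarith), max_eq_right (by linarith)]; simp
  have hd : ∀ u, dist (γ u) x = |1 - 2 * u| * r := by
    intro u
    rcases le_total u (1 / 2) with h | h
    · rw [hγ1 u h, dist_eq_norm, add_sub_cancel_left, norm_smul, ← dist_eq_norm y, hy,
        Real.norm_eq_abs]
    · rw [hγ2 u h, dist_eq_norm, add_sub_cancel_left, norm_smul, ← dist_eq_norm (f y), hfy,
        Real.norm_eq_abs, abs_sub_comm]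
  have hγ0 : γ 0 = y := by rw [hγ1 0 (by norm_num)]; simp
  have hγ1' : γ 1 = f y := by rw [hγ2 1 (by norm_num)]; norm_num
  have hcross : ∀ u v : ℝ, u < 1 / 2 → 1 / 2 ≤ v → γ u ≠ γ v := by
    intro u v hu hv h
    have h2 : |1 - 2 * u| * r = |1 - 2 * v| * r := by rw [← hd, ← hd, h]
    have h3 := mul_right_cancel₀ hr.ne' h2
    rw [abs_of_pos (by linarith), abs_of_nonpos (by linarith)] at h3
    rw [hγ1 u hu.le, hγ2 v hv, show 2 * v - 1 = 1 - 2 * u by linarith] at h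
    have h4 := smul_right_injective ℂ (show (1 - 2 * u : ℝ) ≠ 0 by linarith) (add_left_cancel h)
    exact hfix y (sub_left_injective h4).symm
  have hinj : InjOn γ (Icc 0 1) := by
    intro u hu v hv h
    have h2 : |1 - 2 * u| * r = |1 - 2 * v| * r := by rw [← hd, ← hd, h]
    have h3 := mul_right_cancel₀ hr.ne' h2
    rcases lt_or_ge u (1 / 2) with h4 | h4 <;> rcases lt_or_ge v (1 / 2) with h5 | h5
    · rw [abs_of_pos (by linarith), abs_of_pos (by linarith)] at h3; linarith
    · exact absurd h (hcross u v h4 h5)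
    · exact absurd h.symm (hcross v u h5 h4)
    · rw [abs_of_nonpos (by linarith), abs_of_nonpos (by linarith)] at h3; linarith
  have hin : ∀ u, 0 < u → u < 1 → dist (γ u) x < r := by
    intro u h0 h1
    rw [hd]
    have : |1 - 2 * u| < 1 := by rw [abs_lt]; constructor <;> linarith
    nlinarith
  have hcl : ∀ w : ℂ, dist w x ≤ r → w ∈ closure (Metric.ball x r) := by
    intro w hw
    rw [closure_ball x hr.ne']; exact hw
  -- stronger freeness
  have hfr1 : ∀ z, dist z x < r → r < dist (f z) x := by
    intro z hz
    by_contra! h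
    have hop : IsOpen (f '' Metric.ball x r) := f.isOpenMap _ Metric.isOpen_ball
    obtain ⟨_, ⟨z, hz, rfl⟩, hw⟩ := mem_closure_iff.mp (hcl _ h) _ hop ⟨z, hz, rfl⟩
    exact absurd (hfree z hz) (not_le.mpr hw)
  have hfr2 : ∀ z, dist (f z) x < r → r < dist z x := by
    intro z hz
    by_contra! h
    have hop : IsOpen (f ⁻¹' Metric.ball x r) := Metric.isOpen_ball.preimage f.continuous
    obtain ⟨z, hz, hw⟩ := mem_closure_iff.mp (hcl _ h) _ hop hz
    exact absurd (hfree z hw) (not_le.mpr hz)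
  have hle : ∀ u ∈ Icc (0:ℝ) 1, dist (γ u) x ≤ r := by
    intro u hu
    rw [hd]
    have : |1 - 2 * u| ≤ 1 := by rw [abs_le]; constructor <;> linarith [hu.1, hu.2]
    nlinarith
  refine no_translation_arc f hor hfix γ hγ hinj (by rw [hγ0, hγ1']) ?_ n hn (1 / 2)
    ⟨by norm_num, by norm_num⟩ (by rw [hγ1 _ le_rfl]; simpa using hx)
  intro u hu v hv h
  by_contra hu0
  have hu0' : 0 < u := lt_of_le_of_ne hu.1 (Ne.symm hu0)
  rcases lt_or_eq_of_le hu.2 with hu1 | rfl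
  · have := hfr1 _ (hin u hu0' hu1)
    rw [h] at this
    exact absurd (hle v hv) (not_le.mpr this)
  · rcases eq_or_lt_of_le hv.1 with rfl | hv0
    · rw [hγ0, hγ1'] at h
      exact no_period_two f hor hfix y h
    · rcases lt_or_eq_of_le hv.2 with hv1 | rfl
      · have h2 := hin v hv0 hv1
        rw [← h] at h2
        exact absurd (hle 1 hu) (not_le.mpr (hfr2 _ h2))
      · exact hfix _ h

end BrouwerPlane

/-- Brouwer: an orientation-preserving, fixed-point-free homeomorphism of the
plane has only wandering points. -/
theorem brouwer_all_points_wandering (f : ℂ ≃ₜ ℂ)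
    (hor : OrientationPreserving f) (hfix : ∀ z : ℂ, f z ≠ z) :
    ∀ x : ℂ, ∃ W : Set ℂ, IsOpen W ∧ x ∈ W ∧
      ∀ n : ℕ, 1 ≤ n → (⇑f)^[n] '' W ∩ W = ∅ := by
  classical
  intro x
  -- a free ball around `x`
  obtain ⟨r, y₀, hr, -, -, hfree⟩ := BrouwerPlane.exists_touch f hfix x
  by_contra hcon
  push Not at hcon
  have hex : ∃ n : ℕ, 1 ≤ n ∧ ((⇑f)^[n] '' Metric.ball x r ∩ Metric.ball x r).Nonempty := by
    simpa only [Set.nonempty_iff_ne_empty] using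
      hcon (Metric.ball x r) Metric.isOpen_ball (Metric.mem_ball_self hr)
  obtain ⟨hn1, _, ⟨y, hy, rfl⟩, hny⟩ := Nat.find_spec hex
  set n := Nat.find hex with hn
  have hmin : ∀ k, 1 ≤ k → k < n → (⇑f)^[k] y ∉ Metric.ball x r := by
    intro k hk1 hk hmem
    exact Nat.find_min hex hk ⟨hk1, _, ⟨y, hy, rfl⟩, hmem⟩
  let σ : ℝ → ℂ := fun t => AffineMap.lineMap ((⇑f)^[n] y) y t
  have hσ : Continuous σ := AffineMap.lineMap_continuous
  have hσb : ∀ t ∈ Set.Icc (0:ℝ) 1, σ t ∈ Metric.ball x r := by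
    intro t ht
    exact (convex_ball x r).lineMap_mem hny hy ht
  obtain ⟨h, hop, h01, hK, hfx⟩ := BrouwerPlane.modify f hor hfix σ hσ
    ((fun k => (⇑f)^[k] y) '' Set.Ico 1 n) ((Set.finite_Ico 1 n).image _) (by
      rintro s hs ⟨k, hk, hk2⟩
      refine hmin k hk.1 hk.2 ?_
      simp only at hk2
      rw [hk2]
      exact hσb s hs) (by
      intro s hs t ht _ h
      have h1 := hfree (σ t) (hσb t ht)
      rw [h] at h1
      exact absurd (hσb s hs) (not_lt.mpr h1))
  have hit : ∀ k, k < n → (⇑(f.trans h))^[k] y = (⇑f)^[k] y := by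
    intro k
    induction k with
    | zero => intro _; rfl
    | succ k ih =>
      intro hk
      rw [Function.iterate_succ_apply', ih (by omega), Homeomorph.trans_apply,
        ← Function.iterate_succ_apply' (⇑f)]
      exact hK _ ⟨k + 1, ⟨by omega, hk⟩, rfl⟩
  refine BrouwerPlane.no_periodic (f.trans h) hop hfx y n hn1 ?_
  obtain ⟨m, hm⟩ : ∃ m, n = m + 1 := ⟨n - 1, by omega⟩
  have h3 := hit m (by omega)
  have h4 : h ((⇑f)^[n] y) = y := by simpa [σ] using h01
  rw [hm] at h4 ⊢
  rw [Function.iterate_succ_apply', h3, Homeomorph.trans_apply,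
    ← Function.iterate_succ_apply' (⇑f), h4]
end

section
/- Let f be an orientation-preserving homeomorphism of the plane and K a nonempty compact set with f(K) = K. Then f has a fixed point. -/
theorem exists_log_on {E : Type*} [NormedAddCommGroup E] [NormedSpace ℝ E] {U : Set E}
    (hU : IsOpen U) (hc : Convex ℝ U) (hne : U.Nonempty) {φ : E → ℂ}
    (hφ : ContinuousOn φ U) (h0 : ∀ x ∈ U, φ x ≠ 0) :
    ∃ ψ : E → ℂ, ContinuousOn ψ U ∧ ∀ x ∈ U, Complex.exp (ψ x) = φ x := by
  classical
  have := hc.contractibleSpace hne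
  have : SimplyConnectedSpace U := SimplyConnectedSpace.ofContractible U
  have := hU.locallyPathConnectedSpace
  obtain ⟨x₀, hx₀⟩ := hne
  let g : C(U, {z : ℂ // z ≠ 0}) :=
    ⟨fun x => ⟨φ x, h0 x x.2⟩, (continuousOn_iff_continuous_domRestrict.1 hφ).subtype_mk _⟩
  obtain ⟨F, ⟨-, hF⟩, -⟩ := Complex.isCoveringMap_exp.existsUnique_continuousMap_lifts g
    ⟨x₀, hx₀⟩ (Complex.log (φ x₀)) (Subtype.ext (Complex.exp_log (h0 x₀ hx₀)))
  refine ⟨fun x => if h : x ∈ U then F ⟨x, h⟩ else 0, ?_, ?_⟩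
  · rw [continuousOn_iff_continuous_domRestrict]
    convert F.continuous using 1
    ext x
    simp
  · intro x hx
    have := congrArg Subtype.val (congrFun hF ⟨x, hx⟩)
    have h2 : Complex.exp (F ⟨x, hx⟩) = φ x := this
    simpa [hx] using h2

theorem const_of_exp_const {E : Type*} [TopologicalSpace E] {s : Set E} (hs : IsPreconnected s)
    {F : E → ℂ} (hF : ContinuousOn F s) {c : ℂ} (h : ∀ x ∈ s, Complex.exp (F x) = c)
    {x y : E} (hx : x ∈ s) (hy : y ∈ s) : F x = F y := by
  have hcount : (F '' s).Countable := by
    have : F '' s ⊆ Set.range (fun n : ℤ => F x + n * (2 * Real.pi * Complex.I)) := by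
      rintro _ ⟨z, hz, rfl⟩
      obtain ⟨n, hn⟩ := Complex.exp_eq_exp_iff_exists_int.1 ((h z hz).trans (h x hx).symm)
      exact ⟨n, hn.symm⟩
    exact (Set.countable_range _).mono this
  exact hcount.isTotallyDisconnected _ subset_rfl (hs.image F hF)
    (Set.mem_image_of_mem F hx) (Set.mem_image_of_mem F hy)

theorem core_contradiction (f : ℂ → ℂ) (hf : Continuous f) (hfix : ∀ z, f z ≠ z)
    (H : ℝ × ℂ → ℂ) (hH : Continuous H)
    (hHinj : ∀ t z w, H (t, z) = H (t, w) → z = w) (H0 : ∀ z, H (0, z) = z)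
    (H1 : ∀ z, H (1, z) = f z)
    (Γ : ℝ → ℂ) (hΓ : Continuous Γ) (hΓf : ∀ u, Γ (u + 1) = f (Γ u))
    (T s : ℝ) (hT : 1 < T) (hret : Γ (s + T) = Γ s)
    (hinj : ∀ u w, u < w → w < u + T → Γ u ≠ Γ w) : False := by
  obtain ⟨V, hV, hVe⟩ := exists_log_on (E := ℂ) isOpen_univ convex_univ Set.univ_nonempty
    (φ := fun z => f z - z) (by fun_prop) (fun z _ => sub_ne_zero.2 (hfix z))
  have hV : Continuous V := by simpa [continuousOn_univ] using hV
  let U : Set (ℝ × ℝ × ℝ) := {p | p.2.1 < p.2.2 ∧ p.2.2 < p.2.1 + T}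
  have hUo : IsOpen U := by
    have h1 : IsOpen {p : ℝ × ℝ × ℝ | p.2.1 < p.2.2} := isOpen_lt (by fun_prop) (by fun_prop)
    have h2 : IsOpen {p : ℝ × ℝ × ℝ | p.2.2 < p.2.1 + T} :=
      isOpen_lt (by fun_prop) (by fun_prop)
    exact h1.inter h2
  have hUc : Convex ℝ U := by
    rintro ⟨t, u, w⟩ ⟨h1, h2⟩ ⟨t', u', w'⟩ ⟨h1', h2'⟩ a b ha hb hab
    obtain rfl : b = 1 - a := by linarith
    simp only [U, Set.mem_ofPred_eq, Prod.smul_mk, Prod.mk_add_mk, smul_eq_mul] at *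
    constructor <;>
    · rcases ha.eq_or_lt with rfl | ha
      · linarith
      · nlinarith
  obtain ⟨Θ, hΘ, hΘe⟩ := exists_log_on hUo hUc ⟨(0, 0, 1), by simp [U, hT]⟩
    (φ := fun p : ℝ × ℝ × ℝ => H (p.1, Γ p.2.2) - H (p.1, Γ p.2.1)) (by fun_prop)
    (fun p hp h => hinj _ _ hp.1 hp.2 (hHinj _ _ _ (sub_eq_zero.1 h)).symm)
  -- first relation
  have A : V (Γ s) - Θ (0, s, s + 1) = V (Γ (s + T)) - Θ (0, s + T, s + T + 1) := by
    have hmem : ∀ u : ℝ, ((0, u, u + 1) : ℝ × ℝ × ℝ) ∈ U := fun u => by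
      simp [U, hT]
    refine const_of_exp_const (F := fun u => V (Γ u) - Θ (0, u, u + 1)) (c := 1)
      isPreconnected_univ ?_ ?_ (Set.mem_univ s) (Set.mem_univ (s + T))
    · refine (by fun_prop : Continuous fun u => V (Γ u)).continuousOn.sub ?_
      exact hΘ.comp (by fun_prop) (fun u _ => hmem u)
    · intro u _
      rw [Complex.exp_sub, hVe _ (Set.mem_univ _), hΘe _ (hmem u)]
      simp only [H0, hΓf]
      exact div_self (sub_ne_zero.2 (hfix _))
  rw [hret] at A
  -- second relation
  let W : Set (ℝ × ℝ) := Set.univ ×ˢ Set.Ioo s (s + T)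
  have hW : IsPreconnected W := (isPreconnected_univ).prod isPreconnected_Ioo
  have hW1 : ∀ p ∈ W, ((p.1, p.2, s + T) : ℝ × ℝ × ℝ) ∈ U := fun p hp => by
    have := hp.2.1; have := hp.2.2
    exact ⟨by simpa using this, by simp only; linarith⟩
  have hW2 : ∀ p ∈ W, ((p.1, s, p.2) : ℝ × ℝ × ℝ) ∈ U := fun p hp => ⟨hp.2.1, hp.2.2⟩
  let D : ℝ × ℝ → ℂ := fun p => Θ (p.1, p.2, s + T) - Θ (p.1, s, p.2)
  have hDc : ContinuousOn D W :=
    (hΘ.comp (by fun_prop) hW1).sub (hΘ.comp (by fun_prop) hW2)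
  have hDe : ∀ p ∈ W, Complex.exp (D p) = -1 := by
    intro p hp
    have hne := Complex.exp_ne_zero (Θ (p.1, s, p.2))
    rw [hΘe _ (hW2 p hp)] at hne
    simp only [D]
    rw [Complex.exp_sub, hΘe _ (hW1 p hp), hΘe _ (hW2 p hp), div_eq_iff hne]
    simp only [hret]
    ring
  have m1 : ((0, s + 1) : ℝ × ℝ) ∈ W := ⟨trivial, by simp, by simpa using hT⟩
  have m2 : ((1, s + T - 1) : ℝ × ℝ) ∈ W := ⟨trivial, by simp only; linarith, by simp⟩
  have B := const_of_exp_const hW hDc hDe m1 m2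
  have B1 := hDe _ m1
  -- third relation
  let X : Set (ℝ × ℝ) := {p | ((1 : ℝ), p.1, p.2) ∈ U}
  have hX : IsPreconnected X := by
    suffices hXc : Convex ℝ X from hXc.isPreconnected
    intro p hp q hq a b ha hb hab
    have := hUc hp hq ha hb hab
    simpa [X, hab] using this
  have hX2 : ∀ p ∈ X, ((0, p.1 + 1, p.2 + 1) : ℝ × ℝ × ℝ) ∈ U := fun p hp => by
    obtain ⟨h1, h2⟩ := hp
    simp only [U, Set.mem_ofPred_eq] at *
    constructor <;> linarith
  let G : ℝ × ℝ → ℂ := fun p => Θ (1, p.1, p.2) - Θ (0, p.1 + 1, p.2 + 1)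
  have hGc : ContinuousOn G X :=
    (hΘ.comp (f := fun p : ℝ × ℝ => ((1 : ℝ), p.1, p.2)) (by fun_prop) (fun p hp => hp)).sub
      (hΘ.comp (by fun_prop) hX2)
  have hGe : ∀ p ∈ X, Complex.exp (G p) = 1 := by
    intro p hp
    have hne := Complex.exp_ne_zero (Θ (0, p.1 + 1, p.2 + 1))
    rw [hΘe _ (hX2 p hp)] at hne
    simp only [G]
    rw [Complex.exp_sub, hΘe _ (hX2 p hp), hΘe _ hp, div_eq_iff hne]
    simp only [H0, H1, hΓf]
    ring
  have m3 : ((s + T - 1, s + T) : ℝ × ℝ) ∈ X := ⟨by simp, by simp only; linarith⟩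
  have m4 : ((s, s + T - 1) : ℝ × ℝ) ∈ X := ⟨by simp only; linarith, by simp⟩
  have C := const_of_exp_const hX hGc hGe m3 m4
  simp only [D, G, sub_add_cancel] at A B B1 C
  have hd : Θ (0, s + 1, s + T) - Θ (0, s, s + 1) = 0 := by
    linear_combination (1/2 : ℂ) * B + (1/2 : ℂ) * C + (1/2 : ℂ) * A
  rw [hd, Complex.exp_zero] at B1
  norm_num at B1

/-- Extension of an arc to an equivariant curve. -/
theorem exists_curve (g : ℂ ≃ₜ ℂ) (α : ℝ → ℂ) (hα : Continuous α) (h01 : α 1 = g (α 0)) :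
    ∃ Γ : ℝ → ℂ, Continuous Γ ∧ (∀ u, Γ (u + 1) = g (Γ u)) ∧
      ∀ u ∈ Set.Icc (0 : ℝ) 1, Γ u = α u := by
  let Γ : ℝ → ℂ := fun u => (g ^ ⌊u⌋ : ℂ ≃ₜ ℂ) (α (Int.fract u))
  have key : ∀ (k : ℤ), ∀ u ∈ Set.Icc (k : ℝ) (k + 1), Γ u = (g ^ k : ℂ ≃ₜ ℂ) (α (u - k)) := by
    intro k u hu
    rcases hu.2.eq_or_lt with h | h
    · subst h
      simp only [Γ, Int.floor_add_one, Int.floor_intCast, add_sub_cancel_left, h01]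
      rw [zpow_add_one]
      simp [Int.fract_add_one]
    · have : ⌊u⌋ = k := Int.floor_eq_iff.2 ⟨hu.1, h⟩
      simp only [Γ, this]
      rw [← Int.self_sub_floor, this]
  have hon : ∀ k : ℤ, ContinuousOn Γ (Set.Icc (k : ℝ) (k + 1)) := fun k =>
    ContinuousOn.congr ((g ^ k : ℂ ≃ₜ ℂ).continuous.comp (by fun_prop :
      Continuous fun u : ℝ => α (u - k))).continuousOn (key k)
  refine ⟨Γ, ?_, ?_, ?_⟩
  · rw [continuous_iff_continuousAt]
    intro u
    have h1 := (hon (⌊u⌋ - 1)).union_of_isClosed (hon ⌊u⌋) isClosed_Icc isClosed_Icc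
    refine h1.continuousAt (Filter.mem_of_superset
      (Ioo_mem_nhds (a := (⌊u⌋ : ℝ) - 1) (b := ⌊u⌋ + 1) ?_ ?_) ?_)
    · linarith [Int.floor_le u]
    · exact Int.lt_floor_add_one u
    · rintro x ⟨hx1, hx2⟩
      rcases le_total x ⌊u⌋ with h | h
      · left; push_cast; exact ⟨hx1.le, by linarith⟩
      · right; exact ⟨h, hx2.le⟩
  · intro u
    simp only [Γ, Int.floor_add_one, Int.fract_add_one]
    rw [add_comm, zpow_one_add]
    rfl
  · intro u hu
    have := key 0 u (by simpa using hu)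
    simpa using this

/-- A maximal free disk. -/
theorem exists_max_free (g : ℂ ≃ₜ ℂ) (hfix : ∀ z, g z ≠ z) (b : ℂ) :
    ∃ (r : ℝ) (y : ℂ), 0 < r ∧ ‖y - b‖ = r ∧ ‖g y - b‖ = r ∧
      ∀ z, ‖z - b‖ < r → r ≤ ‖g z - b‖ := by
  let m : ℂ → ℝ := fun z => max ‖z - b‖ ‖g z - b‖
  have gc := g.continuous
  have hm : Continuous m := by fun_prop
  have hlim : Filter.Tendsto m (Filter.cocompact ℂ) Filter.atTop := by
    refine Filter.tendsto_atTop_mono (fun z => le_max_left _ _) ?_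
    refine Filter.tendsto_atTop_mono (fun z => ?_)
      (Filter.tendsto_atTop_add_const_right _ (-‖b‖) (tendsto_norm_cocompact_atTop (E := ℂ)))
    have := norm_sub_norm_le z b
    linarith
  obtain ⟨y, hy⟩ := hm.exists_forall_le hlim
  have hfree : ∀ z, ‖z - b‖ < m y → m y ≤ ‖g z - b‖ := fun z hz =>
    (le_max_iff.1 (hy z)).resolve_left (not_le.2 hz)
  have hpos : 0 < m y := by
    rcases (norm_nonneg (y - b)).eq_or_lt with h | h
    · have h1 : y = b := sub_eq_zero.1 (norm_eq_zero.1 h.symm)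
      refine lt_max_of_lt_right (norm_pos_iff.2 (sub_ne_zero.2 ?_))
      rw [h1]; exact hfix b
    · exact lt_max_of_lt_left h
  -- points of norm `≤ r` are limits of points of norm `< r`
  have hclos : ∀ z, ‖z - b‖ ≤ m y → z ∈ closure {x | ‖x - b‖ < m y} := by
    intro z hz
    have : {x | ‖x - b‖ < m y} = Metric.ball b (m y) := by
      ext x; simp [dist_eq_norm]
    rw [this, closure_ball _ hpos.ne']
    simpa [dist_eq_norm] using hz
  refine ⟨m y, y, hpos, ?_, ?_, hfree⟩
  · refine le_antisymm (le_max_left _ _) (not_lt.1 fun hlt => ?_)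
    -- move `g y` inward
    have ho : IsOpen {w | ‖g.symm w - b‖ < m y} := by
      have := g.symm.continuous
      exact isOpen_lt (by fun_prop) (by fun_prop)
    obtain ⟨w, hw1, hw2⟩ := mem_closure_iff.1 (hclos (g y) (le_max_right _ _)) _ ho
      (by simpa using hlt)
    have := hfree _ hw1
    rw [g.apply_symm_apply] at this
    exact absurd hw2 (not_lt.2 this)
  · refine le_antisymm (le_max_right _ _) (not_lt.1 fun hlt => ?_)
    have ho : IsOpen {w | ‖g w - b‖ < m y} := isOpen_lt (by fun_prop) (by fun_prop)
    obtain ⟨w, hw1, hw2⟩ := mem_closure_iff.1 (hclos y (le_max_left _ _)) _ ho hlt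
    exact absurd hw1 (not_lt.2 (hfree _ hw2))

/-- For a fixed point free homeomorphism with a periodic point, an equivariant curve with a
shortest return lag, greater than one. -/
theorem exists_return (g : ℂ ≃ₜ ℂ) (hfix : ∀ z, g z ≠ z) (b : ℂ) (n : ℕ) (hn : 0 < n)
    (hb : g^[n] b = b) :
    ∃ Γ : ℝ → ℂ, Continuous Γ ∧ (∀ u, Γ (u + 1) = g (Γ u)) ∧ ∃ T s : ℝ, 1 < T ∧
      Γ (s + T) = Γ s ∧ ∀ u w, u < w → w < u + T → Γ u ≠ Γ w := by
  obtain ⟨r, y, hr, hy, hgy, hfree⟩ := exists_max_free g hfix b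
  let α : ℝ → ℂ := fun u => b + (max 0 (1 - 2 * u) : ℝ) * (y - b)
    + (max 0 (2 * u - 1) : ℝ) * (g y - b)
  have hα : Continuous α := by fun_prop
  have hαl : ∀ u, u ≤ 1 / 2 → α u = b + ((1 - 2 * u : ℝ) : ℂ) * (y - b) := by
    intro u hu
    simp only [α]
    rw [max_eq_right (by linarith), max_eq_left (by linarith)]
    simp
  have hαr : ∀ u, 1 / 2 ≤ u → α u = b + ((2 * u - 1 : ℝ) : ℂ) * (g y - b) := by
    intro u hu
    simp only [α]
    rw [max_eq_left (by linarith), max_eq_right (by linarith)]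
    simp
  have hα0 : α 0 = y := by rw [hαl 0 (by norm_num)]; simp
  have hα1 : α 1 = g y := by rw [hαr 1 (by norm_num)]; norm_num
  have hαh : α (1 / 2) = b := by rw [hαr _ le_rfl]; norm_num
  have hαn : ∀ u, ‖α u - b‖ = |1 - 2 * u| * r := by
    intro u
    rcases le_total u (1 / 2) with h | h
    · rw [hαl u h, add_sub_cancel_left, norm_mul, hy, Complex.norm_real, Real.norm_eq_abs]
    · rw [hαr u h, add_sub_cancel_left, norm_mul, hgy, Complex.norm_real, Real.norm_eq_abs,
        abs_sub_comm]
  have hαinj : ∀ u w, u < w → α u ≠ α w := by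
    intro u w huw h
    have h1 := hαn u
    rw [h, hαn w] at h1
    have h2 := mul_right_cancel₀ hr.ne' h1
    rcases abs_eq_abs.1 h2 with h3 | h3
    · linarith
    · rw [hαl u (by linarith), hαr w (by linarith),
        show 2 * w - 1 = 1 - 2 * u by linarith] at h
      have h5 : ((1 - 2 * u : ℝ) : ℂ) ≠ 0 := by
        exact_mod_cast (by linarith : (0 : ℝ) < 1 - 2 * u).ne'
      have h4 := mul_left_cancel₀ h5 (add_left_cancel h)
      exact hfix y (sub_left_inj.1 h4).symm
  have hαin : ∀ u, 0 < u → u < 1 → ‖α u - b‖ < r := by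
    intro u h0 h1
    rw [hαn]
    have : |1 - 2 * u| < 1 := abs_lt.2 ⟨by linarith, by linarith⟩
    nlinarith
  obtain ⟨Γ, hΓ, hΓg, hΓα⟩ := exists_curve g α hα (by rw [hα1, hα0])
  have hshift : ∀ (k : ℤ) u, Γ (u + k) = (g ^ k : ℂ ≃ₜ ℂ) (Γ u) := by
    intro k
    induction k using Int.induction_on with
    | zero => simp
    | succ i ih =>
      intro u
      push_cast at ih ⊢
      rw [← add_assoc, hΓg, ih, add_comm, zpow_one_add]; rfl
    | pred i ih =>
      intro u
      apply g.injective
      rw [← hΓg]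
      have := ih u
      push_cast at this ⊢
      rw [show u + (-(i : ℝ) - 1) + 1 = u + -(i : ℝ) by ring, this]
      rw [show (g ^ (-(i : ℤ)) : ℂ ≃ₜ ℂ) = g * g ^ (-(i : ℤ) - 1) by
        rw [← zpow_one_add]; congr 1; ring]
      rfl
  have hfract : ∀ u w, Γ u = Γ w → Γ (Int.fract u) = Γ (Int.fract u + (w - u)) := by
    intro u w h
    have e1 : Int.fract u = u + ((-⌊u⌋ : ℤ) : ℝ) := by
      push_cast; rw [← sub_eq_add_neg]; rfl
    have e2 : Int.fract u + (w - u) = w + ((-⌊u⌋ : ℤ) : ℝ) := by rw [e1]; ring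
    rw [e2, e1, hshift, hshift, h]
  have hlag : ∀ u τ, 0 < τ → τ ≤ 1 → Γ u ≠ Γ (u + τ) := by
    intro u τ h0 h1 h
    rcases h1.eq_or_lt with rfl | h1
    · rw [hΓg] at h; exact hfix _ h.symm
    have h' := hfract _ _ h
    rw [add_sub_cancel_left] at h'
    set v := Int.fract u
    have v0 : 0 ≤ v := Int.fract_nonneg u
    have v1 : v < 1 := Int.fract_lt_one u
    rw [hΓα v ⟨v0, v1.le⟩] at h'
    rcases le_total (v + τ) 1 with h2 | h2
    · rw [hΓα _ ⟨by linarith, h2⟩] at h'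
      exact hαinj _ _ (by linarith) h'
    · rw [show v + τ = (v + τ - 1) + 1 by ring, hΓg, hΓα _ ⟨by linarith, by linarith⟩] at h'
      rcases (by linarith : 0 ≤ v + τ - 1).eq_or_lt with h3 | h3
      · rw [← h3, hα0, ← hα1] at h'
        exact hαinj _ _ v1 h'
      · have h4 := hfree _ (hαin _ h3 (by linarith))
        rw [← h'] at h4
        exact absurd (hαin v (by linarith) v1) (not_lt.2 h4)
  -- minimal lag
  let A : Set (ℝ × ℝ) := (Set.Icc 0 1 ×ˢ Set.Icc 1 (n : ℝ)) ∩ {p | Γ p.1 = Γ (p.1 + p.2)}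
  have hA : IsCompact A := (isCompact_Icc.prod isCompact_Icc).inter_right
    (isClosed_eq (by fun_prop) (by fun_prop))
  have hn1 : (1 : ℝ) ≤ n := by exact_mod_cast hn
  have hAn : A.Nonempty := by
    refine ⟨(1 / 2, n), ⟨⟨by norm_num, by norm_num⟩, hn1, le_rfl⟩, ?_⟩
    have h1 := hshift n (1 / 2)
    have hpow : ∀ (k : ℕ) z, (g ^ k : ℂ ≃ₜ ℂ) z = g^[k] z := by
      intro k
      induction k with
      | zero => intro z; rfl
      | succ k ih => intro z; rw [pow_succ, Function.iterate_succ_apply, ← ih]; rfl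
    have hh : Γ (1 / 2) = b := by rw [hΓα _ ⟨by norm_num, by norm_num⟩, hαh]
    rw [zpow_natCast, hpow, hh, hb, Int.cast_natCast] at h1
    simp only [Set.mem_ofPred_eq]
    rw [hh, h1]
  obtain ⟨⟨s, T⟩, ⟨⟨-, hT1, hTn⟩, hsT⟩, hmin⟩ :=
    hA.exists_isMinOn hAn (f := Prod.snd) continuous_snd.continuousOn
  simp only [Set.mem_ofPred_eq] at hsT hT1 hTn
  refine ⟨Γ, hΓ, hΓg, T, s, ?_, hsT.symm, ?_⟩
  · refine lt_of_le_of_ne hT1 fun h => ?_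
    exact hlag s T (by linarith) h.symm.le hsT
  · intro u w huw hwT h
    rcases le_or_gt (w - u) 1 with h1 | h1
    · exact hlag u (w - u) (by linarith) h1 (by rw [add_sub_cancel]; exact h)
    · have hm : (Int.fract u, w - u) ∈ A :=
        ⟨⟨⟨Int.fract_nonneg u, (Int.fract_lt_one u).le⟩, h1.le, by simp only; linarith⟩,
          hfract _ _ h⟩
      have := hmin hm
      simp only [Set.mem_ofPred_eq] at this
      linarith

/-- The bump pushing `b` to `b + c`. -/
noncomputable def bump (b c : ℂ) (r t : ℝ) (z : ℂ) : ℂ :=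
  ((max 0 (min 1 t) * max 0 (1 - ‖z - b‖ / r) : ℝ) : ℂ) * c

theorem bump_lip (b c : ℂ) {r : ℝ} (hr : 0 < r) (t : ℝ) (z w : ℂ) :
    ‖bump b c r t z - bump b c r t w‖ ≤ (‖c‖ / r) * ‖z - w‖ := by
  unfold bump
  rw [← sub_mul, ← Complex.ofReal_sub, norm_mul, Complex.norm_real, Real.norm_eq_abs, ← mul_sub,
    abs_mul]
  have h1 : |max 0 (min 1 t)| ≤ 1 := by
    rw [abs_of_nonneg (le_max_left _ _)]
    exact max_le zero_le_one (min_le_left _ _)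
  have h2 : |max 0 (1 - ‖z - b‖ / r) - max 0 (1 - ‖w - b‖ / r)| ≤ ‖z - w‖ / r := by
    refine (abs_max_sub_max_le_max _ _ _ _).trans ?_
    rw [sub_self, abs_zero, max_eq_right (abs_nonneg _), sub_sub_sub_cancel_left, ← sub_div,
      abs_div, abs_of_pos hr]
    gcongr
    refine (abs_norm_sub_norm_le _ _).trans ?_
    rw [sub_sub_sub_cancel_right, norm_sub_rev]
  calc _ ≤ 1 * (‖z - w‖ / r) * ‖c‖ := by gcongr
    _ = _ := by ring

theorem exists_push (b c : ℂ) {r : ℝ} (hr : 0 < r) (hc : ‖c‖ < r) :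
    ∃ h : ℂ ≃ₜ ℂ, h b = b + c ∧ (∀ z, r ≤ ‖z - b‖ → h z = z) ∧
      ∃ P : ℝ × ℂ → ℂ, Continuous P ∧ (∀ t z w, P (t, z) = P (t, w) → z = w) ∧
        (∀ z, P (0, z) = z) ∧ (∀ z, P (1, z) = h z) := by
  have hk : ‖c‖ / r < 1 := (div_lt_one hr).2 hc
  let k : NNReal := ⟨‖c‖ / r, by positivity⟩
  have happ : ApproximatesLinearOn (fun z => z + bump b c r 1 z)
      ((ContinuousLinearEquiv.refl ℂ ℂ : ℂ ≃L[ℂ] ℂ) : ℂ →L[ℂ] ℂ) Set.univ k := by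
    rw [ApproximatesLinearOn.approximatesLinearOn_iff_lipschitzOnWith]
    apply LipschitzOnWith.of_dist_le_mul
    intro z _ w _
    have h1 : ‖bump b c r 1 z - bump b c r 1 w‖ ≤ (k : ℝ) * ‖z - w‖ := bump_lip b c hr 1 z w
    simpa [dist_eq_norm, -NNReal.coe_mk] using h1
  refine ⟨happ.toHomeomorph _ (Or.inr ?_), ?_, ?_, fun p => p.2 + bump b c r p.1 p.2,
    ?_, ?_, ?_, ?_⟩
  · have : ‖((ContinuousLinearEquiv.refl ℂ ℂ).symm : ℂ →L[ℂ] ℂ)‖₊ = 1 := by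
      rw [ContinuousLinearEquiv.refl_symm, ContinuousLinearEquiv.coe_refl]
      ext
      simp
    rw [this, inv_one]
    exact_mod_cast hk
  · change b + bump b c r 1 b = b + c
    simp [bump]
  · intro z hz
    change z + bump b c r 1 z = z
    have : 1 - ‖z - b‖ / r ≤ 0 := by
      rw [sub_nonpos, le_div_iff₀ hr]; simpa using hz
    simp [bump, max_eq_left this]
  · unfold bump; fun_prop
  · intro t z w h
    by_contra hne
    have h1 := bump_lip b c hr t z w
    have h2 : bump b c r t z - bump b c r t w = -(z - w) := by
      linear_combination h
    rw [h2, norm_neg] at h1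
    have h3 : 0 < ‖z - w‖ := norm_pos_iff.2 (sub_ne_zero.2 hne)
    nlinarith
  · intro z; simp [bump]
  · intro z; rfl

/-- An orientation-preserving homeomorphism of the plane with a nonempty
compact invariant set has a fixed point. -/
theorem fixed_point_of_invariant_compact (f : ℂ ≃ₜ ℂ)
    (hor : OrientationPreserving f) (K : Set ℂ) (hKne : K.Nonempty)
    (hKc : IsCompact K) (hKinv : f '' K = K) :
    ∃ z : ℂ, f z = z := by
  by_contra! hfix
  obtain ⟨H, hH, hHh, H0, H1⟩ := hor
  have fc := f.continuous
  -- a uniform radius of free disks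
  have hloc : ∀ x : ℂ, ∃ U : Set ℂ, IsOpen U ∧ x ∈ U ∧ ∀ z ∈ U, f z ∉ U := by
    intro x
    obtain ⟨A, B, hA, hB, hfA, hxB, hdis⟩ := t2_separation (hfix x)
    exact ⟨B ∩ f ⁻¹' A, hB.inter (hA.preimage fc), ⟨hxB, hfA⟩, fun z hz hz' =>
      Set.disjoint_left.1 hdis hz.2 hz'.1⟩
  choose U hUo hxU hUf using hloc
  obtain ⟨r, hr, hrU⟩ := lebesgue_number_lemma_of_metric hKc hUo
    (fun x _ => Set.mem_iUnion.2 ⟨x, hxU x⟩)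
  have hfree : ∀ b ∈ K, ∀ z, ‖z - b‖ < r → r ≤ ‖f z - b‖ := by
    intro b hb z hz
    obtain ⟨i, hi⟩ := hrU b hb
    by_contra! hlt
    exact hUf i z (hi (by simpa [dist_eq_norm] using hz)) (hi (by simpa [dist_eq_norm] using hlt))
  have hKit : ∀ (n : ℕ), ∀ y ∈ K, f^[n] y ∈ K := by
    intro n
    have : Set.MapsTo f K K := fun y hy => hKinv ▸ Set.mem_image_of_mem f hy
    exact fun y hy => this.iterate n hy
  -- close return
  have hex : ∃ n : ℕ, 0 < n ∧ ∃ y ∈ K, ‖y - f^[n] y‖ < r := by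
    obtain ⟨x, hx⟩ := hKne
    obtain ⟨a, -, φ, hφ, hlim⟩ := hKc.tendsto_subseq (fun n => hKit n x hx)
    obtain ⟨N, hN⟩ := Metric.cauchySeq_iff.1 hlim.cauchySeq r hr
    have h1 := hN N le_rfl (N + 1) (Nat.le_succ N)
    have h2 : φ N < φ (N + 1) := hφ (Nat.lt_succ_self N)
    refine ⟨φ (N + 1) - φ N, Nat.sub_pos_of_lt h2, f^[φ N] x, hKit _ x hx, ?_⟩
    rw [← Function.iterate_add_apply, Nat.sub_add_cancel h2.le, ← dist_eq_norm]
    exact h1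
  classical
  obtain ⟨hn, y, hy, hyn⟩ := Nat.find_spec hex
  have hmin := fun m => Nat.find_min hex (m := m)
  set n := Nat.find hex
  set b := f^[n] y with hbdef
  have hbK : b ∈ K := hKit n y hy
  have hout : ∀ i, 0 < i → i < n → r ≤ ‖f^[i] y - b‖ := by
    intro i h0 h1
    by_contra! hlt
    refine hmin (n - i) (by omega) ⟨by omega, f^[i] y, hKit i y hy, ?_⟩
    rw [← Function.iterate_add_apply, Nat.sub_add_cancel h1.le]
    exact hlt
  obtain ⟨h, hhb, hhout, P, hP, hPinj, P0, P1⟩ := exists_push b (y - b) hr hyn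
  -- perturbed map
  let g : ℂ ≃ₜ ℂ := h.trans f
  have hg : ∀ z, g z = f (h z) := fun z => rfl
  have hhin : ∀ z, ‖z - b‖ < r → ‖h z - b‖ < r := by
    intro z hz
    by_contra! hge
    have := h.injective (hhout _ hge)
    rw [this] at hge
    linarith
  have hgfix : ∀ z, g z ≠ z := by
    intro z hz
    rw [hg] at hz
    rcases lt_or_ge ‖z - b‖ r with h1 | h1
    · have := hfree b hbK _ (hhin z h1)
      rw [hz] at this
      linarith
    · rw [hhout z h1] at hz
      exact hfix z hz
  have hgit : ∀ i, i + 1 ≤ n → g^[i + 1] b = f^[i + 1] y := by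
    intro i
    induction i with
    | zero => intro _; simp [hg, hhb]
    | succ i ih =>
      intro hi
      rw [Function.iterate_succ_apply', ih (by omega), hg, hhout _ (hout _ (by omega) (by omega)),
        ← Function.iterate_succ_apply' f]
  have hper : g^[n] b = b := by
    have := hgit (n - 1) (by omega)
    rwa [Nat.sub_add_cancel hn] at this
  obtain ⟨Γ, hΓ, hΓg, T, s, hT, hret, hinj⟩ := exists_return g hgfix b n hn hper
  refine core_contradiction g g.continuous hgfix (fun p => H (p.1, P p)) (by fun_prop) ?_ ?_ ?_
    Γ hΓ hΓg T s hT hret hinj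
  · intro t z w hzw
    exact hPinj t z w ((hHh t).injective hzw)
  · intro z; simp [P0, H0]
  · intro z; simp [P1, H1, hg]
end

section
/- Let f be an orientation-preserving homeomorphism of the plane with a nonempty compact invariant set K, and let U be a connected open neighborhood of K. Then f has a fixed point in Fill(U ∪ f(U)), the union of U ∪ f(U) with all bounded connected components of its complement. -/
/-- `Fill A` is `A` together with all bounded connected components of its
complement. -/
def Fill (A : Set ℂ) : Set ℂ :=
  A ∪ {z : ℂ | z ∉ A ∧ Bornology.IsBounded (connectedComponentIn Aᶜ z)}

namespace FixedPointProof

open Set Filter Topology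

/-- Every nonvanishing continuous function on `X` has a continuous logarithm. -/
def LogSet {E : Type*} [TopologicalSpace E] (X : Set E) : Prop :=
  ∀ h : E → ℂ, ContinuousOn h X → (∀ z ∈ X, h z ≠ 0) →
    ∃ L : E → ℂ, ContinuousOn L X ∧ ∀ z ∈ X, Complex.exp (L z) = h z

lemma logSet_convex {E : Type*} [AddCommGroup E] [TopologicalSpace E] [Module ℝ E]
    [IsTopologicalAddGroup E] [ContinuousSMul ℝ E] {S : Set E} (hS : Convex ℝ S) : LogSet S := by
  classical
  intro h hc h0
  rcases S.eq_empty_or_nonempty with rfl | ⟨x0, hx0⟩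
  · exact ⟨fun _ => 0, by simp, by simp⟩
  have mem : ∀ (s : unitInterval) (x : S), x0 + (s : ℝ) • ((x : E) - x0) ∈ S := by
    intro s x
    exact hS.add_smul_sub_mem hx0 x.2 s.2
  let H : C(unitInterval × S, {z : ℂ // z ≠ 0}) :=
    ⟨fun p => ⟨h (x0 + (p.1 : ℝ) • ((p.2 : E) - x0)), h0 _ (mem _ _)⟩, by
      refine Continuous.subtype_mk ?_ _
      refine hc.comp_continuous (by fun_prop) (fun p => mem _ _)⟩
  let F : C(S, ℂ) := ⟨fun _ => Complex.log (h x0), by fun_prop⟩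
  have H0 : ∀ a, H (0, a) = (fun z : ℂ ↦ (⟨_, z.exp_ne_zero⟩ : {z : ℂ // z ≠ 0})) (F a) := by
    intro a
    apply Subtype.ext
    simp [H, F, Complex.exp_log (h0 x0 hx0)]
  let G := Complex.isCoveringMap_exp.liftHomotopy H F H0
  have hG := Complex.isCoveringMap_exp.liftHomotopy_lifts H F H0
  refine ⟨fun x => if hx : x ∈ S then G (1, ⟨x, hx⟩) else 0, ?_, ?_⟩
  · rw [continuousOn_iff_continuous_domRestrict]
    have : Continuous fun x : S => G (1, x) := by fun_prop
    convert this using 1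
    ext x
    simp
  · intro z hz
    have h1 : Complex.exp (G (1, ⟨z, hz⟩)) = h (x0 + ((1 : unitInterval) : ℝ) • (z - x0)) :=
      congrArg Subtype.val (congrFun hG (1, ⟨z, hz⟩))
    simp only [hz, dif_pos]
    rw [h1]
    simp

lemma exp_const_const {E : Type*} [TopologicalSpace E] {S : Set E} (hS : IsPreconnected S)
    {d : E → ℂ} (hd : ContinuousOn d S) {w : ℂ} (hw : ∀ x ∈ S, Complex.exp (d x) = w)
    {x y : E} (hx : x ∈ S) (hy : y ∈ S) : d x = d y := by
  refine Complex.isCoveringMap_exp.constOn_of_comp hS hd ?_ hx hy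
  intro a ha b hb
  apply Subtype.ext
  simp [hw a ha, hw b hb]

/-- Two logs of the same function on a preconnected set have constant difference. -/
lemma log_sub_const {E : Type*} [TopologicalSpace E] {S : Set E} (hS : IsPreconnected S)
    {a b : E → ℂ} (ha : ContinuousOn a S) (hb : ContinuousOn b S)
    (hab : ∀ x ∈ S, Complex.exp (a x) = Complex.exp (b x))
    {x y : E} (hx : x ∈ S) (hy : y ∈ S) : a x - b x = a y - b y := by
  refine exp_const_const (w := 1) (d := fun x => a x - b x) hS (ha.sub hb) ?_ hx hy
  intro z hz
  simp [Complex.exp_sub, hab z hz, Complex.exp_ne_zero]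

lemma log_eq_of_eq {E : Type*} [TopologicalSpace E] {S : Set E} (hS : IsPreconnected S)
    {a b : E → ℂ} (ha : ContinuousOn a S) (hb : ContinuousOn b S)
    (hab : ∀ x ∈ S, Complex.exp (a x) = Complex.exp (b x))
    {x y : E} (hx : x ∈ S) (hy : y ∈ S) (he : a x = b x) : a y = b y := by
  have := log_sub_const hS ha hb hab hx hy
  rw [he, sub_self] at this
  exact (sub_eq_zero.mp this.symm)

lemma convex_strip (a b c d e : ℝ) : Convex ℝ {p : ℝ × ℝ | a ≤ p.1 ∧ p.2 ≤ b ∧ c < p.2 - p.1 ∧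
    p.2 - p.1 < d ∧ p.2 - p.1 ≤ e} := by
  have h1 : Convex ℝ {p : ℝ × ℝ | a ≤ p.1} := (convex_Ici a).linear_preimage (LinearMap.fst ℝ ℝ ℝ)
  have h2 : Convex ℝ {p : ℝ × ℝ | p.2 ≤ b} := (convex_Iic b).linear_preimage (LinearMap.snd ℝ ℝ ℝ)
  have h3 : Convex ℝ {p : ℝ × ℝ | c < p.2 - p.1} :=
    (convex_Ioi c).linear_preimage (LinearMap.snd ℝ ℝ ℝ - LinearMap.fst ℝ ℝ ℝ)
  have h4 : Convex ℝ {p : ℝ × ℝ | p.2 - p.1 < d} :=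
    (convex_Iio d).linear_preimage (LinearMap.snd ℝ ℝ ℝ - LinearMap.fst ℝ ℝ ℝ)
  have h5 : Convex ℝ {p : ℝ × ℝ | p.2 - p.1 ≤ e} :=
    (convex_Iic e).linear_preimage (LinearMap.snd ℝ ℝ ℝ - LinearMap.fst ℝ ℝ ℝ)
  exact h1.inter (h2.inter (h3.inter (h4.inter h5)))

lemma index_ne {H : ℝ × ℂ → ℂ} (hH : Continuous H) (hinj : ∀ t, Function.Injective fun z => H (t, z))
    (h0 : ∀ z, H (0, z) = z) {β : ℝ → ℂ} (hβ : Continuous β) (hf : ∀ u, H (1, β u) = β (u + 1))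
    {r0 r1 : ℝ} (hr : r0 + 1 < r1) (hclose : β r0 = β r1)
    (hne : ∀ u v, r0 ≤ u → u < v → v ≤ r1 → v - u < r1 - r0 → β u ≠ β v)
    (hfree : ∀ u v, 0 < v - u → v - u ≤ 1 → β u ≠ β v)
    {V : ℝ → ℂ} (hV : ContinuousOn V (Icc r0 r1))
    (hVe : ∀ u ∈ Icc r0 r1, Complex.exp (V u) = β (u + 1) - β u) : V r1 ≠ V r0 := by
  set Δ : Set (ℝ × ℝ) := {p : ℝ × ℝ | r0 ≤ p.1 ∧ p.2 ≤ r1 ∧ 0 < p.2 - p.1 ∧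
    p.2 - p.1 < r1 - r0 ∧ p.2 - p.1 ≤ r1 - r0} with hΔ
  have cΔ : Convex ℝ Δ := convex_strip _ _ _ _ _
  have memΔ : ∀ u v, r0 ≤ u → v ≤ r1 → u < v → v - u < r1 - r0 → (u, v) ∈ Δ :=
    fun u v a b c d => ⟨a, b, by simpa using c, d, d.le⟩
  -- the log of the chord
  obtain ⟨Λ, cΛ, eΛ⟩ := logSet_convex ((convex_Icc (0 : ℝ) 1).prod cΔ)
    (fun p => H (p.1, β p.2.2) - H (p.1, β p.2.1)) (by fun_prop) (by
      rintro ⟨t, u, v⟩ ⟨-, hu, hv, huv, hlt, -⟩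
      rw [sub_ne_zero]
      intro h
      have := hinj t h
      exact hne u v hu (by simpa using huv) hv hlt this.symm)
  -- the half turn
  obtain ⟨q, hq, hq'⟩ : ∃ q : ℂ, Complex.exp q = -1 ∧ ∀ t ∈ Icc (0 : ℝ) 1, ∀ u ∈ Ioo r0 r1,
      Λ (t, u, r1) = Λ (t, r0, u) + q := by
    have key : ∀ x ∈ Icc (0 : ℝ) 1 ×ˢ Ioo r0 r1, ∀ y ∈ Icc (0 : ℝ) 1 ×ˢ Ioo r0 r1,
        Λ (x.1, x.2, r1) - Λ (x.1, r0, x.2) = Λ (y.1, y.2, r1) - Λ (y.1, r0, y.2) := by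
      intro x hx y hy
      have m1 : MapsTo (fun x : ℝ × ℝ => (x.1, x.2, r1)) (Icc (0 : ℝ) 1 ×ˢ Ioo r0 r1)
          (Icc (0 : ℝ) 1 ×ˢ Δ) := by
        rintro ⟨t, u⟩ ⟨ht, hu⟩
        simp only [mem_Ioo] at hu
        exact ⟨ht, memΔ _ _ (by linarith) (by linarith) (by linarith) (by linarith)⟩
      have m2 : MapsTo (fun x : ℝ × ℝ => (x.1, r0, x.2)) (Icc (0 : ℝ) 1 ×ˢ Ioo r0 r1)
          (Icc (0 : ℝ) 1 ×ˢ Δ) := by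
        rintro ⟨t, u⟩ ⟨ht, hu⟩
        simp only [mem_Ioo] at hu
        exact ⟨ht, memΔ _ _ (by linarith) (by linarith) (by linarith) (by linarith)⟩
      refine exp_const_const (w := -1)
        (d := fun x : ℝ × ℝ => Λ (x.1, x.2, r1) - Λ (x.1, r0, x.2))
        ((convex_Icc (0 : ℝ) 1).prod (convex_Ioo r0 r1)).isPreconnected ?_ ?_ hx hy
      · exact (cΛ.comp (by fun_prop) m1).sub (cΛ.comp (by fun_prop) m2)
      · intro z hz
        have e1 := eΛ _ (m1 hz)
        have e2 := eΛ _ (m2 hz)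
        rw [Complex.exp_sub, e1, e2]
        have : H (z.1, β z.2) - H (z.1, β r0) ≠ 0 := by
          rw [← e2]; exact Complex.exp_ne_zero _
        simp only at *
        rw [div_eq_iff this, ← hclose]
        ring
    have hmid : ((0 : ℝ), (r0 + r1) / 2) ∈ Icc (0 : ℝ) 1 ×ˢ Ioo r0 r1 :=
      ⟨by simp, by constructor <;> simp only <;> linarith⟩
    refine ⟨Λ (0, (r0 + r1) / 2, r1) - Λ (0, r0, (r0 + r1) / 2), ?_, ?_⟩
    · have e1 := eΛ (0, (r0 + r1) / 2, r1)
        ⟨by simp, memΔ _ _ (by linarith) (by linarith) (by linarith) (by linarith)⟩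
      have e2 := eΛ (0, r0, (r0 + r1) / 2)
        ⟨by simp, memΔ _ _ (by linarith) (by linarith) (by linarith) (by linarith)⟩
      rw [Complex.exp_sub, e1, e2]
      have : H (0, β ((r0 + r1) / 2)) - H (0, β r0) ≠ 0 := by
        simp only at e2
        rw [← e2]; exact Complex.exp_ne_zero _
      simp only
      rw [div_eq_iff this, ← hclose]
      ring
    · intro t ht u hu
      have := key (t, u) ⟨ht, hu⟩ _ hmid
      simp only at this
      rw [← this]; ring
  have hq0 : q ≠ 0 := by
    rintro rfl
    norm_num at hq
  have ca : ContinuousOn (fun p : ℝ × ℝ => Λ (0, p)) Δ :=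
    cΛ.comp (by fun_prop) (fun p hp => ⟨by simp, hp⟩)
  have ca1 : ContinuousOn (fun p : ℝ × ℝ => Λ (1, p)) Δ :=
    cΛ.comp (by fun_prop) (fun p hp => ⟨by simp, hp⟩)
  have ea : ∀ p ∈ Δ, Complex.exp (Λ (0, p)) = β p.2 - β p.1 := by
    intro p hp
    rw [eΛ (0, p) ⟨by simp, hp⟩, h0, h0]
  have ea1 : ∀ p ∈ Δ, Complex.exp (Λ (1, p)) = β (p.2 + 1) - β (p.1 + 1) := by
    intro p hp
    rw [eΛ (1, p) ⟨by simp, hp⟩, hf, hf]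
  -- the shifted triangle
  set Δ' : Set (ℝ × ℝ) := {p : ℝ × ℝ | r0 + 1 ≤ p.1 ∧ p.2 ≤ r1 + 1 ∧ 0 < p.2 - p.1 ∧
    p.2 - p.1 < r1 - r0 ∧ p.2 - p.1 ≤ r1 - r0} with hΔ'
  have cΔ' : Convex ℝ Δ' := convex_strip _ _ _ _ _
  have mm : MapsTo (fun p : ℝ × ℝ => (p.1 - 1, p.2 - 1)) Δ' Δ := by
    rintro ⟨u, v⟩ ⟨h1, h2, h3, h4, h5⟩
    simp only at h1 h2 h3 h4 h5
    exact memΔ _ _ (by linarith) (by linarith) (by linarith) (by linarith)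
  have cb : ContinuousOn (fun p : ℝ × ℝ => Λ (1, p.1 - 1, p.2 - 1)) Δ' :=
    ca1.comp (by fun_prop) mm
  have eb : ∀ p ∈ Δ', Complex.exp (Λ (1, p.1 - 1, p.2 - 1)) = β p.2 - β p.1 := by
    intro p hp
    have := ea1 _ (mm hp)
    simpa using this
  set R : Set (ℝ × ℝ) := {p : ℝ × ℝ | r0 ≤ p.1 ∧ p.2 ≤ r1 + 1 ∧ 0 < p.2 - p.1 ∧
    p.2 - p.1 < 2 ∧ p.2 - p.1 ≤ 1} with hR
  have cR : Convex ℝ R := convex_strip _ _ _ _ _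
  obtain ⟨A, cA, eA⟩ := logSet_convex cR (fun p => β p.2 - β p.1) (by fun_prop) (by
      rintro ⟨u, v⟩ ⟨hu, hv, huv, -, hle⟩
      rw [sub_ne_zero]
      exact (hfree u v huv hle).symm)
  have k0 : ∀ x ∈ Δ ∩ R, ∀ y ∈ Δ ∩ R, A x - Λ (0, x) = A y - Λ (0, y) := fun x hx y hy =>
    log_sub_const (cΔ.inter cR).isPreconnected (cA.mono inter_subset_right)
      (ca.mono inter_subset_left) (fun x hx => by rw [eA x hx.2, ea x hx.1]) hx hy
  have k1 : ∀ x ∈ Δ' ∩ R, ∀ y ∈ Δ' ∩ R, A x - Λ (1, x.1 - 1, x.2 - 1)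
      = A y - Λ (1, y.1 - 1, y.2 - 1) := fun x hx y hy =>
    log_sub_const (cΔ'.inter cR).isPreconnected (cA.mono inter_subset_right)
      (cb.mono inter_subset_left) (fun x hx => by rw [eA x hx.2, eb x hx.1]) hx hy
  have k2 : ∀ x ∈ Δ ∩ Δ', ∀ y ∈ Δ ∩ Δ', Λ (0, x) - Λ (1, x.1 - 1, x.2 - 1)
      = Λ (0, y) - Λ (1, y.1 - 1, y.2 - 1) := fun x hx y hy =>
    log_sub_const (cΔ.inter cΔ').isPreconnected (ca.mono inter_subset_left)
      (cb.mono inter_subset_right) (fun x hx => by rw [ea x hx.1, eb x hx.2]) hx hy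
  -- evaluate
  obtain ⟨s, hs0, hs1, hsr⟩ : ∃ s : ℝ, 0 < s ∧ s < 1 ∧ s < r1 - (r0 + 1) := by
    refine ⟨min (1 / 2) ((r1 - (r0 + 1)) / 2), ?_, ?_, ?_⟩
    · have : 0 < r1 - (r0 + 1) := by linarith
      positivity
    · have := min_le_left (1 / 2 : ℝ) ((r1 - (r0 + 1)) / 2); linarith
    · have := min_le_right (1 / 2 : ℝ) ((r1 - (r0 + 1)) / 2); linarith
  have e0 := k0 (r0, r0 + 1)
    ⟨by simp only [hΔ, mem_ofPred_eq]; grind, by simp only [hR, mem_ofPred_eq]; grind⟩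
    (r0 + 1, r0 + 1 + s)
    ⟨by simp only [hΔ, mem_ofPred_eq]; grind, by simp only [hR, mem_ofPred_eq]; grind⟩
  have e1 := k1 (r1, r1 + 1)
    ⟨by simp only [hΔ', mem_ofPred_eq]; grind, by simp only [hR, mem_ofPred_eq]; grind⟩
    (r0 + 1, r0 + 1 + s)
    ⟨by simp only [hΔ', mem_ofPred_eq]; grind, by simp only [hR, mem_ofPred_eq]; grind⟩
  have e2 := k2 (r0 + 1, r1)
    ⟨by simp only [hΔ, mem_ofPred_eq]; grind, by simp only [hΔ', mem_ofPred_eq]; grind⟩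
    (r0 + 1, r0 + 1 + s)
    ⟨by simp only [hΔ, mem_ofPred_eq]; grind, by simp only [hΔ', mem_ofPred_eq]; grind⟩
  have q1 := hq' 1 (by simp) (r1 - 1) ⟨by linarith, by linarith⟩
  have q0 := hq' 0 (by simp) (r0 + 1) ⟨by linarith, by linarith⟩
  have mV : MapsTo (fun u : ℝ => (u, u + 1)) (Icc r0 r1) R := by
    intro u hu
    simp only [mem_Icc] at hu
    simp only [hR, mem_ofPred_eq]
    grind
  have e3 := log_sub_const (convex_Icc r0 r1).isPreconnected hV
    (cA.comp (f := fun u : ℝ => (u, u + 1)) (by fun_prop) mV)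
    (fun x hx => by rw [hVe x hx]; exact (eA _ (mV hx)).symm)
    (x := r0) (y := r1) (by constructor <;> linarith) (by constructor <;> linarith)
  simp only [Function.comp, add_sub_cancel_right] at e0 e1 e2 e3
  intro hV
  rw [hV] at e3
  apply hq0
  have e4 : A (r0, r0 + 1) = A (r1, r1 + 1) := by linear_combination -e3
  linear_combination (1 / 2 : ℂ) * (e0 - e1 - e4 + e2 - q1 - q0)

/-- Integer valued, uniformly locally constant functions on subsets of the line are step functions. -/
lemma step_fun {Z : Set ℝ} {d : ℝ → ℤ} {δ : ℝ} (hδ : 0 < δ)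
    (hd : ∀ y ∈ Z, ∀ y' ∈ Z, |y - y'| ≤ δ → d y = d y') (a : ℝ) (n : ℕ) :
    ∀ b : ℝ, a ≤ b → b ≤ a + n * δ → ∃ (c0 : ℤ) (l : List (ℝ × ℤ)),
      (∀ p ∈ l, p.1 ∉ Z ∧ a ≤ p.1 ∧ p.1 ≤ b) ∧
      ∀ y ∈ Z, a ≤ y → y ≤ b → d y = c0 + (l.map (fun p => if y < p.1 then p.2 else 0)).sum := by
  induction n with
  | zero =>
    intro b hab hb
    obtain rfl : b = a := by simp at hb; linarith
    refine ⟨d b, [], by simp, ?_⟩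
    intro y _ h1 h2
    obtain rfl : y = b := le_antisymm h2 h1
    simp
  | succ n ih =>
    intro b hab hb
    by_cases hb' : b ≤ a + n * δ
    · exact ih b hab hb'
    push Not at hb'
    set a' := a + n * δ with ha'
    have haa' : a ≤ a' := by
      have : 0 ≤ n * δ := by positivity
      linarith
    have hba' : b ≤ a' + δ := by push_cast at hb; linarith
    obtain ⟨c0, l, hl, hsum⟩ := ih a' haa' le_rfl
    have hzero : ∀ y, a' ≤ y → (l.map (fun p => if y < p.1 then p.2 else 0)).sum = 0 := by
      intro y hy
      apply List.sum_eq_zero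
      intro x hx
      obtain ⟨p, hp, rfl⟩ := List.mem_map.1 hx
      have := (hl p hp).2.2
      rw [if_neg (by linarith)]
    by_cases hZ : a' ∈ Z
    · refine ⟨c0, l, fun p hp => ⟨(hl p hp).1, (hl p hp).2.1, by linarith [(hl p hp).2.2]⟩, ?_⟩
      intro y hy h1 h2
      rcases le_total y a' with h | h
      · exact hsum y hy h1 h
      · rw [hd y hy a' hZ (by rw [abs_le]; constructor <;> linarith), hsum a' hZ haa' le_rfl,
          hzero y h, hzero a' le_rfl]
    · obtain ⟨k, hk⟩ : ∃ k : ℤ, ∀ y ∈ Z, a' ≤ y → y ≤ b → d y = k := by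
        by_cases hex : ∃ y ∈ Z, a' ≤ y ∧ y ≤ b
        · obtain ⟨y0, hy0, h1, h2⟩ := hex
          exact ⟨d y0, fun y hy h3 h4 => hd y hy y0 hy0 (by rw [abs_le]; constructor <;> linarith)⟩
        · exact ⟨0, fun y hy h3 h4 => absurd ⟨y, hy, h3, h4⟩ hex⟩
      refine ⟨k, (a', c0 - k) :: l, ?_, ?_⟩
      · intro p hp
        rcases List.mem_cons.1 hp with rfl | hp
        · exact ⟨hZ, haa', hb'.le⟩
        · exact ⟨(hl p hp).1, (hl p hp).2.1, by linarith [(hl p hp).2.2]⟩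
      · intro y hy h1 h2
        simp only [List.map_cons, List.sum_cons]
        rcases lt_or_ge y a' with h | h
        · rw [if_pos h, hsum y hy h1 h.le]; ring
        · rw [if_neg (by linarith), hk y hy h h2, hzero y h]; ring

/-- finite product of integer powers of linear factors -/
noncomputable def Pl (l : List (ℂ × ℤ)) (z : ℂ) : ℂ := (l.map fun p => (z - p.1) ^ p.2).prod

lemma Pl_nil (z : ℂ) : Pl [] z = 1 := by simp [Pl]
lemma Pl_cons (p : ℂ × ℤ) (l : List (ℂ × ℤ)) (z : ℂ) :
    Pl (p :: l) z = (z - p.1) ^ p.2 * Pl l z := by simp [Pl]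
lemma Pl_append (l l' : List (ℂ × ℤ)) (z : ℂ) : Pl (l ++ l') z = Pl l z * Pl l' z := by simp [Pl]

/-- if each factor has a log on `S`, so does the product -/
lemma Pl_log {E : Type*} [TopologicalSpace E] {S : Set E} (g : E → ℂ) (l : List (ℂ × ℤ))
    (h : ∀ p ∈ l, ∃ L : E → ℂ, ContinuousOn L S ∧ ∀ z ∈ S, Complex.exp (L z) = g z - p.1) :
    ∃ L : E → ℂ, ContinuousOn L S ∧ ∀ z ∈ S, Complex.exp (L z) = Pl l (g z) := by
  induction l with
  | nil => exact ⟨fun _ => 0, by fun_prop, by simp [Pl_nil]⟩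
  | cons p l ih =>
    obtain ⟨L, hL, eL⟩ := ih (fun q hq => h q (List.mem_cons_of_mem _ hq))
    obtain ⟨M, hM, eM⟩ := h p List.mem_cons_self
    refine ⟨fun z => p.2 * M z + L z, by fun_prop, fun z hz => ?_⟩
    rw [Complex.exp_add, Complex.exp_int_mul, eM z hz, eL z hz, Pl_cons]

/-- the right logarithm of `z - c` relative to direction `u` -/
noncomputable def lamR (u c z : ℂ) : ℂ := Complex.log ((z - c) / u) + Complex.log u
/-- the left logarithm of `z - c` relative to direction `u` -/
noncomputable def lamL (u c z : ℂ) : ℂ :=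
  Complex.log (-((z - c) / u)) + Real.pi * Complex.I + Complex.log u

lemma mem_slit_of {w : ℂ} (h0 : w ≠ 0) (h : 0 ≤ w.re) : w ∈ Complex.slitPlane := by
  rw [Complex.mem_slitPlane_iff]
  rcases h.lt_or_eq with h | h
  · exact Or.inl h
  · right
    intro h'
    exact h0 (Complex.ext h.symm h')

lemma lamR_cont {u c : ℂ} (hu : u ≠ 0) :
    ContinuousOn (lamR u c) {z | (c / u).re ≤ (z / u).re ∧ z ≠ c} := by
  refine ContinuousOn.add (ContinuousOn.clog (by fun_prop) ?_) continuousOn_const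
  rintro z ⟨h1, h2⟩
  refine mem_slit_of (div_ne_zero (sub_ne_zero.2 h2) hu) ?_
  rw [sub_div, Complex.sub_re]; linarith

lemma lamL_cont {u c : ℂ} (hu : u ≠ 0) :
    ContinuousOn (lamL u c) {z | (z / u).re ≤ (c / u).re ∧ z ≠ c} := by
  refine ContinuousOn.add (ContinuousOn.add (ContinuousOn.clog (by fun_prop) ?_)
    continuousOn_const) continuousOn_const
  rintro z ⟨h1, h2⟩
  refine mem_slit_of (neg_ne_zero.2 (div_ne_zero (sub_ne_zero.2 h2) hu)) ?_
  rw [sub_div, Complex.neg_re, Complex.sub_re]; linarith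

lemma exp_lamR {u c z : ℂ} (hu : u ≠ 0) (hz : z ≠ c) : Complex.exp (lamR u c z) = z - c := by
  rw [lamR, Complex.exp_add, Complex.exp_log hu,
    Complex.exp_log (div_ne_zero (sub_ne_zero.2 hz) hu)]
  field_simp

lemma exp_lamL {u c z : ℂ} (hu : u ≠ 0) (hz : z ≠ c) : Complex.exp (lamL u c z) = z - c := by
  rw [lamL, Complex.exp_add, Complex.exp_add, Complex.exp_log hu,
    Complex.exp_log (neg_ne_zero.2 (div_ne_zero (sub_ne_zero.2 hz) hu)), Complex.exp_pi_mul_I]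
  field_simp

lemma lam_diff {u : ℂ} (hu : u ≠ 0) {m y e : ℝ} (hy : y ≠ e) :
    lamL u (u * (m + e * Complex.I)) (u * (m + y * Complex.I)) =
      lamR u (u * (m + e * Complex.I)) (u * (m + y * Complex.I)) +
      (if y < e then 2 * Real.pi * Complex.I else 0) := by
  have hw : (u * (m + y * Complex.I) - u * (m + e * Complex.I)) / u
      = ((y - e : ℝ) : ℂ) * Complex.I := by
    push_cast
    field_simp
    ring
  rw [lamL, lamR, hw]
  split_ifs with h
  · have h1 : -(((y - e : ℝ) : ℂ) * Complex.I) = ((e - y : ℝ) : ℂ) * Complex.I := by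
      push_cast; ring
    have h2 : ((y - e : ℝ) : ℂ) * Complex.I = ((e - y : ℝ) : ℂ) * (-Complex.I) := by
      push_cast; ring
    rw [h1, h2, Complex.log_ofReal_mul (by linarith) (by simp),
      Complex.log_ofReal_mul (by linarith) (by simp), Complex.log_I, Complex.log_neg_I]
    ring
  · have h0 : 0 < y - e := by
      rcases lt_or_gt_of_ne hy with h' | h'
      · exact absurd h' h
      · linarith
    have h1 : -(((y - e : ℝ) : ℂ) * Complex.I) = ((y - e : ℝ) : ℂ) * (-Complex.I) := by
      push_cast; ring
    rw [h1, Complex.log_ofReal_mul h0 (by simp),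
      Complex.log_ofReal_mul h0 (by simp), Complex.log_I, Complex.log_neg_I]
    ring

/-- `h` is, on `Y ∩ R`, a rational function times an exponential. -/
def Good (h : ℂ → ℂ) (Y R : Set ℂ) : Prop :=
  ∃ l : List (ℂ × ℤ), (∀ p ∈ l, p.1 ∉ Y ∧ p.1 ∈ R) ∧
    ∃ L : ℂ → ℂ, ContinuousOn L (Y ∩ R) ∧ ∀ z ∈ Y ∩ R, h z = Complex.exp (L z) * Pl l z

lemma good_glue {h : ℂ → ℂ} {Y R : Set ℂ} (hY : IsCompact Y) (hR : IsClosed R) (hRc : Convex ℝ R)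
    (h0 : ∀ z ∈ Y, h z ≠ 0)
    {u : ℂ} (hu : u ≠ 0) (m : ℝ)
    (g1 : Good h Y (R ∩ {z | (z / u).re ≤ m})) (g2 : Good h Y (R ∩ {z | m ≤ (z / u).re})) :
    Good h Y R := by
  obtain ⟨l1, hl1, L1, cL1, eL1⟩ := g1
  obtain ⟨l2, hl2, L2, cL2, eL2⟩ := g2
  set Y1 := Y ∩ (R ∩ {z | (z / u).re ≤ m}) with hY1
  set Y2 := Y ∩ (R ∩ {z | m ≤ (z / u).re}) with hY2
  have clP1 : IsClosed {z : ℂ | (z / u).re ≤ m} := isClosed_le (by fun_prop) (by fun_prop)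
  have clP2 : IsClosed {z : ℂ | m ≤ (z / u).re} := isClosed_le (by fun_prop) (by fun_prop)
  have clY1 : IsClosed Y1 := hY.isClosed.inter (hR.inter clP1)
  have clY2 : IsClosed Y2 := hY.isClosed.inter (hR.inter clP2)
  -- logs of the factors on the other side
  obtain ⟨N1, cN1, eN1⟩ := Pl_log (S := Y2) (fun z : ℂ => z) l1 (by
    intro p hp
    have hne : ∀ z ∈ Y2, z ≠ p.1 := by
      rintro z hz rfl
      exact (hl1 p hp).1 hz.1
    refine ⟨lamR u p.1, (lamR_cont hu).mono ?_, fun z hz => exp_lamR hu (hne z hz)⟩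
    intro z hz
    exact ⟨le_trans (hl1 p hp).2.2 hz.2.2, hne z hz⟩)
  obtain ⟨N2, cN2, eN2⟩ := Pl_log (S := Y1) (fun z : ℂ => z) l2 (by
    intro p hp
    have hne : ∀ z ∈ Y1, z ≠ p.1 := by
      rintro z hz rfl
      exact (hl2 p hp).1 hz.1
    refine ⟨lamL u p.1, (lamL_cont hu).mono ?_, fun z hz => exp_lamL hu (hne z hz)⟩
    intro z hz
    exact ⟨le_trans hz.2.2 (hl2 p hp).2.2, hne z hz⟩)
  have e1 : ∀ z ∈ Y1, h z = Complex.exp (L1 z - N2 z) * (Pl l1 z * Pl l2 z) := by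
    intro z hz
    rw [eL1 z hz, Complex.exp_sub, ← eN2 z hz]
    field_simp [Complex.exp_ne_zero]
  have e2 : ∀ z ∈ Y2, h z = Complex.exp (L2 z - N1 z) * (Pl l1 z * Pl l2 z) := by
    intro z hz
    rw [eL2 z hz, Complex.exp_sub, ← eN1 z hz]
    field_simp [Complex.exp_ne_zero]
  set D : ℂ → ℂ := fun z => (L1 z - N2 z) - (L2 z - N1 z) with hD
  have cD : ContinuousOn D (Y1 ∩ Y2) :=
    ((cL1.sub cN2).mono inter_subset_left).sub ((cL2.sub cN1).mono inter_subset_right)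
  have hDn : ∀ z ∈ Y1 ∩ Y2, ∃ n : ℤ, D z = n * (2 * Real.pi * Complex.I) := by
    intro z hz
    have hh := e1 z hz.1
    rw [e2 z hz.2] at hh
    have hP : Pl l1 z * Pl l2 z ≠ 0 := by
      intro hP
      have := e1 z hz.1
      rw [hP, mul_zero] at this
      exact h0 z hz.1.1 this
    have := mul_right_cancel₀ hP hh
    obtain ⟨n, hn⟩ := Complex.exp_eq_exp_iff_exists_int.1 this.symm
    exact ⟨n, by rw [hD]; simp only; rw [hn]; ring⟩
  -- the parametrised line
  set pt : ℝ → ℂ := fun y => u * (m + y * Complex.I) with hpt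
  have cpt : Continuous pt := by fun_prop
  have pt_div : ∀ y, pt y / u = m + y * Complex.I := by
    intro y; rw [hpt]; field_simp
  have pt_re : ∀ y, (pt y / u).re = m := by intro y; rw [pt_div]; simp
  have pt_im : ∀ y, (pt y / u).im = y := by intro y; rw [pt_div]; simp
  have pt_eq : ∀ z : ℂ, (z / u).re = m → pt ((z / u).im) = z := by
    intro z hz
    have : (z / u) = m + (z / u).im * Complex.I := by rw [← hz, Complex.re_add_im]
    rw [hpt]; simp only; rw [← this]; field_simp
  set Z : Set ℝ := {y | pt y ∈ Y ∩ R} with hZ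
  have hZc : IsCompact Z := by
    have : Z = (fun z => (z / u).im) '' (Y1 ∩ Y2) := by
      ext y
      constructor
      · intro hy
        exact ⟨pt y, ⟨⟨hy.1, hy.2, (pt_re y).le⟩, ⟨hy.1, hy.2, (pt_re y).ge⟩⟩, pt_im y⟩
      · rintro ⟨z, ⟨hz1, hz2⟩, rfl⟩
        have := pt_eq z (le_antisymm hz1.2.2 hz2.2.2)
        change pt _ ∈ Y ∩ R
        simp only
        rw [this]
        exact ⟨hz1.1, hz1.2.1⟩
    rw [this]
    refine IsCompact.image ?_ (by fun_prop)
    exact hY.of_isClosed_subset (clY1.inter clY2) (fun z hz => hz.1.1)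
  have hZm : ∀ y ∈ Z, pt y ∈ Y1 ∩ Y2 := fun y hy =>
    ⟨⟨hy.1, hy.2, (pt_re y).le⟩, ⟨hy.1, hy.2, (pt_re y).ge⟩⟩
  choose! n hn using hDn
  obtain ⟨δ, hδ, hδd⟩ : ∃ δ > 0, ∀ y ∈ Z, ∀ y' ∈ Z, |y - y'| ≤ δ → n (pt y) = n (pt y') := by
    have huc := hZc.uniformContinuousOn_of_continuous
      (cD.comp cpt.continuousOn (fun y hy => hZm y hy))
    obtain ⟨ε, hε, hh⟩ := Metric.uniformContinuousOn_iff.1 huc 1 one_pos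
    refine ⟨ε / 2, by positivity, fun y hy y' hy' hyy => ?_⟩
    have hlt := hh y hy y' hy' (by rw [Real.dist_eq]; linarith)
    simp only [Function.comp, hn _ (hZm y hy), hn _ (hZm y' hy'), dist_eq_norm, ← sub_mul] at hlt
    have hpi : ‖(2 * Real.pi * Complex.I : ℂ)‖ = 2 * Real.pi := by
      simp [abs_of_pos Real.pi_pos]
    rw [norm_mul, hpi, ← Int.cast_sub, Complex.norm_intCast] at hlt
    by_contra hne
    have h1 : (1 : ℝ) ≤ |((n (pt y) - n (pt y') : ℤ) : ℝ)| := by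
      exact_mod_cast Int.one_le_abs (sub_ne_zero.2 hne)
    nlinarith [Real.pi_gt_three]
  obtain ⟨c0, l, hl, hstep⟩ : ∃ (c0 : ℤ) (l : List (ℝ × ℤ)),
      (∀ p ∈ l, p.1 ∉ Z ∧ pt p.1 ∈ R) ∧
      ∀ y ∈ Z, n (pt y) = c0 + (l.map (fun p => if y < p.1 then p.2 else 0)).sum := by
    rcases Z.eq_empty_or_nonempty with hZe | hZne
    · refine ⟨0, [], by simp, ?_⟩
      intro y hy
      rw [hZe] at hy
      exact absurd hy (by simp)
    · obtain ⟨a, haZ, ha⟩ := hZc.exists_isLeast hZne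
      obtain ⟨b, hbZ, hb⟩ := hZc.exists_isGreatest hZne
      have hab : a ≤ b := ha hbZ
      obtain ⟨N, hN⟩ := exists_nat_ge ((b - a) / δ)
      rw [div_le_iff₀ hδ] at hN
      obtain ⟨c0, l, hl, hst⟩ := step_fun (d := fun y => n (pt y)) hδ hδd a N b hab (by linarith)
      refine ⟨c0, l, fun p hp => ⟨(hl p hp).1, ?_⟩, fun y hy => hst y hy (ha hy) (hb hy)⟩
      obtain ⟨-, h1, h2⟩ := hl p hp
      have hseg : p.1 ∈ segment ℝ a b := by rw [segment_eq_Icc hab]; exact ⟨h1, h2⟩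
      obtain ⟨s, t, hs, ht, hst, hp1⟩ := hseg
      have := hRc haZ.2 hbZ.2 hs ht hst
      convert this using 1
      rw [← hp1]
      simp only [hpt, smul_eq_mul, Complex.real_smul]
      have : (t : ℂ) = 1 - s := by
        rw [eq_sub_iff_add_eq, add_comm]; exact_mod_cast hst
      push_cast
      rw [this]
      ring
  -- the corrections
  obtain ⟨S1, S2, cS1, cS2, eS1, eS2, hS⟩ : ∃ S1 S2 : ℂ → ℂ, ContinuousOn S1 Y1 ∧
      ContinuousOn S2 Y2 ∧
      (∀ z ∈ Y1, Complex.exp (S1 z) = Pl (l.map fun p => (pt p.1, p.2)) z) ∧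
      (∀ z ∈ Y2, Complex.exp (S2 z) = Pl (l.map fun p => (pt p.1, p.2)) z) ∧
      ∀ y ∈ Z, S1 (pt y) = S2 (pt y) +
        ((l.map (fun p => if y < p.1 then p.2 else 0)).sum : ℤ) * (2 * Real.pi * Complex.I) := by
    clear hstep
    induction l with
    | nil => exact ⟨fun _ => 0, fun _ => 0, by fun_prop, by fun_prop, by simp [Pl_nil],
        by simp [Pl_nil], by simp⟩
    | cons p l ih =>
      obtain ⟨S1, S2, cS1, cS2, eS1, eS2, hS⟩ := ih (fun q hq => hl q (List.mem_cons_of_mem _ hq))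
      have hp := hl p List.mem_cons_self
      have hpY : pt p.1 ∉ Y := fun hh => hp.1 ⟨hh, hp.2⟩
      have hne1 : ∀ z ∈ Y1, z ≠ pt p.1 := by
        rintro z hz rfl
        exact hpY hz.1
      have hne2 : ∀ z ∈ Y2, z ≠ pt p.1 := by
        rintro z hz rfl
        exact hpY hz.1
      have c1 : ContinuousOn (lamL u (pt p.1)) Y1 := (lamL_cont hu).mono
        (fun z hz => ⟨by rw [pt_re]; exact hz.2.2, hne1 z hz⟩)
      have c2 : ContinuousOn (lamR u (pt p.1)) Y2 := (lamR_cont hu).mono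
        (fun z hz => ⟨by rw [pt_re]; exact hz.2.2, hne2 z hz⟩)
      refine ⟨fun z => p.2 * lamL u (pt p.1) z + S1 z, fun z => p.2 * lamR u (pt p.1) z + S2 z,
        by fun_prop, by fun_prop, ?_, ?_, ?_⟩
      · intro z hz
        rw [Complex.exp_add, Complex.exp_int_mul, exp_lamL hu (hne1 z hz), eS1 z hz,
          List.map_cons, Pl_cons]
      · intro z hz
        rw [Complex.exp_add, Complex.exp_int_mul, exp_lamR hu (hne2 z hz), eS2 z hz,
          List.map_cons, Pl_cons]
      · intro y hy
        have hye : y ≠ p.1 := by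
          rintro rfl
          exact hp.1 hy
        simp only [List.map_cons, List.sum_cons]
        rw [hS y hy]
        have := lam_diff hu (m := m) hye
        change lamL u (pt p.1) (pt y) = lamR u (pt p.1) (pt y) + _ at this
        rw [this]
        split_ifs <;> push_cast <;> ring
  refine ⟨(l.map fun p => (pt p.1, p.2)) ++ (l1 ++ l2), ?_, ?_⟩
  · intro p hp
    rcases List.mem_append.1 hp with hp | hp
    · obtain ⟨q, hq, rfl⟩ := List.mem_map.1 hp
      exact ⟨fun hh => (hl q hq).1 ⟨hh, (hl q hq).2⟩, (hl q hq).2⟩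
    · rcases List.mem_append.1 hp with hp | hp
      · exact ⟨(hl1 p hp).1, (hl1 p hp).2.1⟩
      · exact ⟨(hl2 p hp).1, (hl2 p hp).2.1⟩
  classical
  set T1 : ℂ → ℂ := fun z => L1 z - N2 z - S1 z - c0 * (2 * Real.pi * Complex.I) with hT1
  set T2 : ℂ → ℂ := fun z => L2 z - N1 z - S2 z with hT2
  have cT1 : ContinuousOn T1 Y1 := by fun_prop
  have cT2 : ContinuousOn T2 Y2 := by fun_prop
  have hT : ∀ z ∈ Y1 ∩ Y2, T1 z = T2 z := by
    intro z hz
    have hre : (z / u).re = m := le_antisymm hz.1.2.2 hz.2.2.2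
    have hz' := pt_eq z hre
    have hyZ : (z / u).im ∈ Z := by
      change pt _ ∈ Y ∩ R
      rw [hz']; exact ⟨hz.1.1, hz.1.2.1⟩
    have h1 := hS _ hyZ
    have h2 := hstep _ hyZ
    have h3 := hn z hz
    rw [hz'] at h1 h2
    rw [h2] at h3
    simp only [hD] at h3
    simp only [hT1, hT2]
    rw [h1]
    push_cast at h3 ⊢
    linear_combination h3
  refine ⟨fun z => if (z / u).re ≤ m then T1 z else T2 z, ?_, ?_⟩
  · have hYY : Y ∩ R = Y1 ∪ Y2 := by
      ext z
      simp only [hY1, hY2, mem_union, mem_inter_iff, mem_ofPred_eq]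
      have := le_total (z / u).re m
      tauto
    rw [hYY]
    refine ContinuousOn.union_of_isClosed (cT1.congr ?_) (cT2.congr ?_) clY1 clY2
    · intro z hz
      have := hz.2.2
      exact if_pos this
    · intro z hz
      simp only
      split_ifs with hm
      · exact hT z ⟨⟨hz.1, hz.2.1, hm⟩, hz⟩
      · rfl
  · intro z hz
    rw [Pl_append, Pl_append]
    simp only
    split_ifs with hm
    · have hz1 : z ∈ Y1 := ⟨hz.1, hz.2, hm⟩
      rw [e1 z hz1, ← eS1 z hz1]
      simp only [hT1]
      rw [Complex.exp_sub _ (c0 * (2 * Real.pi * Complex.I)), Complex.exp_sub _ (S1 z),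
        Complex.exp_int_mul_two_pi_mul_I]
      field_simp [Complex.exp_ne_zero]
    · have hz2 : z ∈ Y2 := ⟨hz.1, hz.2, (not_le.1 hm).le⟩
      rw [e2 z hz2, ← eS2 z hz2]
      simp only [hT2]
      rw [Complex.exp_sub _ (S2 z)]
      field_simp [Complex.exp_ne_zero]

lemma good_small {h : ℂ → ℂ} {Y : Set ℂ} (hY : IsCompact Y) (hc : ContinuousOn h Y)
    (h0 : ∀ z ∈ Y, h z ≠ 0) : ∃ δ > 0, ∀ R : Set ℂ,
      (∀ z ∈ R, ∀ w ∈ R, |z.re - w.re| ≤ δ ∧ |z.im - w.im| ≤ δ) → Good h Y R := by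
  obtain ⟨ε, hε, hmin⟩ : ∃ ε > 0, ∀ z ∈ Y, ε ≤ ‖h z‖ := by
    rcases Y.eq_empty_or_nonempty with rfl | hne
    · exact ⟨1, one_pos, by simp⟩
    · obtain ⟨x, hx, hmin⟩ := hY.exists_isMinOn hne hc.norm
      exact ⟨‖h x‖, norm_pos_iff.2 (h0 x hx), fun z hz => hmin hz⟩
  obtain ⟨δ, hδ, hu⟩ := Metric.uniformContinuousOn_iff.1
    (hY.uniformContinuousOn_of_continuous hc) ε hε
  refine ⟨δ / 3, by positivity, fun R hR => ⟨[], by simp, ?_⟩⟩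
  rcases (Y ∩ R).eq_empty_or_nonempty with he | ⟨w, hw⟩
  · exact ⟨fun _ => 0, by fun_prop, by simp [he]⟩
  have hslit : ∀ z ∈ Y ∩ R, h z / h w ∈ Complex.slitPlane := by
    intro z hz
    suffices H : ‖h z / h w - 1‖ < 1 by
      have := Complex.mem_slitPlane_of_norm_lt_one H
      rwa [add_sub_cancel] at this
    have hd : dist z w < δ := by
      have := hR z hz.2 w hw.2
      rw [dist_eq_norm]
      have h1 := Complex.norm_le_abs_re_add_abs_im (z - w)
      simp only [Complex.sub_re, Complex.sub_im] at h1
      linarith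
    have h2 := hu z hz.1 w hw.1 hd
    have hwp : 0 < ‖h w‖ := norm_pos_iff.2 (h0 w hw.1)
    rw [div_sub_one (h0 w hw.1), norm_div, div_lt_one hwp, ← dist_eq_norm]
    exact h2.trans_le (hmin w hw.1)
  refine ⟨fun z => Complex.log (h z / h w) + Complex.log (h w), ?_, ?_⟩
  · exact (((hc.mono inter_subset_left).div_const _).clog hslit).add continuousOn_const
  · intro z hz
    rw [Complex.exp_add, Complex.exp_log (div_ne_zero (h0 z hz.1) (h0 w hw.1)),
      Complex.exp_log (h0 w hw.1), Pl_nil]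
    field_simp [h0 w hw.1]

lemma good_all {h : ℂ → ℂ} {Y : Set ℂ} (hY : IsCompact Y) (hc : ContinuousOn h Y)
    (h0 : ∀ z ∈ Y, h z ≠ 0) : ∃ l : List (ℂ × ℤ), (∀ p ∈ l, p.1 ∉ Y) ∧
    ∃ L : ℂ → ℂ, ContinuousOn L Y ∧ ∀ z ∈ Y, h z = Complex.exp (L z) * Pl l z := by
  obtain ⟨δ, hδ, hsm⟩ := good_small hY hc h0
  have cvre1 : ∀ m : ℝ, Convex ℝ {z : ℂ | (z / 1).re ≤ m} := fun m => by
    simpa using convex_halfSpace_re_le m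
  have cvre2 : ∀ m : ℝ, Convex ℝ {z : ℂ | m ≤ (z / 1).re} := fun m => by
    simpa using convex_halfSpace_re_ge m
  have cvim1 : ∀ m : ℝ, Convex ℝ {z : ℂ | (z / Complex.I).re ≤ m} := fun m => by
    simpa using convex_halfSpace_im_le m
  have cvim2 : ∀ m : ℝ, Convex ℝ {z : ℂ | m ≤ (z / Complex.I).re} := fun m => by
    simpa using convex_halfSpace_im_ge m
  have hcl1 : ∀ (u : ℂ) (m : ℝ), IsClosed {z : ℂ | (z / u).re ≤ m} := fun u m =>
    isClosed_le (by fun_prop) (by fun_prop)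
  have hcl2 : ∀ (u : ℂ) (m : ℝ), IsClosed {z : ℂ | m ≤ (z / u).re} := fun u m =>
    isClosed_le (by fun_prop) (by fun_prop)
  have row : ∀ (n : ℕ) (a c : ℝ) (R : Set ℂ), IsClosed R → Convex ℝ R →
      (∀ z ∈ R, a ≤ z.re ∧ z.re ≤ a + n * δ ∧ c ≤ z.im ∧ z.im ≤ c + δ) → Good h Y R := by
    intro n
    induction n with
    | zero =>
      intro a c R hRc hRv hR
      apply hsm
      intro z hz w hw
      have h1 := hR z hz
      have h2 := hR w hw
      simp at h1 h2
      constructor <;> rw [abs_le] <;> constructor <;> linarith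
    | succ n ih =>
      intro a c R hRc hRv hR
      refine good_glue hY hRc hRv h0 one_ne_zero (a + n * δ) ?_ ?_
      · refine ih a c _ (hRc.inter (hcl1 _ _)) (hRv.inter (cvre1 _)) ?_
        rintro z ⟨hz, hz'⟩
        simp only [mem_ofPred_eq, div_one] at hz'
        have := hR z hz
        exact ⟨this.1, hz', this.2.2⟩
      · apply hsm
        rintro z ⟨hz, hz'⟩ w ⟨hw, hw'⟩
        simp only [mem_ofPred_eq, div_one] at hz' hw'
        have h1 := hR z hz
        have h2 := hR w hw
        push_cast at h1 h2
        constructor <;> rw [abs_le] <;> constructor <;> linarith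
  have full : ∀ (n N : ℕ) (a c : ℝ) (R : Set ℂ), IsClosed R → Convex ℝ R →
      (∀ z ∈ R, a ≤ z.re ∧ z.re ≤ a + N * δ ∧ c ≤ z.im ∧ z.im ≤ c + n * δ) → Good h Y R := by
    intro n N
    induction n with
    | zero =>
      intro a c R hRc hRv hR
      refine row N a c R hRc hRv fun z hz => ?_
      have h1 := hR z hz
      simp at h1
      refine ⟨h1.1, h1.2.1, h1.2.2.1, by linarith⟩
    | succ n ih =>
      intro a c R hRc hRv hR
      refine good_glue hY hRc hRv h0 Complex.I_ne_zero (c + n * δ) ?_ ?_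
      · refine ih a c _ (hRc.inter (hcl1 _ _)) (hRv.inter (cvim1 _)) ?_
        rintro z ⟨hz, hz'⟩
        simp at hz'
        have := hR z hz
        exact ⟨this.1, this.2.1, this.2.2.1, hz'⟩
      · refine row N a (c + n * δ) _ (hRc.inter (hcl2 _ _)) (hRv.inter (cvim2 _)) ?_
        rintro z ⟨hz, hz'⟩
        simp at hz'
        have h1 := hR z hz
        push_cast at h1
        exact ⟨h1.1, h1.2.1, hz', by linarith⟩
  obtain ⟨B, hB⟩ := hY.isBounded.exists_norm_le
  obtain ⟨N, hN⟩ := exists_nat_ge (2 * |B| / δ)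
  rw [div_le_iff₀ hδ] at hN
  obtain ⟨l, hl, L, cL, eL⟩ := full N N (-|B|) (-|B|) (Metric.closedBall 0 |B|)
    Metric.isClosed_closedBall (convex_closedBall _ _) (by
      intro z hz
      rw [mem_closedBall_zero_iff] at hz
      have h1 := abs_le.1 ((Complex.abs_re_le_norm z).trans hz)
      have h2 := abs_le.1 ((Complex.abs_im_le_norm z).trans hz)
      refine ⟨h1.1, by linarith, h2.1, by linarith⟩)
  have hYB : Y ∩ Metric.closedBall 0 |B| = Y := by
    apply inter_eq_left.2
    intro z hz
    rw [mem_closedBall_zero_iff]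
    exact (hB z hz).trans (le_abs_self B)
  rw [hYB] at cL eL
  exact ⟨l, fun p hp => (hl p hp).1, L, cL, eL⟩

/-- `g - c` has a continuous logarithm on `S` taking the same value at `x0` and `x1`. -/
def HL {E : Type*} [TopologicalSpace E] (S : Set E) (g : E → ℂ) (x0 x1 : E) (c : ℂ) : Prop :=
  ∃ L : E → ℂ, ContinuousOn L S ∧ (∀ z ∈ S, Complex.exp (L z) = g z - c) ∧ L x0 = L x1

lemma HL_near {E : Type*} [TopologicalSpace E] {S : Set E} {g : E → ℂ} {x0 x1 : E} {c c' : ℂ}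
    (hg : ContinuousOn g S) (hx : g x0 = g x1) (h : HL S g x0 x1 c)
    (hn : ∀ z ∈ S, ‖c - c'‖ < ‖g z - c‖) : HL S g x0 x1 c' := by
  obtain ⟨L, cL, eL, hL⟩ := h
  have hne : ∀ z ∈ S, g z - c ≠ 0 := fun z hz => by rw [← eL z hz]; exact Complex.exp_ne_zero _
  have hs : ∀ z ∈ S, 1 + (c - c') / (g z - c) ∈ Complex.slitPlane := by
    intro z hz
    apply Complex.mem_slitPlane_of_norm_lt_one
    rw [norm_div, div_lt_one (norm_pos_iff.2 (hne z hz))]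
    exact hn z hz
  refine ⟨fun z => Complex.log (1 + (c - c') / (g z - c)) + L z, ?_, ?_, ?_⟩
  · refine ContinuousOn.add (ContinuousOn.clog ?_ hs) cL
    exact continuousOn_const.add (continuousOn_const.div (hg.sub continuousOn_const) hne)
  · intro z hz
    rw [Complex.exp_add, eL z hz, Complex.exp_log (Complex.slitPlane_ne_zero (hs z hz))]
    field_simp [hne z hz]
    ring
  · simp only [hx, hL]

lemma HL_far {E : Type*} [TopologicalSpace E] {S : Set E} {g : E → ℂ} {x0 x1 : E} {c : ℂ}
    (hg : ContinuousOn g S) (hx : g x0 = g x1) (hc : c ≠ 0)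
    (hn : ∀ z ∈ S, ‖g z‖ < ‖c‖) : HL S g x0 x1 c := by
  have hs : ∀ z ∈ S, 1 + -(g z / c) ∈ Complex.slitPlane := by
    intro z hz
    apply Complex.mem_slitPlane_of_norm_lt_one
    rw [norm_neg, norm_div, div_lt_one (norm_pos_iff.2 hc)]
    exact hn z hz
  refine ⟨fun z => Complex.log (1 + -(g z / c)) + Complex.log (-c), ?_, ?_, ?_⟩
  · refine ContinuousOn.add (ContinuousOn.clog ?_ hs) continuousOn_const
    exact continuousOn_const.add (hg.div_const c).neg
  · intro z hz
    rw [Complex.exp_add, Complex.exp_log (Complex.slitPlane_ne_zero (hs z hz)),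
      Complex.exp_log (neg_ne_zero.2 hc)]
    field_simp
    ring
  · simp only [hx]

lemma Pl_HL {E : Type*} [TopologicalSpace E] {S : Set E} {g : E → ℂ} {x0 x1 : E}
    (l : List (ℂ × ℤ)) (h : ∀ p ∈ l, HL S g x0 x1 p.1) :
    ∃ L : E → ℂ, ContinuousOn L S ∧ (∀ z ∈ S, Complex.exp (L z) = Pl l (g z)) ∧ L x0 = L x1 := by
  induction l with
  | nil => exact ⟨fun _ => 0, by fun_prop, by simp [Pl_nil], rfl⟩
  | cons p l ih =>
    obtain ⟨L, hL, eL, xL⟩ := ih (fun q hq => h q (List.mem_cons_of_mem _ hq))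
    obtain ⟨M, hM, eM, xM⟩ := h p List.mem_cons_self
    refine ⟨fun z => p.2 * M z + L z, by fun_prop, fun z hz => ?_, by simp only [xL, xM]⟩
    rw [Complex.exp_add, Complex.exp_int_mul, eM z hz, eL z hz, Pl_cons]

/-- openness of the set of good points -/
lemma HL_isOpen {E : Type*} [TopologicalSpace E] {S : Set E} (hS : IsCompact S) {g : E → ℂ}
    {x0 x1 : E} (hg : ContinuousOn g S) (hx : g x0 = g x1) : IsOpen {c | HL S g x0 x1 c} := by
  rw [Metric.isOpen_iff]
  intro c hc
  have hcl : IsClosed (g '' S) := (hS.image_of_continuousOn hg).isClosed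
  have hnot : c ∈ (g '' S)ᶜ := by
    rintro ⟨z, hz, rfl⟩
    obtain ⟨L, -, eL, -⟩ := hc
    have := eL z hz
    rw [sub_self] at this
    exact Complex.exp_ne_zero _ this
  obtain ⟨r, hr, hb⟩ := Metric.isOpen_iff.1 hcl.isOpen_compl c hnot
  refine ⟨r, hr, fun c' hc' => HL_near hg hx hc fun z hz => ?_⟩
  have h1 : ¬ dist (g z) c < r := fun h => hb (Metric.mem_ball.2 h) ⟨z, hz, rfl⟩
  rw [Metric.mem_ball, dist_comm, dist_eq_norm] at hc'
  rw [dist_eq_norm] at h1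
  linarith

lemma logSet_of_compl {X : Set ℂ} (hX : IsCompact X) (hc : IsPreconnected Xᶜ) : LogSet X := by
  have key : Xᶜ ⊆ {c | HL X (fun z => z) 0 0 c} := by
    refine hc.subset_of_closure_inter_subset (HL_isOpen hX continuousOn_id rfl) ?_ ?_
    · obtain ⟨B, hB⟩ := hX.isBounded.exists_norm_le
      have hlt : ∀ z ∈ X, ‖z‖ < ‖((|B| + 1 : ℝ) : ℂ)‖ := by
        intro z hz
        rw [Complex.norm_real, Real.norm_eq_abs, abs_of_pos (by positivity)]
        linarith [hB z hz, le_abs_self B]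
      refine ⟨((|B| + 1 : ℝ) : ℂ), ?_, HL_far continuousOn_id rfl ?_ hlt⟩
      · intro h
        exact lt_irrefl _ (hlt _ h)
      · have : |B| + 1 ≠ 0 := by positivity
        exact_mod_cast this
    · rintro c ⟨hc1, hc2⟩
      obtain ⟨r, hr, hb⟩ := Metric.isOpen_iff.1 hX.isClosed.isOpen_compl c hc2
      obtain ⟨c', hc', hd⟩ := Metric.mem_closure_iff.1 hc1 (r / 2) (by positivity)
      refine HL_near continuousOn_id rfl hc' fun z hz => ?_
      have h1 : ¬ dist z c < r := fun h => hb (Metric.mem_ball.2 h) hz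
      have h2 := dist_triangle z c' c
      rw [dist_comm c' c] at h2
      rw [← dist_eq_norm, ← dist_eq_norm, dist_comm c' c]
      linarith
  intro h ch h0
  obtain ⟨l, hl, L, cL, eL⟩ := good_all hX ch h0
  obtain ⟨M, cM, eM, -⟩ := Pl_HL l (fun p hp => key (hl p hp))
  refine ⟨fun z => L z + M z, by fun_prop, fun z hz => ?_⟩
  rw [Complex.exp_add, eM z hz, eL z hz]

/-- A minimal return loop of a translation arc has nonzero winding around a fixed point. -/
lemma exists_fixed_winding {H : ℝ × ℂ → ℂ} (hH : Continuous H)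
    (hinj : ∀ t, Function.Injective fun z => H (t, z))
    (h0 : ∀ z, H (0, z) = z) {β : ℝ → ℂ} (hβ : Continuous β) (hf : ∀ u, H (1, β u) = β (u + 1))
    {r0 r1 : ℝ} (hr : r0 + 1 < r1) (hclose : β r0 = β r1)
    (hne : ∀ u v, r0 ≤ u → u < v → v ≤ r1 → v - u < r1 - r0 → β u ≠ β v)
    (hfree : ∀ u v, 0 < v - u → v - u ≤ 1 → β u ≠ β v) :
    ∃ p, H (1, p) = p ∧ ¬ HL (Icc r0 r1) β r0 r1 p := by
  by_contra hcon
  push Not at hcon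
  set Y : Set ℂ := {q | HL (Icc r0 r1) β r0 r1 q}ᶜ with hYd
  have hcl : IsClosed Y := (HL_isOpen isCompact_Icc hβ.continuousOn hclose).isClosed_compl
  have hYc : IsCompact Y := by
    refine Metric.isCompact_of_isClosed_isBounded hcl ?_
    obtain ⟨B, hB⟩ := (isCompact_Icc.image (s := Icc r0 r1) hβ).isBounded.exists_norm_le
    refine (Metric.isBounded_closedBall (x := (0 : ℂ)) (r := |B|)).subset ?_
    intro q hq
    by_contra hq'
    rw [mem_closedBall_zero_iff, not_le] at hq'
    refine hq (HL_far hβ.continuousOn hclose ?_ ?_)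
    · rintro rfl
      rw [norm_zero] at hq'
      exact absurd (abs_nonneg B) (not_le.2 hq')
    · intro z hz
      exact ((hB _ ⟨z, hz, rfl⟩).trans (le_abs_self B)).trans_lt hq'
  have hβY : ∀ u ∈ Icc r0 r1, β u ∈ Y := by
    rintro u hu ⟨L, -, eL, -⟩
    have := eL u hu
    rw [sub_self] at this
    exact Complex.exp_ne_zero _ this
  obtain ⟨l, hl, L, cL, eL⟩ := good_all (h := fun z => H (1, z) - z) hYc (by fun_prop) (by
    intro z hz h
    exact hz (hcon z (sub_eq_zero.1 h)))
  obtain ⟨M, cM, eM, xM⟩ := Pl_HL (S := Icc r0 r1) (g := β) (x0 := r0) (x1 := r1) l (fun p hp => by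
    have := hl p hp
    rw [hYd, mem_compl_iff, not_not] at this
    exact this)
  refine index_ne hH hinj h0 hβ hf hr hclose hne hfree (V := fun u => L (β u) + M u) ?_ ?_ ?_
  · exact (cL.comp hβ.continuousOn hβY).add cM
  · intro u hu
    rw [Complex.exp_add, eM u hu, ← eL _ (hβY u hu), hf]
  · simp only [hclose, xM]

/-- returning pairs -/
def Bset (β : ℝ → ℂ) (n : ℕ) : Set (ℝ × ℝ) :=
  {p | 0 ≤ p.1 ∧ p.1 + 1 ≤ p.2 ∧ p.2 ≤ n + 1 ∧ β p.1 = β p.2}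

/-- cells containing returning pairs -/
def cells (β : ℝ → ℂ) (n : ℕ) (c : ℝ → ℕ) : Set (ℕ × ℕ) :=
  (fun p : ℝ × ℝ => (c p.1, c p.2)) '' Bset β n

structure Core (H : ℝ × ℂ → ℂ) (β : ℝ → ℂ) (U X : Set ℂ) (n : ℕ) (c : ℝ → ℕ) : Prop where
  hH : Continuous H
  inj : ∀ t, Function.Injective fun z => H (t, z)
  h0 : ∀ z, H (0, z) = z
  hβ : Continuous β
  step : ∀ u, H (1, β u) = β (u + 1)
  free : ∀ u v, 0 < v - u → v - u ≤ 1 → β u ≠ β v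
  hn : 1 ≤ n
  per : β (1 / 2 + n) = β (1 / 2)
  Upre : IsPreconnected U
  arcU : ∀ u ∈ Icc (0 : ℝ) 1, β u ∈ U
  orbU : ∀ i : ℕ, β (1 / 2 + i) ∈ U
  UX : U ⊆ X
  fUX : ∀ z ∈ U, H (1, z) ∈ X
  logX : LogSet X
  nofix : ∀ z ∈ X, H (1, z) ≠ z
  fin : (cells β n c).Finite
  link : ∀ p ∈ Bset β n, ∀ q ∈ Bset β n, c p.1 = c q.1 → c p.2 = c q.2 →
    ∃ D : Set ℂ, LogSet D ∧ (∀ z ∈ D, H (1, z) ≠ z) ∧ (∀ u ∈ uIcc p.1 q.1, β u ∈ D) ∧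
      ∀ v ∈ uIcc p.2 q.2, β v ∈ D

lemma Bset_compact {β : ℝ → ℂ} (hβ : Continuous β) (n : ℕ) : IsCompact (Bset β n) := by
  have hcl : IsClosed (Bset β n) := by
    have h1 : IsClosed {p : ℝ × ℝ | 0 ≤ p.1} := isClosed_le (by fun_prop) (by fun_prop)
    have h2 : IsClosed {p : ℝ × ℝ | p.1 + 1 ≤ p.2} := isClosed_le (by fun_prop) (by fun_prop)
    have h3 : IsClosed {p : ℝ × ℝ | p.2 ≤ n + 1} := isClosed_le (by fun_prop) (by fun_prop)
    have h4 : IsClosed {p : ℝ × ℝ | β p.1 = β p.2} := isClosed_eq (by fun_prop) (by fun_prop)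
    exact h1.inter (h2.inter (h3.inter h4))
  refine (isCompact_Icc (a := ((0 : ℝ), (0 : ℝ))) (b := ((n + 1 : ℝ), (n + 1 : ℝ)))).of_isClosed_subset
    hcl ?_
  rintro ⟨u, v⟩ ⟨h1, h2, h3, -⟩
  simp only at h1 h2 h3
  simp only [mem_Icc, Prod.mk_le_mk]
  refine ⟨⟨?_, ?_⟩, ?_, ?_⟩ <;> linarith

lemma logSet_image {D : Set ℂ} (hD : LogSet D) {ℓ : ℂ → ℂ} (hℓ : ContinuousOn ℓ D) {p : ℂ}
    (he : ∀ z ∈ D, Complex.exp (ℓ z) = z - p) : LogSet (ℓ '' D) := by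
  intro h ch h0
  obtain ⟨L, cL, eL⟩ := hD (h ∘ ℓ) (ch.comp hℓ (mapsTo_image ℓ D))
    (fun z hz => h0 _ (mem_image_of_mem _ hz))
  have hb : ∀ z ∈ D, p + Complex.exp (ℓ z) = z := fun z hz => by rw [he z hz]; ring
  refine ⟨fun ζ => L (p + Complex.exp ζ), ?_, ?_⟩
  · refine cL.comp (by fun_prop) ?_
    rintro _ ⟨z, hz, rfl⟩
    simp only [hb z hz]; exact hz
  · rintro _ ⟨z, hz, rfl⟩
    simp only
    rw [hb z hz, eL z hz]; rfl

/-- The lifted isotopy. -/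
lemma exists_lift {H : ℝ × ℂ → ℂ} (hH : Continuous H)
    (hinj : ∀ t, Function.Injective fun z => H (t, z)) (h0 : ∀ z, H (0, z) = z) {p : ℂ}
    (hp : H (1, p) = p) : ∃ G : ℝ × ℂ → ℂ, Continuous G ∧
      (∀ t, Function.Injective fun z => G (t, z)) ∧ (∀ z, G (0, z) = z) ∧
      ∀ ζ, Complex.exp (G (1, ζ)) = H (1, p + Complex.exp ζ) - p := by
  obtain ⟨G', cG', eG'⟩ := logSet_convex (convex_univ (𝕜 := ℝ) (E := ℝ × ℂ))
    (fun x => H (x.1, p + Complex.exp x.2) - H (x.1, p)) (by fun_prop) (by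
      rintro ⟨t, ζ⟩ -
      rw [sub_ne_zero]
      intro h
      have := hinj t h
      simp [Complex.exp_ne_zero] at this)
  rw [continuousOn_univ] at cG'
  have hc0 : ∀ ζ, G' (0, ζ) - ζ = G' (0, 0) := by
    intro ζ
    have := log_sub_const (E := ℂ) isPreconnected_univ (a := fun ζ => G' (0, ζ)) (b := fun ζ => ζ)
      (by fun_prop) (by fun_prop) (by
        intro x _
        rw [eG' (0, x) trivial, h0, h0]; ring) (mem_univ ζ) (mem_univ 0)
    simpa using this
  have hc1 : Complex.exp (G' (0, 0)) = 1 := by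
    rw [eG' (0, 0) trivial, h0, h0]; simp
  have eG : ∀ t ζ, Complex.exp (G' (t, ζ) - G' (0, 0)) = H (t, p + Complex.exp ζ) - H (t, p) := by
    intro t ζ
    rw [Complex.exp_sub, hc1, div_one, eG' (t, ζ) trivial]
  have equi : ∀ (k : ℤ) t ζ, G' (t, ζ + k * (2 * Real.pi * Complex.I)) =
      G' (t, ζ) + k * (2 * Real.pi * Complex.I) := by
    intro k t ζ
    have := log_sub_const (E := ℝ × ℂ) isPreconnected_univ
      (a := fun x => G' (x.1, x.2 + k * (2 * Real.pi * Complex.I))) (b := fun x => G' x)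
      (by fun_prop) (by fun_prop) (by
        intro x _
        rw [eG' _ trivial, eG' _ trivial]
        simp only [Complex.exp_add, Complex.exp_int_mul_two_pi_mul_I, mul_one])
      (mem_univ (t, ζ)) (mem_univ (0, 0))
    simp only at this
    have h1 := hc0 (0 + k * (2 * Real.pi * Complex.I))
    linear_combination this + h1
  refine ⟨fun x => G' x - G' (0, 0), by fun_prop, ?_, ?_, ?_⟩
  · intro t ζ ζ' h
    simp only at h
    have h1 := eG t ζ
    rw [h, eG t ζ', sub_left_inj] at h1
    have h2 := hinj t h1
    rw [add_right_inj] at h2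
    obtain ⟨k, hk⟩ := Complex.exp_eq_exp_iff_exists_int.1 h2
    rw [hk, equi, sub_left_inj, left_eq_add] at h
    rw [hk, h, add_zero]
  · intro z
    have := hc0 z
    simp only
    linear_combination this
  · intro ζ
    rw [eG, hp]

lemma Core.lift {H : ℝ × ℂ → ℂ} {β : ℝ → ℂ} {U X : Set ℂ} {n : ℕ} {c : ℝ → ℕ}
    (C : Core H β U X n c) : ∃ H' β' U' X', Core H' β' U' X' n c ∧
      (cells β' n c).ncard < (cells β n c).ncard := by
  obtain ⟨hH, inj, h0, hβ, step, free, hn, per, Upre, arcU, orbU, UX, fUX, logX, nofix, fin, link⟩ := C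
  have hn' : (1 : ℝ) ≤ n := by exact_mod_cast hn
  -- the shortest return
  obtain ⟨⟨r0, r1⟩, hrB, hmin⟩ := (Bset_compact hβ n).exists_isMinOn
    (f := fun p : ℝ × ℝ => p.2 - p.1)
    ⟨(1 / 2, 1 / 2 + n), by norm_num, by simp only; linarith, by simp only; linarith, per.symm⟩
    (by fun_prop)
  obtain ⟨hr0, hr1, hr2, hr3⟩ := hrB
  simp only at hr0 hr1 hr2 hr3
  have hrr : r0 + 1 < r1 := by
    rcases hr1.lt_or_eq with h | h
    · exact h
    · exact absurd hr3 (free r0 r1 (by linarith) (by linarith))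
  obtain ⟨p, hpf, hpw⟩ := exists_fixed_winding hH inj h0 hβ step hrr hr3 (by
    intro u v hu huv hv hlt heq
    by_cases h1 : v - u ≤ 1
    · exact free u v (by linarith) h1 heq
    · have : (u, v) ∈ Bset β n := ⟨by simp only; linarith, by simp only; linarith,
        by simp only; linarith, heq⟩
      have := hmin this
      simp only [mem_ofPred_eq] at this
      linarith) free
  have hβp : ∀ u, β u - p ≠ 0 := by
    intro u h
    rw [sub_eq_zero] at h
    have := step u
    rw [h, hpf, ← h] at this
    exact free u (u + 1) (by linarith) (by linarith) this
  have hpX : p ∉ X := fun h => nofix p h hpf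
  obtain ⟨ℓ, cℓ, eℓ⟩ := logX (fun z => z - p) (by fun_prop) (by
    intro z hz h
    rw [sub_eq_zero] at h
    exact hpX (h ▸ hz))
  obtain ⟨G, cG, injG, G0, eG⟩ := exists_lift hH inj h0 hpf
  have back : ∀ z ∈ X, p + Complex.exp (ℓ z) = z := fun z hz => by rw [eℓ z hz]; ring
  have hβ0U : β 0 ∈ U := arcU 0 (by simp)
  obtain ⟨k, hk⟩ : ∃ k : ℤ, ℓ (H (1, β 0)) = G (1, ℓ (β 0)) + k * (2 * Real.pi * Complex.I) := by
    apply Complex.exp_eq_exp_iff_exists_int.1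
    rw [eℓ _ (fUX _ hβ0U), eG, back _ (UX hβ0U)]
  set H' : ℝ × ℂ → ℂ := fun x => G x + x.1 * (k * (2 * Real.pi * Complex.I)) with hH'
  have eH' : ∀ ζ, Complex.exp (H' (1, ζ)) = H (1, p + Complex.exp ζ) - p := by
    intro ζ
    simp only [hH', Complex.ofReal_one, one_mul]
    rw [Complex.exp_add, Complex.exp_int_mul_two_pi_mul_I, mul_one, eG]
  have cH' : Continuous H' := by fun_prop
  have hbase : H' (1, ℓ (β 0)) = ℓ (H (1, β 0)) := by
    rw [hk]; simp [hH']
  have semi : ∀ z ∈ U, H' (1, ℓ z) = ℓ (H (1, z)) := by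
    intro z hz
    refine log_eq_of_eq Upre (a := fun z => H' (1, ℓ z)) (b := fun z => ℓ (H (1, z))) ?_ ?_ ?_
      hβ0U hz hbase
    · exact cH'.comp_continuousOn (continuousOn_const.prodMk (cℓ.mono UX))
    · exact cℓ.comp (by fun_prop) fUX
    · intro x hx
      rw [eH', back x (UX hx), eℓ _ (fUX x hx)]
  -- lift of the orbit line
  obtain ⟨b', cb', eb'⟩ := logSet_convex (convex_univ (𝕜 := ℝ) (E := ℝ))
    (fun u => β u - p) (by fun_prop) (fun u _ => hβp u)
  rw [continuousOn_univ] at cb'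
  obtain ⟨β', cβ', eβ', β'0⟩ : ∃ β' : ℝ → ℂ, Continuous β' ∧
      (∀ u, Complex.exp (β' u) = β u - p) ∧ β' 0 = ℓ (β 0) := by
    refine ⟨fun u => b' u + (ℓ (β 0) - b' 0), by fun_prop, ?_, by ring⟩
    intro u
    rw [Complex.exp_add, Complex.exp_sub, eb' u trivial, eb' 0 trivial, eℓ _ (UX hβ0U),
      div_self (hβp 0), mul_one]
  have β'arc : ∀ u ∈ Icc (0 : ℝ) 1, β' u = ℓ (β u) := by
    intro u hu
    refine log_eq_of_eq (convex_Icc (0 : ℝ) 1).isPreconnected (a := β') (b := fun u => ℓ (β u))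
      cβ'.continuousOn (cℓ.comp hβ.continuousOn fun u hu => UX (arcU u hu)) ?_
      (left_mem_Icc.2 zero_le_one) hu β'0
    intro x hx
    rw [eβ', eℓ _ (UX (arcU x hx))]
  have β'step : ∀ u, H' (1, β' u) = β' (u + 1) := by
    intro u
    refine log_eq_of_eq (isPreconnected_univ) (a := fun u => H' (1, β' u))
      (b := fun u => β' (u + 1)) (by fun_prop) (by fun_prop) ?_ (mem_univ 0) (mem_univ u) ?_
    · intro x _
      rw [eH', eβ', eβ', ← step]
      congr 3
      ring
    · rw [β'0, hbase, step, β'arc (0 + 1) (by simp)]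
  have β'orb : ∀ i : ℕ, β' (1 / 2 + i) = ℓ (β (1 / 2 + i)) := by
    intro i
    induction i with
    | zero => exact β'arc _ (by constructor <;> norm_num)
    | succ i ih =>
      have : (1 / 2 + ((i + 1 : ℕ) : ℝ)) = 1 / 2 + i + 1 := by push_cast; ring
      rw [this, ← β'step, ih, semi _ (orbU i), step]
  have β'inj : ∀ u v, β' u = β' v → β u = β v := by
    intro u v h
    have := eβ' u
    rw [h, eβ', sub_left_inj] at this
    exact this.symm
  have BB : Bset β' n ⊆ Bset β n := fun x hx => ⟨hx.1, hx.2.1, hx.2.2.1, β'inj _ _ hx.2.2.2⟩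
  have cellsub : cells β' n c ⊆ cells β n c := image_mono BB
  -- no fixed points transport
  have nofix' : ∀ (D : Set ℂ) (m : ℂ → ℂ), (∀ z ∈ D, Complex.exp (m z) = z - p) →
      (∀ z ∈ D, H (1, z) ≠ z) → ∀ ζ ∈ m '' D, H' (1, ζ) ≠ ζ := by
    rintro D m hm hD _ ⟨z, hz, rfl⟩ h
    have h1 := eH' (m z)
    rw [h, hm z hz] at h1
    have h2 : p + (z - p) = z := by ring
    rw [h2, sub_left_inj] at h1
    exact hD z hz h1.symm
  -- link transport
  have link' : ∀ x ∈ Bset β' n, ∀ y ∈ Bset β n, c x.1 = c y.1 → c x.2 = c y.2 →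
      ∃ D : Set ℂ, LogSet D ∧ (∀ z ∈ D, H' (1, z) ≠ z) ∧ (∀ u ∈ uIcc x.1 y.1, β' u ∈ D) ∧
      (∀ v ∈ uIcc x.2 y.2, β' v ∈ D) ∧ β' y.1 = β' y.2 := by
    intro x hx y hy h1 h2
    obtain ⟨D, logD, nfD, D1, D2⟩ := link x (BB hx) y hy h1 h2
    obtain ⟨m', cm', em'⟩ := logD (fun z => z - p) (by fun_prop) (by
      intro z hz h
      rw [sub_eq_zero] at h
      exact nfD z hz (by rw [h]; exact hpf))
    have hx1D := D1 x.1 left_mem_uIcc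
    obtain ⟨m, cm, em, m0⟩ : ∃ m : ℂ → ℂ, ContinuousOn m D ∧
        (∀ z ∈ D, Complex.exp (m z) = z - p) ∧ m (β x.1) = β' x.1 := by
      refine ⟨fun z => m' z + (β' x.1 - m' (β x.1)), by fun_prop, ?_, by ring⟩
      intro z hz
      rw [Complex.exp_add, Complex.exp_sub, em' z hz, em' _ hx1D, eβ',
        div_self (hβp _), mul_one]
    have E1 : ∀ u ∈ uIcc x.1 y.1, β' u = m (β u) := by
      intro u hu
      refine log_eq_of_eq (convex_uIcc x.1 y.1).isPreconnected (a := β') (b := fun u => m (β u))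
        cβ'.continuousOn (cm.comp hβ.continuousOn D1) ?_ left_mem_uIcc hu m0.symm
      intro x hx
      rw [eβ', em _ (D1 x hx)]
    have hx2 : β' x.2 = m (β x.2) := by
      rw [← hx.2.2.2, ← (BB hx).2.2.2, m0]
    have E2 : ∀ u ∈ uIcc x.2 y.2, β' u = m (β u) := by
      intro u hu
      refine log_eq_of_eq (convex_uIcc x.2 y.2).isPreconnected (a := β') (b := fun u => m (β u))
        cβ'.continuousOn (cm.comp hβ.continuousOn D2) ?_ left_mem_uIcc hu hx2
      intro x hx
      rw [eβ', em _ (D2 x hx)]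
    refine ⟨m '' D, logSet_image logD cm em, nofix' D m em nfD, ?_, ?_, ?_⟩
    · intro u hu
      rw [E1 u hu]; exact mem_image_of_mem _ (D1 u hu)
    · intro u hu
      rw [E2 u hu]; exact mem_image_of_mem _ (D2 u hu)
    · rw [E1 _ right_mem_uIcc, E2 _ right_mem_uIcc, hy.2.2.2]
  refine ⟨H', β', ℓ '' U, ℓ '' X, ⟨cH', ?_, ?_, cβ', β'step, ?_, hn, ?_, ?_, ?_, ?_, ?_, ?_, ?_, ?_,
    fin.subset cellsub, ?_⟩, ?_⟩
  · intro t z w h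
    exact injG t (by simpa [hH'] using h)
  · intro z
    simp [hH', G0]
  · intro u v h1 h2 h
    exact free u v h1 h2 (β'inj u v h)
  · rw [β'orb, per, β'arc _ (by constructor <;> norm_num)]
  · exact Upre.image _ (cℓ.mono UX)
  · intro u hu
    rw [β'arc u hu]; exact mem_image_of_mem _ (arcU u hu)
  · intro i
    rw [β'orb]; exact mem_image_of_mem _ (orbU i)
  · exact image_mono UX
  · rintro _ ⟨z, hz, rfl⟩
    rw [semi z hz]; exact mem_image_of_mem _ (fUX z hz)
  · exact logSet_image logX cℓ eℓ
  · exact nofix' X ℓ eℓ nofix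
  · intro x hx y hy h1 h2
    obtain ⟨D, a, b, d, e, -⟩ := link' x hx y (BB hy) h1 h2
    exact ⟨D, a, b, d, e⟩
  · refine ncard_lt_ncard (ssubset_iff_subset_ne.2 ⟨cellsub, fun heq => ?_⟩) fin
    have hm : (c r0, c r1) ∈ cells β' n c := by
      rw [heq]
      exact ⟨(r0, r1), ⟨hr0, hr1, hr2, hr3⟩, rfl⟩
    obtain ⟨x, hx, hxc⟩ := hm
    simp only [Prod.mk.injEq] at hxc
    obtain ⟨-, -, -, -, -, hh⟩ := link' x hx (r0, r1) ⟨hr0, hr1, hr2, hr3⟩ hxc.1 hxc.2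
    exact hpw ⟨β', cβ'.continuousOn, fun u _ => eβ' u, hh⟩

lemma Core.absurd (N : ℕ) : ∀ {H : ℝ × ℂ → ℂ} {β : ℝ → ℂ} {U X : Set ℂ} {n : ℕ} {c : ℝ → ℕ},
    Core H β U X n c → (cells β n c).ncard ≤ N → False := by
  induction N with
  | zero =>
    intro H β U X n c C h
    obtain ⟨_, _, _, _, -, hlt⟩ := C.lift
    omega
  | succ N ih =>
    intro H β U X n c C h
    obtain ⟨_, _, _, _, C', hlt⟩ := C.lift
    exact ih C' (by omega)

noncomputable def bump (a w : ℂ) (δ : ℝ) (z : ℂ) : ℂ :=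
  z + ((max 0 (1 - ‖z - a‖ / δ) : ℝ) : ℂ) * w

lemma exists_bump (a w : ℂ) (δ : ℝ) (h : ‖w‖ < δ) : ∃ φ : ℂ ≃ₜ ℂ, ∀ z, φ z = bump a w δ z := by
  have hδ : 0 < δ := (norm_nonneg w).trans_lt h
  have hc : ‖w‖ / δ < 1 := (div_lt_one hδ).2 h
  have hA : ApproximatesLinearOn (bump a w δ)
      ((ContinuousLinearEquiv.refl ℝ ℂ : ℂ ≃L[ℝ] ℂ) : ℂ →L[ℝ] ℂ) univ (‖w‖₊ / δ.toNNReal) := by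
    intro x _ y _
    have e : bump a w δ x - bump a w δ y - (x - y) =
        ((max 0 (1 - ‖x - a‖ / δ) - max 0 (1 - ‖y - a‖ / δ) : ℝ) : ℂ) * w := by
      simp only [bump]; push_cast; ring
    change ‖bump a w δ x - bump a w δ y - (x - y)‖ ≤ _
    rw [e, norm_mul, Complex.norm_real, Real.norm_eq_abs]
    have h1 : |max 0 (1 - ‖x - a‖ / δ) - max 0 (1 - ‖y - a‖ / δ)| ≤ ‖x - y‖ / δ := by
      refine (abs_max_sub_max_le_max _ _ _ _).trans ?_
      rw [sub_self, abs_zero]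
      refine max_le (by positivity) ?_
      have : (1 - ‖x - a‖ / δ) - (1 - ‖y - a‖ / δ) = (‖y - a‖ - ‖x - a‖) / δ := by ring
      rw [this, abs_div, abs_of_pos hδ]
      gcongr
      refine (abs_norm_sub_norm_le _ _).trans ?_
      rw [sub_sub_sub_cancel_right, norm_sub_rev]
    have h2 : ((‖w‖₊ / δ.toNNReal : NNReal) : ℝ) = ‖w‖ / δ := by
      simp [hδ.le]
    rw [h2]
    calc _ ≤ ‖x - y‖ / δ * ‖w‖ := by gcongr
      _ = _ := by ring
  refine ⟨hA.toHomeomorph _ (Or.inr ?_), fun z => rfl⟩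
  have h1 : ‖(((ContinuousLinearEquiv.refl ℝ ℂ).symm : ℂ ≃L[ℝ] ℂ) : ℂ →L[ℝ] ℂ)‖₊ = 1 := by
    apply NNReal.eq
    change ‖ContinuousLinearMap.id ℝ ℂ‖ = 1
    exact ContinuousLinearMap.norm_id
  rw [h1, inv_one, ← NNReal.coe_lt_coe]
  simpa [hδ.le] using hc

lemma bump_center {a w : ℂ} {δ : ℝ} : bump a w δ a = a + w := by simp [bump]

lemma bump_out {a w z : ℂ} {δ : ℝ} (hδ : 0 < δ) (hz : z ∉ Metric.ball a δ) : bump a w δ z = z := by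
  have : 1 - ‖z - a‖ / δ ≤ 0 := by
    rw [Metric.mem_ball, not_lt, dist_eq_norm] at hz
    rw [sub_nonpos, one_le_div hδ]; exact hz
  simp [bump, max_eq_left this]

lemma bump_mem_ball {a w z : ℂ} {δ : ℝ} (h : ‖w‖ < δ) :
    bump a w δ z ∈ Metric.ball a δ ↔ z ∈ Metric.ball a δ := by
  have hδ : 0 < δ := (norm_nonneg w).trans_lt h
  obtain ⟨φ, hφ⟩ := exists_bump a w δ h
  constructor
  · intro h1; by_contra h2
    rw [bump_out hδ h2] at h1; exact h2 h1
  · intro h1; by_contra h2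
    have h3 := bump_out (w := w) hδ h2
    rw [← hφ, ← hφ] at h3
    have h4 := φ.injective h3
    rw [hφ] at h4
    rw [h4] at h2; exact h2 h1

lemma bump_mem {a w z : ℂ} {δ : ℝ} {U : Set ℂ} (h : ‖w‖ < δ) (hU : Metric.ball a δ ⊆ U) :
    bump a w δ z ∈ U ↔ z ∈ U := by
  have hδ : 0 < δ := (norm_nonneg w).trans_lt h
  by_cases hz : z ∈ Metric.ball a δ
  · exact ⟨fun _ => hU hz, fun _ => hU ((bump_mem_ball h).2 hz)⟩
  · rw [bump_out hδ hz]

lemma LogSet.image {X : Set ℂ} (hX : LogSet X) (θ : ℂ ≃ₜ ℂ) : LogSet (θ '' X) := by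
  intro h hc h0
  obtain ⟨L, hL, hL'⟩ := hX (h ∘ θ)
    (hc.comp θ.continuous.continuousOn (mapsTo_image _ _)) (fun z hz => h0 _ (mem_image_of_mem _ hz))
  refine ⟨L ∘ θ.symm, hL.comp θ.symm.continuous.continuousOn ?_, ?_⟩
  · rintro _ ⟨z, hz, rfl⟩; simpa using hz
  · rintro _ ⟨z, hz, rfl⟩; simpa using hL' z hz

/-- Moving two points of a connected open set close together. -/
lemma exists_theta {U : Set ℂ} (hU : IsOpen U) (hc : IsPreconnected U) {y0 y1 : ℂ}
    (h0 : y0 ∈ U) (h1 : y1 ∈ U) : ∃ θ : ℂ ≃ₜ ℂ, (∀ z, θ z ∈ U ↔ z ∈ U) ∧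
      ∃ ρ : ℝ, 0 < ρ ∧ Metric.closedBall (θ y0) ρ ⊆ U ∧ θ y1 ∈ Metric.ball (θ y0) ρ := by
  let u : Set ℂ := {y | ∃ θ : ℂ ≃ₜ ℂ, (∀ z, θ z ∈ U ↔ z ∈ U) ∧
      ∃ ρ : ℝ, 0 < ρ ∧ Metric.closedBall (θ y0) ρ ⊆ U ∧ θ y ∈ Metric.ball (θ y0) ρ}
  have hy0 : y0 ∈ u := by
    obtain ⟨r, hr, hr'⟩ := Metric.nhds_basis_closedBall.mem_iff.1 (hU.mem_nhds h0)
    exact ⟨Homeomorph.refl _, fun z => Iff.rfl, r, hr, hr', Metric.mem_ball_self hr⟩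
  have hu : IsOpen u := by
    rw [isOpen_iff_mem_nhds]
    rintro y ⟨θ, h1, ρ, h2, h3, h4⟩
    filter_upwards [(Metric.isOpen_ball.preimage θ.continuous).mem_nhds h4] with z hz
    exact ⟨θ, h1, ρ, h2, h3, hz⟩
  refine hc.subset_of_closure_inter_subset hu ⟨y0, h0, hy0⟩ ?_ h1
  rintro z ⟨hzc, hzU⟩
  by_cases hz : z = y0
  · rw [hz]; exact hy0
  obtain ⟨r, hr, hr'⟩ := Metric.isOpen_iff.1 hU z hzU
  have hd : 0 < dist y0 z := dist_pos.2 (Ne.symm hz)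
  obtain ⟨z', ⟨θ, h1, ρ, h2, h3, h4⟩, hz'⟩ :=
    Metric.mem_closure_iff.1 hzc (min r (dist y0 z)) (lt_min hr hd)
  have hw : ‖z' - z‖ < min r (dist y0 z) := by rw [← dist_eq_norm, dist_comm]; exact hz'
  obtain ⟨φ, hφ⟩ := exists_bump z (z' - z) _ hw
  have e0 : φ y0 = y0 := by
    rw [hφ, bump_out (lt_min hr hd)]
    simp
  have e1 : φ z = z' := by rw [hφ, bump_center]; ring
  refine ⟨φ.trans θ, fun x => ?_, ρ, h2, ?_, ?_⟩
  · change θ (φ x) ∈ U ↔ _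
    rw [h1, hφ]
    exact bump_mem hw ((Metric.ball_subset_ball (min_le_left _ _)).trans hr')
  · change Metric.closedBall (θ (φ y0)) ρ ⊆ U
    rwa [e0]
  · change θ (φ z) ∈ Metric.ball (θ (φ y0)) ρ
    rwa [e0, e1]

lemma Fill_mono' {A B : Set ℂ} (h : A ⊆ B) : Fill A ⊆ Fill B := by
  rintro z (hz | ⟨hz, hb⟩)
  · exact Or.inl (h hz)
  · by_cases hzB : z ∈ B
    · exact Or.inl hzB
    · exact Or.inr ⟨hzB, hb.subset (connectedComponentIn_mono _ (compl_subset_compl.2 h))⟩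

lemma ext_preconnected {B : ℝ} (hB : 0 < B) : IsPreconnected {z : ℂ | B < ‖z‖} := by
  have : {z : ℂ | B < ‖z‖} = Complex.exp '' {z : ℂ | Real.log B < z.re} := by
    ext z
    constructor
    · intro hz
      have hz : B < ‖z‖ := hz
      have h0 : z ≠ 0 := by rintro rfl; simp at hz; linarith
      refine ⟨Complex.log z, ?_, Complex.exp_log h0⟩
      change Real.log B < (Complex.log z).re
      rw [Complex.log_re]; exact Real.log_lt_log hB hz
    · rintro ⟨x, hx, rfl⟩
      change B < ‖Complex.exp x‖
      rw [Complex.norm_exp]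
      exact (Real.log_lt_iff_lt_exp hB).1 hx
  rw [this]
  exact (convex_halfSpace_re_gt _).isPreconnected.image _ Complex.continuous_exp.continuousOn

lemma logSet_Fill {A : Set ℂ} (hA : IsCompact A) : LogSet (Fill A) := by
  obtain ⟨B, hB, hAB⟩ := hA.isBounded.exists_pos_norm_le
  let E : Set ℂ := {z | B < ‖z‖}
  have hEA : E ⊆ Aᶜ := fun z (hz : B < ‖z‖) hzA => absurd (hAB z hzA) (not_le.2 hz)
  have hEc : IsPreconnected E := ext_preconnected hB
  let e : ℂ := ((B + 1 : ℝ) : ℂ)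
  have he : e ∈ E := by
    change B < ‖e‖
    simp only [e, Complex.norm_real, Real.norm_eq_abs]
    rw [abs_of_pos (by linarith)]; linarith
  have heA := hEA he
  have hsub : E ⊆ connectedComponentIn Aᶜ e := hEc.subset_connectedComponentIn he hEA
  have hunb : ∀ S : Set ℂ, E ⊆ S → ¬ Bornology.IsBounded S := by
    intro S hS hb
    obtain ⟨C, hC⟩ := hb.exists_norm_le
    let z : ℂ := ((max B C + 1 : ℝ) : ℂ)
    have h0 : 0 < max B C + 1 := by have := le_max_left B C; linarith
    have hz : ‖z‖ = max B C + 1 := by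
      simp only [z, Complex.norm_real, Real.norm_eq_abs]
      rw [abs_of_pos h0]
    have := hC z (hS (by change B < ‖z‖; rw [hz]; have := le_max_left B C; linarith))
    rw [hz] at this
    have := le_max_right B C; linarith
  have key : (Fill A)ᶜ = connectedComponentIn Aᶜ e := by
    ext z
    constructor
    · intro hz
      have hzA : z ∈ Aᶜ := fun h => hz (Or.inl h)
      have hnb : ¬ Bornology.IsBounded (connectedComponentIn Aᶜ z) := fun h => hz (Or.inr ⟨hzA, h⟩)
      have : ∃ x ∈ connectedComponentIn Aᶜ z, B < ‖x‖ := by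
        by_contra! hcon
        exact hnb (isBounded_iff_forall_norm_le.2 ⟨B, hcon⟩)
      obtain ⟨x, hx, hxB⟩ := this
      have h1 := connectedComponentIn_eq (hsub hxB)
      have h2 := connectedComponentIn_eq hx
      rw [h1, ← h2]
      exact mem_connectedComponentIn hzA
    · rintro hz (h | ⟨h, hb⟩)
      · exact connectedComponentIn_subset _ _ hz h
      · rw [← connectedComponentIn_eq hz] at hb
        exact hunb _ hsub hb
  have hcl : IsClosed (Fill A) := by
    rw [← isOpen_compl_iff, key]
    exact hA.isClosed.isOpen_compl.connectedComponentIn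
  have hbd : Bornology.IsBounded (Fill A) := by
    refine isBounded_iff_forall_norm_le.2 ⟨B, fun z hz => ?_⟩
    by_contra! hcon
    have : z ∈ (Fill A)ᶜ := by rw [key]; exact hsub hcon
    exact this hz
  exact logSet_of_compl (Metric.isCompact_of_isClosed_isBounded hcl hbd)
    (by rw [key]; exact isPreconnected_connectedComponentIn)

lemma exists_min_pair (g : ℂ ≃ₜ ℂ) (y : ℂ) (hne : g y ≠ y) :
    ∃ (b : ℂ) (R : ℝ), 0 < R ∧ R ≤ ‖g y - y‖ ∧ ‖b - y‖ = R ∧ ‖g b - y‖ = R ∧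
      ∀ z, ‖z - y‖ < R → ‖g z - y‖ < R → False := by
  have hgc := g.continuous
  have hm : Continuous fun z => max ‖z - y‖ ‖g z - y‖ := by fun_prop
  obtain ⟨b, hb, hmin⟩ := (isCompact_closedBall y ‖g y - y‖).exists_isMinOn
    ⟨y, Metric.mem_closedBall_self (norm_nonneg _)⟩ hm.continuousOn
  have hRr : max ‖b - y‖ ‖g b - y‖ ≤ ‖g y - y‖ := by
    have : max ‖b - y‖ ‖g b - y‖ ≤ max ‖y - y‖ ‖g y - y‖ :=
      hmin (Metric.mem_closedBall_self (norm_nonneg (g y - y)))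
    rwa [sub_self, norm_zero, max_eq_right (norm_nonneg _)] at this
  have hglob : ∀ z, max ‖b - y‖ ‖g b - y‖ ≤ max ‖z - y‖ ‖g z - y‖ := by
    intro z
    by_cases hz : z ∈ Metric.closedBall y ‖g y - y‖
    · exact hmin hz
    · rw [mem_closedBall_iff_norm, not_le] at hz
      exact (hRr.trans hz.le).trans (le_max_left _ _)
  obtain ⟨R, hR⟩ : ∃ R, R = max ‖b - y‖ ‖g b - y‖ := ⟨_, rfl⟩
  rw [← hR] at hRr hglob
  have hno : ∀ z, ‖z - y‖ < R → ‖g z - y‖ < R → False := fun z h1 h2 =>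
    absurd (max_lt h1 h2) (not_lt.2 (hglob z))
  have hbR : ‖b - y‖ ≤ R := hR ▸ le_max_left _ _
  have hcR : ‖g b - y‖ ≤ R := hR ▸ le_max_right _ _
  have hR0 : 0 < R := by
    by_contra hcon
    have h1 : b = y := by
      have := norm_nonneg (b - y)
      exact sub_eq_zero.1 (norm_eq_zero.1 (by linarith))
    have h2 : g b = y := by
      have := norm_nonneg (g b - y)
      exact sub_eq_zero.1 (norm_eq_zero.1 (by linarith))
    rw [h1] at h2; exact hne h2
  refine ⟨b, R, hR0, hRr, ?_, ?_, hno⟩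
  · by_contra hcon
    have hlt : ‖b - y‖ < R := lt_of_le_of_ne hbR hcon
    have hcl : g b ∈ closure (Metric.ball y R) := by
      rw [closure_ball _ hR0.ne']; exact mem_closedBall_iff_norm.2 hcR
    have hnh : g.symm ⁻¹' (Metric.ball y R) ∈ 𝓝 (g b) := by
      refine (Metric.isOpen_ball.preimage g.symm.continuous).mem_nhds ?_
      change g.symm (g b) ∈ Metric.ball y R
      rw [g.symm_apply_apply]; exact mem_ball_iff_norm.2 hlt
    obtain ⟨w, hw1, hw2⟩ := mem_closure_iff_nhds.1 hcl _ hnh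
    exact hno (g.symm w) (mem_ball_iff_norm.1 hw1)
      (by rw [g.apply_symm_apply]; exact mem_ball_iff_norm.1 hw2)
  · by_contra hcon
    have hlt : ‖g b - y‖ < R := lt_of_le_of_ne hcR hcon
    have hcl : b ∈ closure (Metric.ball y R) := by
      rw [closure_ball _ hR0.ne']; exact mem_closedBall_iff_norm.2 hbR
    have hnh : g ⁻¹' (Metric.ball y R) ∈ 𝓝 b :=
      (Metric.isOpen_ball.preimage g.continuous).mem_nhds (mem_ball_iff_norm.2 hlt)
    obtain ⟨w, hw1, hw2⟩ := mem_closure_iff_nhds.1 hcl _ hnh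
    exact hno w (mem_ball_iff_norm.1 hw2) (mem_ball_iff_norm.1 hw1)

/-- A translation arc. -/
lemma exists_alpha (g : ℂ ≃ₜ ℂ) (y : ℂ) (ρ : ℝ) (hρ : ‖g y - y‖ < ρ)
    (hfix : ∀ z ∈ Metric.closedBall y ρ, g z ≠ z) :
    ∃ α : ℝ → ℂ, Continuous α ∧ α (1 / 2) = y ∧ g (α 0) = α 1 ∧
      (∀ s ∈ Icc (0 : ℝ) 1, α s ∈ Metric.closedBall y ρ) ∧
      (∀ s ∈ Icc (0 : ℝ) 1, ∀ u ∈ Icc (0 : ℝ) 1, s < u → α s ≠ α u) ∧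
      (∀ s ∈ Ioo (0 : ℝ) 1, ∀ u ∈ Ioo (0 : ℝ) 1, g (α s) ≠ α u) := by
  have hρ0 : 0 < ρ := (norm_nonneg _).trans_lt hρ
  obtain ⟨b, R, hR0, hRr, hb, hc, hno⟩ :=
    exists_min_pair g y (hfix y (Metric.mem_closedBall_self hρ0.le))
  have hbc : g b ≠ b := hfix b (mem_closedBall_iff_norm.2 (by linarith))
  let α : ℝ → ℂ := fun s => y + ((max 0 (1 - 2 * s) : ℝ) : ℂ) * (b - y) +
    ((max 0 (2 * s - 1) : ℝ) : ℂ) * (g b - y)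
  have hl : ∀ s, s ≤ 1 / 2 → α s - y = ((1 - 2 * s : ℝ) : ℂ) * (b - y) := by
    intro s hs
    simp only [α]
    rw [max_eq_right (by linarith), max_eq_left (by linarith)]
    push_cast; ring
  have hr : ∀ s, 1 / 2 ≤ s → α s - y = ((2 * s - 1 : ℝ) : ℂ) * (g b - y) := by
    intro s hs
    simp only [α]
    rw [max_eq_left (by linarith), max_eq_right (by linarith)]
    push_cast; ring
  have hnl : ∀ s, s ≤ 1 / 2 → ‖α s - y‖ = (1 - 2 * s) * R := by
    intro s hs
    rw [hl s hs, norm_mul, Complex.norm_real, Real.norm_eq_abs, abs_of_nonneg (by linarith), hb]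
  have hnr : ∀ s, 1 / 2 ≤ s → ‖α s - y‖ = (2 * s - 1) * R := by
    intro s hs
    rw [hr s hs, norm_mul, Complex.norm_real, Real.norm_eq_abs, abs_of_nonneg (by linarith), hc]
  have hin : ∀ s ∈ Ioo (0 : ℝ) 1, ‖α s - y‖ < R := by
    rintro s ⟨h1, h2⟩
    rcases le_total s (1 / 2) with h | h
    · rw [hnl s h]; nlinarith
    · rw [hnr s h]; nlinarith
  refine ⟨α, by fun_prop, ?_, ?_, ?_, ?_, ?_⟩
  · have := hl (1 / 2) le_rfl
    rw [← sub_eq_zero, this]; norm_num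
  · have h1 := hl 0 (by norm_num)
    have h2 := hr 1 (by norm_num)
    norm_num at h1 h2
    rw [h1, h2]
  · rintro s ⟨h1, h2⟩
    rw [mem_closedBall_iff_norm]
    rcases le_total s (1 / 2) with h | h
    · rw [hnl s h]; nlinarith
    · rw [hnr s h]; nlinarith
  · rintro s ⟨h1, h2⟩ u ⟨h3, h4⟩ hsu heq
    have hnorm : ‖α s - y‖ = ‖α u - y‖ := by rw [heq]
    rcases le_total s (1 / 2) with h | h <;> rcases le_total u (1 / 2) with h' | h'
    · rw [hnl s h, hnl u h'] at hnorm
      have := mul_right_cancel₀ hR0.ne' hnorm; linarith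
    · rw [hnl s h, hnr u h'] at hnorm
      have h5 := mul_right_cancel₀ hR0.ne' hnorm
      have h6 := hl s h
      rw [heq, hr u h', ← h5] at h6
      have h7 : ((1 - 2 * s : ℝ) : ℂ) ≠ 0 := by
        rw [Complex.ofReal_ne_zero]; intro h8; linarith
      have := mul_left_cancel₀ h7 h6
      exact hbc (sub_left_injective this)
    · linarith
    · rw [hnr s h, hnr u h'] at hnorm
      have := mul_right_cancel₀ hR0.ne' hnorm; linarith
  · intro s hs u hu heq
    exact hno (α s) (hin s hs) (by rw [heq]; exact hin u hu)

lemma exists_beta (g : ℂ ≃ₜ ℂ) (y : ℂ) (ρ : ℝ) (hρ : ‖g y - y‖ < ρ)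
    (hfix : ∀ z ∈ Metric.closedBall y ρ, g z ≠ z) :
    ∃ β : ℝ → ℂ, Continuous β ∧ (∀ u, g (β u) = β (u + 1)) ∧
      (∀ u v, 0 < v - u → v - u ≤ 1 → β u ≠ β v) ∧
      (∀ i : ℕ, β (1 / 2 + i) = g^[i] y) ∧
      (∀ u ∈ Icc (0 : ℝ) 1, β u ∈ Metric.closedBall y ρ) := by
  obtain ⟨α, hα, hhalf, h01, hball, hinj, hcross⟩ := exists_alpha g y ρ hρ hfix
  have hsucc : ∀ (n : ℤ) z, (g ^ (n + 1)) z = (g ^ n) (g z) := by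
    intro n z; rw [zpow_add_one]; rfl
  have hsucc' : ∀ (n : ℤ) z, (g ^ (n + 1)) z = g ((g ^ n) z) := by
    intro n z; rw [add_comm, zpow_one_add]; rfl
  let β : ℝ → ℂ := fun u => (g ^ ⌊u⌋) (α (Int.fract u))
  have hon : ∀ (n : ℤ) (u : ℝ), u ∈ Icc (n : ℝ) (n + 1) → β u = (g ^ n) (α (u - n)) := by
    rintro n u ⟨h1, h2⟩
    rcases h2.lt_or_eq with h | h
    · have hf : ⌊u⌋ = n := Int.floor_eq_iff.2 ⟨h1, h⟩
      simp only [β, Int.fract, hf]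
    · have hf : ⌊u⌋ = n + 1 := by
        rw [h]; exact_mod_cast Int.floor_intCast (n + 1)
      simp only [β, Int.fract, hf, hsucc]
      rw [h]; push_cast
      rw [sub_self, h01]; congr 2; ring
  have hβc : Continuous β := by
    have hlf : LocallyFinite fun n : ℤ => Icc (n : ℝ) (n + 1) := by
      intro x
      refine ⟨Ioo (x - 1) (x + 1), Ioo_mem_nhds (by linarith) (by linarith), ?_⟩
      refine (finite_Icc ⌊x - 2⌋ ⌈x + 1⌉).subset ?_
      rintro n ⟨z, ⟨h1, h2⟩, h3, h4⟩
      constructor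
      · have : ((⌊x - 2⌋ : ℤ) : ℝ) ≤ n := (Int.floor_le _).trans (by linarith)
        exact_mod_cast this
      · have : (n : ℝ) ≤ (⌈x + 1⌉ : ℤ) := le_trans (by linarith) (Int.le_ceil _)
        exact_mod_cast this
    refine hlf.continuous ?_ (fun _ => isClosed_Icc) ?_
    · ext u
      simp only [mem_iUnion, mem_univ, iff_true]
      exact ⟨⌊u⌋, Int.floor_le u, (Int.lt_floor_add_one u).le⟩
    · intro n
      have : Continuous fun u : ℝ => (g ^ n) (α (u - n)) :=
        (g ^ n).continuous.comp (hα.comp (by fun_prop))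
      exact this.continuousOn.congr (fun u hu => hon n u hu)
  have hstep : ∀ u, g (β u) = β (u + 1) := by
    intro u
    simp only [β, Int.floor_add_one, Int.fract_add_one, hsucc']
  refine ⟨β, hβc, hstep, ?_, ?_, ?_⟩
  · intro u v h1 h2 heq
    obtain ⟨n, hn⟩ : ∃ n, n = ⌊u⌋ := ⟨_, rfl⟩
    have hn1 : (n : ℝ) ≤ u := hn ▸ Int.floor_le u
    have hn2 : u < n + 1 := hn ▸ Int.lt_floor_add_one u
    rw [hon n u ⟨hn1, hn2.le⟩] at heq
    rcases le_or_gt v (n + 1) with hv | hv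
    · rw [hon n v ⟨by linarith, hv⟩] at heq
      exact hinj _ ⟨by linarith, by linarith⟩ _ ⟨by linarith, by linarith⟩ (by linarith)
        ((g ^ n).injective heq)
    · rw [hon (n + 1) v ⟨by push_cast; linarith, by push_cast; linarith⟩, hsucc] at heq
      have := (g ^ n).injective heq
      push_cast at this
      exact hcross _ ⟨by linarith, by linarith⟩ _ ⟨by linarith, by linarith⟩ this.symm
  · intro i
    induction i with
    | zero =>
      have := hon 0 (1 / 2) (by norm_num)
      simp only [Nat.cast_zero, add_zero, Function.iterate_zero, id]
      rw [this]; simp only [Int.cast_zero, sub_zero, hhalf]; rfl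
    | succ k ih =>
      rw [Function.iterate_succ_apply', ← ih, hstep]; push_cast; congr 1; ring
  · intro u hu
    have := hon 0 u (by simpa using hu)
    rw [this]; simpa using hball u hu

lemma floor_close {η a b : ℝ} (hη : 0 < η) (ha : 0 ≤ a) (hb : 0 ≤ b)
    (h : ⌊a / η⌋₊ = ⌊b / η⌋₊) : |a - b| < η := by
  have a1 := Nat.floor_le (div_nonneg ha hη.le)
  have a2 := Nat.lt_floor_add_one (a / η)
  have b1 := Nat.floor_le (div_nonneg hb hη.le)
  have b2 := Nat.lt_floor_add_one (b / η)
  rw [h] at a1 a2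
  have h1 : |a / η - b / η| < 1 := abs_lt.2 ⟨by linarith, by linarith⟩
  rwa [← sub_div, abs_div, abs_of_pos hη, div_lt_one hη] at h1

lemma level_zero (H : ℝ × ℂ → ℂ) (hH : Continuous H)
    (inj : ∀ t, Function.Injective fun z => H (t, z)) (h0 : ∀ z, H (0, z) = z)
    (g : ℂ ≃ₜ ℂ) (h1 : ∀ z, H (1, z) = g z) (y : ℂ) (ρ : ℝ) (hρ : ‖g y - y‖ < ρ)
    (N : ℕ) (hN : 1 ≤ N) (hper : g^[N] y = y) (U X : Set ℂ) (Upre : IsPreconnected U)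
    (hball : Metric.closedBall y ρ ⊆ U) (horb : ∀ i, g^[i] y ∈ U) (UX : U ⊆ X)
    (fUX : ∀ z ∈ U, g z ∈ X) (logX : LogSet X) (nofix : ∀ z ∈ X, g z ≠ z) : False := by
  obtain ⟨β, hβ, hstep, hfree, hit, hβb⟩ := exists_beta g y ρ hρ
    (fun z hz => nofix z (UX (hball hz)))
  have hS : IsCompact (β '' Icc (0 : ℝ) (N + 1)) := isCompact_Icc.image hβ
  have hop : IsOpen {z : ℂ | g z ≠ z} := isOpen_ne_fun g.continuous continuous_id
  have hsub : β '' Icc (0 : ℝ) (N + 1) ⊆ {z : ℂ | g z ≠ z} := by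
    rintro _ ⟨u, _, rfl⟩
    change g (β u) ≠ β u
    rw [hstep]
    exact (hfree u (u + 1) (by linarith) (by linarith)).symm
  obtain ⟨ε, hε, hε'⟩ := hS.exists_thickening_subset_open hop hsub
  obtain ⟨η, hη, hη'⟩ := Metric.uniformContinuousOn_iff.1
    ((isCompact_Icc (a := (0 : ℝ)) (b := N + 1)).uniformContinuousOn_of_continuous hβ.continuousOn)
    ε hε
  let c : ℝ → ℕ := fun u => ⌊u / η⌋₊
  have core : Core H β U X N c := by
    refine ⟨hH, inj, h0, hβ, fun u => by rw [h1, hstep], hfree, hN, ?_, Upre,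
      fun u hu => hball (hβb u hu), fun i => by rw [hit]; exact horb i, UX,
      fun z hz => by rw [h1]; exact fUX z hz, logX, fun z hz => by rw [h1]; exact nofix z hz, ?_, ?_⟩
    · rw [hit, hper]
      have := hit 0
      simpa using this.symm
    · refine ((finite_Iic ⌊((N : ℝ) + 1) / η⌋₊).prod (finite_Iic ⌊((N : ℝ) + 1) / η⌋₊)).subset ?_
      rintro _ ⟨p, ⟨p1, p2, p3, _⟩, rfl⟩
      refine ⟨Nat.floor_mono ?_, Nat.floor_mono ?_⟩
      · exact div_le_div_of_nonneg_right (by linarith) hη.le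
      · exact div_le_div_of_nonneg_right (by linarith) hη.le
    · rintro p ⟨p1, p2, p3, p4⟩ q ⟨q1, q2, q3, q4⟩ hc1 hc2
      have aux : ∀ a b : ℝ, a ∈ Icc (0 : ℝ) (N + 1) → b ∈ Icc (0 : ℝ) (N + 1) → c a = c b →
          ∀ u ∈ uIcc a b, β u ∈ Metric.ball (β a) ε := by
        intro a b ha hb hc u hu
        have hd := floor_close hη ha.1 hb.1 hc
        refine hη' u ((ordConnected_Icc.uIcc_subset ha hb) hu) a ha ?_
        rw [Real.dist_eq]
        have h2 := abs_sub_left_of_mem_uIcc hu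
        rw [abs_sub_comm] at hd
        exact h2.trans_lt hd
      refine ⟨Metric.ball (β p.1) ε, logSet_convex (convex_ball _ _), ?_, ?_, ?_⟩
      · intro z hz
        rw [h1]
        have hp : p.1 ∈ Icc (0 : ℝ) (N + 1) := ⟨p1, by linarith⟩
        exact hε' (Metric.ball_subset_thickening (mem_image_of_mem β hp) _ hz)
      · exact aux _ _ ⟨p1, by linarith⟩ ⟨q1, by linarith⟩ hc1
      · rw [p4]
        exact aux _ _ ⟨by linarith, by linarith⟩ ⟨by linarith, by linarith⟩ hc2
  exact Core.absurd _ core le_rfl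

lemma exists_continuum {U C : Set ℂ} (hU : IsOpen U) (hUc : IsConnected U) (hC : IsCompact C)
    (hCp : IsPreconnected C) (hCU : C ⊆ U) {y : ℂ} (hy : y ∈ C) (o : ℕ → ℂ) (ho : ∀ i, o i ∈ U)
    (n : ℕ) : ∃ V, IsCompact V ∧ IsPreconnected V ∧ C ⊆ V ∧ V ⊆ U ∧ ∀ i < n, o i ∈ V := by
  induction n with
  | zero => exact ⟨C, hC, hCp, Subset.rfl, hCU, by simp⟩
  | succ n ih =>
    obtain ⟨V, h1, h2, h3, h4, h5⟩ := ih
    have hp := (hU.isConnected_iff_isPathConnected).1 hUc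
    obtain ⟨γ, hγ⟩ := hp.joinedIn y (hCU hy) (o n) (ho n)
    refine ⟨V ∪ range γ, h1.union (isCompact_range γ.continuous), ?_, h3.trans subset_union_left,
      union_subset h4 ?_, ?_⟩
    · exact IsPreconnected.union y (h3 hy) ⟨0, γ.source⟩ h2 (isPreconnected_range γ.continuous)
    · rintro _ ⟨t, rfl⟩; exact hγ t
    · intro i hi
      rcases Nat.lt_succ_iff_lt_or_eq.1 hi with h | rfl
      · exact Or.inl (h5 i h)
      · exact Or.inr ⟨1, γ.target⟩

lemma exists_return (f : ℂ ≃ₜ ℂ) {K : Set ℂ} (hKne : K.Nonempty) (hKc : IsCompact K)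
    (hKinv : f '' K = K) {δ : ℝ} (hδ : 0 < δ) : ∃ N : ℕ, 1 ≤ N ∧ (∃ b ∈ K, dist (f^[N] b) b < δ) ∧
      ∀ k, 1 ≤ k → k < N → ∀ b ∈ K, δ ≤ dist (f^[k] b) b := by
  classical
  have hm : ∀ k, ∀ b ∈ K, f^[k] b ∈ K := by
    intro k b hb
    have : MapsTo f K K := fun z hz => hKinv ▸ mem_image_of_mem f hz
    exact this.iterate k hb
  have hex : ∃ N : ℕ, 1 ≤ N ∧ ∃ b ∈ K, dist (f^[N] b) b < δ := by
    obtain ⟨x, hx⟩ := hKne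
    obtain ⟨a, -, φ, hφ, hlim⟩ := hKc.tendsto_subseq (fun n => hm n x hx)
    obtain ⟨M, hM⟩ := Metric.cauchySeq_iff.1 hlim.cauchySeq δ hδ
    have h1 := hM (M + 1) (by omega) M le_rfl
    have h2 : φ M < φ (M + 1) := hφ (by omega)
    refine ⟨φ (M + 1) - φ M, by omega, f^[φ M] x, hm _ _ hx, ?_⟩
    rw [← Function.iterate_add_apply, Nat.sub_add_cancel h2.le]
    exact h1
  refine ⟨Nat.find hex, (Nat.find_spec hex).1, (Nat.find_spec hex).2, ?_⟩
  intro k hk1 hk2 b hb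
  by_contra hcon
  exact Nat.find_min hex hk2 ⟨hk1, b, hb, not_le.1 hcon⟩

lemma main_aux (f : ℂ ≃ₜ ℂ) (hor : OrientationPreserving f)
    (K : Set ℂ) (hKne : K.Nonempty) (hKc : IsCompact K) (hKinv : f '' K = K)
    (U : Set ℂ) (hUopen : IsOpen U) (hUconn : IsConnected U) (hKU : K ⊆ U)
    (hno : ∀ z ∈ Fill (U ∪ f '' U), f z ≠ z) : False := by
  obtain ⟨H, hH, hHh, hH0, hH1⟩ := hor
  -- the Lebesgue number
  have hδ : ∃ δ > 0, ∀ k ∈ K, Metric.ball k δ ⊆ U ∧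
      ∀ z ∈ Metric.ball k δ, f z ∉ Metric.ball k δ := by
    obtain ⟨δ, hδ, h⟩ := lebesgue_number_lemma_of_metric
      (c := fun V : {V : Set ℂ // IsOpen V ∧ V ⊆ U ∧ ∀ z ∈ V, f z ∉ V} => (V : Set ℂ)) hKc
      (fun V => V.2.1) (by
        intro k hk
        have hk' : f k ≠ k := hno k (Or.inl (Or.inl (hKU hk)))
        obtain ⟨u, v, hu, hv, hku, hkv, hd⟩ := t2_separation hk'.symm
        refine mem_iUnion.2 ⟨⟨U ∩ (u ∩ f ⁻¹' v), ?_, inter_subset_left, ?_⟩, hKU hk, hku, hkv⟩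
        · exact hUopen.inter (hu.inter (hv.preimage f.continuous))
        · rintro z ⟨_, _, hz⟩ ⟨_, hz', _⟩
          exact disjoint_left.1 hd hz' hz)
    refine ⟨δ, hδ, fun k hk => ?_⟩
    obtain ⟨V, hV⟩ := h k hk
    exact ⟨hV.trans V.2.2.1, fun z hz hz' => V.2.2.2 z (hV hz) (hV hz')⟩
  obtain ⟨δ, hδ, hKδ⟩ := hδ
  obtain ⟨N, hN, ⟨b, hb, hbN⟩, hmin⟩ := exists_return f hKne hKc hKinv hδ
  have hm : ∀ k, ∀ b ∈ K, f^[k] b ∈ K := by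
    intro k b hb
    have : MapsTo f K K := fun z hz => hKinv ▸ mem_image_of_mem f hz
    exact this.iterate k hb
  obtain ⟨a, ha⟩ : ∃ a, a = f^[N] b := ⟨_, rfl⟩
  have haK : a ∈ K := ha ▸ hm N b hb
  obtain ⟨haU, hafree⟩ := hKδ a haK
  obtain ⟨w, hw⟩ : ∃ w, w = b - a := ⟨_, rfl⟩
  have hwδ : ‖w‖ < δ := by rw [hw, ← dist_eq_norm, dist_comm, ha]; exact hbN
  obtain ⟨φ, hφ⟩ := exists_bump a w δ hwδ
  let f1 : ℂ ≃ₜ ℂ := f.trans φ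
  have hf1 : ∀ z, f1 z = bump a w δ (f z) := fun z => hφ (f z)
  have horb : ∀ k, k < N → f1^[k] b = f^[k] b := by
    intro k
    induction k with
    | zero => intro _; rfl
    | succ k ih =>
      intro hk
      rw [Function.iterate_succ_apply', ih (by omega), hf1, ← Function.iterate_succ_apply' f]
      apply bump_out hδ
      rw [Metric.mem_ball, not_lt, dist_comm]
      have := hmin (N - (k + 1)) (by omega) (by omega) (f^[k + 1] b) (hm _ _ hb)
      rwa [← Function.iterate_add_apply, Nat.sub_add_cancel hk.le, ← ha] at this
  have hper : f1^[N] b = b := by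
    obtain ⟨m, rfl⟩ : ∃ m, N = m + 1 := ⟨N - 1, by omega⟩
    rw [Function.iterate_succ_apply', horb m (by omega), hf1, ← Function.iterate_succ_apply' f,
      ← ha, bump_center, hw]
    ring
  have horbU : ∀ k, f1^[k] b ∈ U := by
    intro k
    have hP : Function.IsPeriodicPt f1 N b := hper
    rw [← hP.iterate_mod_apply, horb _ (Nat.mod_lt _ (by omega))]
    exact hKU (hm _ _ hb)
  have hfix1 : ∀ z, f1 z = z → f z = z := by
    intro z hz
    rw [hf1] at hz
    by_cases h : f z ∈ Metric.ball a δ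
    · have h2 := (bump_mem_ball (a := a) hwδ).2 h
      rw [hz] at h2
      exact absurd h (hafree z h2)
    · rwa [bump_out hδ h] at hz
  have hf1U : ∀ z ∈ U, f1 z ∈ U ∪ f '' U := by
    intro z hz
    rw [hf1]
    by_cases h : f z ∈ Metric.ball a δ
    · exact Or.inl (haU ((bump_mem_ball hwδ).2 h))
    · rw [bump_out hδ h]; exact Or.inr (mem_image_of_mem f hz)
  -- the isotopy of f1
  let τ : ℝ → ℝ := fun t => max 0 (min 1 t)
  have hτ0 : ∀ t, 0 ≤ τ t := fun t => le_max_left _ _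
  have hτ1 : ∀ t, τ t ≤ 1 := fun t => max_le zero_le_one (min_le_left _ _)
  let H1 : ℝ × ℂ → ℂ := fun p => bump a ((τ p.1 : ℂ) * w) δ (H p)
  have hH1c : Continuous H1 := by
    simp only [H1, bump, τ]
    fun_prop
  have hH1i : ∀ t, Function.Injective fun z => H1 (t, z) := by
    intro t
    have hs : ‖(τ t : ℂ) * w‖ < δ := by
      rw [norm_mul, Complex.norm_real, Real.norm_eq_abs, abs_of_nonneg (hτ0 t)]
      exact (mul_le_of_le_one_left (norm_nonneg _) (hτ1 t)).trans_lt hwδ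
    obtain ⟨ψ, hψ⟩ := exists_bump a _ δ hs
    intro z z' hzz
    have h2 : ψ (H (t, z)) = ψ (H (t, z')) := by rw [hψ, hψ]; exact hzz
    exact (hHh t).injective (ψ.injective h2)
  have hH10 : ∀ z, H1 (0, z) = z := by
    intro z; simp [H1, bump, τ, hH0]
  have hH11 : ∀ z, H1 (1, z) = f1 z := by
    intro z; rw [hf1, ← hH1]; simp [H1, τ]
  -- the conjugation
  obtain ⟨θ, hθU, ρ, hρ, hρU, hθ1⟩ := exists_theta hUopen hUconn.isPreconnected
    (horbU 0) (horbU 1)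
  have hθ1 : θ (f1 b) ∈ Metric.ball (θ b) ρ := hθ1
  have hρU : Metric.closedBall (θ b) ρ ⊆ U := hρU
  let C : Set ℂ := θ.symm '' Metric.closedBall (θ b) ρ
  have hCU : C ⊆ U := by
    rintro _ ⟨z, hz, rfl⟩
    rw [← hθU, θ.apply_symm_apply]; exact hρU hz
  have hbC : b ∈ C := ⟨θ b, Metric.mem_closedBall_self hρ.le, θ.symm_apply_apply b⟩
  obtain ⟨U1, hU1c, hU1p, hCU1, hU1U, hU1o⟩ := exists_continuum hUopen hUconn
    ((isCompact_closedBall _ _).image θ.symm.continuous)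
    ((convex_closedBall _ _).isPreconnected.image _ θ.symm.continuous.continuousOn) hCU hbC
    (fun k => f1^[k] b) horbU N
  have hsub : U1 ∪ f1 '' U1 ⊆ U ∪ f '' U := by
    refine union_subset (hU1U.trans subset_union_left) ?_
    rintro _ ⟨z, hz, rfl⟩
    exact hf1U z (hU1U hz)
  have hXlog : LogSet (Fill (U1 ∪ f1 '' U1)) :=
    logSet_Fill (hU1c.union (hU1c.image f1.continuous))
  let g : ℂ ≃ₜ ℂ := θ.symm.trans (f1.trans θ)
  have hg : ∀ z, g (θ z) = θ (f1 z) := by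
    intro z
    change θ (f1 (θ.symm (θ z))) = _
    rw [θ.symm_apply_apply]
  have hgi : ∀ k, g^[k] (θ b) = θ (f1^[k] b) := by
    intro k
    induction k with
    | zero => rfl
    | succ k ih => rw [Function.iterate_succ_apply', ih, hg, ← Function.iterate_succ_apply' f1]
  refine level_zero (fun p => θ (H1 (p.1, θ.symm p.2))) ?_ ?_ ?_ g ?_ (θ b) ρ ?_ N hN ?_
    (θ '' U1) (θ '' Fill (U1 ∪ f1 '' U1)) ?_ ?_ ?_ ?_ ?_ (hXlog.image θ) ?_
  · exact θ.continuous.comp (hH1c.comp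
      (continuous_fst.prodMk (θ.symm.continuous.comp continuous_snd)))
  · intro t z z' h
    exact θ.symm.injective (hH1i t (θ.injective h))
  · intro z
    simp only [hH10, θ.apply_symm_apply]
  · intro z
    simp only [hH11]; rfl
  · rw [hg]; exact mem_ball_iff_norm.1 hθ1
  · rw [hgi, hper]
  · exact hU1p.image _ θ.continuous.continuousOn
  · intro z hz
    exact ⟨θ.symm z, hCU1 ⟨z, hz, rfl⟩, θ.apply_symm_apply z⟩
  · intro k
    rw [hgi]
    refine mem_image_of_mem θ ?_
    have hP : Function.IsPeriodicPt f1 N b := hper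
    rw [← hP.iterate_mod_apply]
    exact hU1o _ (Nat.mod_lt _ (by omega))
  · exact image_mono (subset_union_left.trans subset_union_left)
  · rintro _ ⟨z, hz, rfl⟩
    rw [hg]
    exact mem_image_of_mem θ (Or.inl (Or.inr (mem_image_of_mem f1 hz)))
  · rintro _ ⟨z, hz, rfl⟩ h
    rw [hg] at h
    exact hno z (Fill_mono' hsub hz) (hfix1 z (θ.injective h))

end FixedPointProof

/-- An orientation-preserving homeomorphism of the plane with a nonempty
compact invariant set `K` and a connected open neighbourhood `U` of `K`
has a fixed point in `Fill (U ∪ f U)`. -/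
theorem fixed_point_in_fill (f : ℂ ≃ₜ ℂ) (hor : OrientationPreserving f)
    (K : Set ℂ) (hKne : K.Nonempty) (hKc : IsCompact K) (hKinv : f '' K = K)
    (U : Set ℂ) (hUopen : IsOpen U) (hUconn : IsConnected U) (hKU : K ⊆ U) :
    ∃ z ∈ Fill (U ∪ f '' U), f z = z := by
  by_contra hcon
  exact FixedPointProof.main_aux f hor K hKne hKc hKinv U hUopen hUconn hKU
    (fun z hz h => hcon ⟨z, hz, h⟩)
end
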